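/- The equation Y² = 3³·5·X⁵ − 2⁴·5 (that is, Y² = 135X⁵ − 80) has no rational solutions (X, Y) ∈ ℚ × ℚ. -/

import Mathlib

lemma dh_round (n x : ℤ) (hn : 0 < n) : ∃ q : ℤ, 4 * (x - q * n)^2 ≤ n^2 := by
  refine ⟨(2*x+n) / (2*n), ?_⟩
  have h1 := Int.emod_add_mul_ediv (2*x+n) (2*n)
  have h2 := Int.emod_nonneg (2*x+n) (show 2*n ≠ 0 by omega)
  have h3 := Int.emod_lt_of_pos (2*x+n) (show 0 < 2*n by omega)
  set q := (2*x+n) / (2*n)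
  set r := (2*x+n) % (2*n)
  have h4 : 2 * (x - q*n) = r - n := by linarith
  have : 4 * (x - q * n)^2 = (r-n)^2 := by rw [← h4]; ring
  rw [this]
  nlinarith

lemma dh_int (n x y : ℤ) (hn : 0 < n) : ∃ k q1 q2 : ℤ, (k = 1 ∨ k = 2) ∧
    (k*x - q1*n)^2 + 5*(k*y - q2*n)^2 < n^2 := by
  obtain ⟨a, ha⟩ := dh_round n x hn
  obtain ⟨b, hb⟩ := dh_round n y hn
  by_cases h : 20 * (y - b*n)^2 < 3*n^2
  · refine ⟨1, a, b, Or.inl rfl, ?_⟩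
    rw [one_mul, one_mul]; linarith
  · obtain ⟨c, hc⟩ := dh_round n (2*x) hn
    push Not at h
    set r := y - b*n with hr
    rcases le_total 0 r with h0 | h0
    · refine ⟨2, c, 2*b+1, Or.inr rfl, ?_⟩
      have : 2*y - (2*b+1)*n = 2*r - n := by rw [hr]; ring
      rw [this]
      have h5 : 2*r ≤ n := by nlinarith
      have h6 : 8*r ≥ 3*n := by nlinarith
      nlinarith
    · refine ⟨2, c, 2*b-1, Or.inr rfl, ?_⟩
      have : 2*y - (2*b-1)*n = 2*r + n := by rw [hr]; ring
      rw [this]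
      have h5 : -2*r ≤ n := by nlinarith
      have h6 : -8*r ≥ 3*n := by nlinarith
      nlinarith

lemma dh_nonsq (d : ℤ) (hd : d = 5 ∨ d = -5) : ∀ n : ℤ, d ≠ n * n := by
  intro n h
  have h1 : n ≤ 2 := by rcases hd with rfl | rfl <;> nlinarith
  have h2 : -2 ≤ n := by rcases hd with rfl | rfl <;> nlinarith
  interval_cases n <;> omega

lemma dh_step (d : ℤ) (hd : d = 5 ∨ d = -5) (α β : ℤ√d) (hα : α ≠ 0) :
    ∃ (k : ℤ) (q : ℤ√d), (k = 1 ∨ k = 2) ∧ |((k : ℤ√d) * β - q * α).norm| < |α.norm| := by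
  have hn : α.norm ≠ 0 := fun h => hα ((Zsqrtd.norm_eq_zero (dh_nonsq d hd) α).1 h)
  have hn' : 0 < |α.norm| := abs_pos.2 hn
  obtain ⟨k, q1, q2, hk, h⟩ := dh_int |α.norm| (β * star α).re (β * star α).im hn'
  obtain ⟨σ, hσ1, hσ2⟩ : ∃ σ : ℤ, |α.norm| = σ * α.norm ∧ σ^2 = 1 := by
    rcases abs_choice α.norm with h | h
    · exact ⟨1, by rw [h]; ring, by norm_num⟩
    · exact ⟨-1, by rw [h]; ring, by norm_num⟩
  refine ⟨k, ⟨q1*σ, q2*σ⟩, hk, ?_⟩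
  have e1 : ((k : ℤ√d) * β - (⟨q1*σ, q2*σ⟩ : ℤ√d) * α) * star α
      = ⟨k*(β * star α).re - q1*|α.norm|, k*(β * star α).im - q2*|α.norm|⟩ := by
    rw [sub_mul, mul_assoc, mul_assoc, ← Zsqrtd.norm_eq_mul_conj, hσ1]
    apply Zsqrtd.ext <;> simp <;> ring
  have e2 := congrArg Zsqrtd.norm e1
  rw [Zsqrtd.norm_mul, Zsqrtd.norm_conj] at e2
  set N := ((k : ℤ√d) * β - (⟨q1*σ, q2*σ⟩ : ℤ√d) * α).norm
  set r1 := k*(β * star α).re - q1*|α.norm|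
  set r2 := k*(β * star α).im - q2*|α.norm|
  rw [show (⟨r1, r2⟩ : ℤ√d).norm = r1*r1 - d*r2*r2 from rfl] at e2
  have e3 : |N| * |α.norm| < |α.norm| * |α.norm| := by
    rw [← abs_mul, e2, ← sq, abs_lt]
    rcases hd with rfl | rfl <;> constructor <;> nlinarith [sq_nonneg r1, sq_nonneg r2]
  exact lt_of_mul_lt_mul_right e3 hn'.le

lemma dh_gcd (d : ℤ) (hd : d = 5 ∨ d = -5) (g p : ℤ√d) (hg : g ≠ 0) :
    ∃ α X Y c1 c2 : ℤ√d, α ≠ 0 ∧ α = g * X + p * Y ∧ 2 * g = α * c1 ∧ 2 * p = α * c2 := by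
  let P : ℕ → Prop := fun n => ∃ α X Y : ℤ√d, α ≠ 0 ∧ α = g * X + p * Y ∧ α.norm.natAbs = n
  have hP : ∃ n, P n := ⟨_, g, 1, 0, hg, by ring, rfl⟩
  classical
  obtain ⟨α, X, Y, hα, hXY, hn⟩ := Nat.find_spec hP
  have key : ∀ β X' Y' : ℤ√d, β = g * X' + p * Y' → ∃ c, 2 * β = α * c := by
    intro β X' Y' hβ
    obtain ⟨k, q, hk, h⟩ := dh_step d hd α β hα
    have h0 : (k : ℤ√d) * β - q * α = 0 := by
      by_contra h0
      have := Nat.find_min hP (m := ((k : ℤ√d) * β - q * α).norm.natAbs) (by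
        rw [← hn]; rw [Int.abs_eq_natAbs, Int.abs_eq_natAbs] at h; exact_mod_cast h)
      exact this ⟨_, k * X' - q * X, k * Y' - q * Y, h0, by rw [hβ, hXY]; ring, rfl⟩
    have h1 : (k : ℤ√d) * β = q * α := sub_eq_zero.1 h0
    rcases hk with rfl | rfl
    · refine ⟨2 * q, ?_⟩
      push_cast at h1
      linear_combination 2 * h1
    · refine ⟨q, ?_⟩
      push_cast at h1
      linear_combination h1
  obtain ⟨c1, h1⟩ := key g 1 0 (by ring)
  obtain ⟨c2, h2⟩ := key p 0 1 (by ring)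
  exact ⟨α, X, Y, c1, c2, hα, hXY, h1, h2⟩

lemma q_core (d : ℤ) (hd : d = 5 ∨ d = -5) (γ : ℤ√d) (p : ℤ) (hγ : γ ≠ 0)
    (hN : γ.norm = p^5) (hc : ∀ l : ℕ, l.Prime → l ≠ 2 → ¬ ((l:ℤ) ∣ γ.re ∧ (l:ℤ) ∣ 5 * γ.im ∧ (l:ℤ) ∣ p)) :
    ∃ (α δ μ : ℤ√d) (e : ℕ), α ≠ 0 ∧ α^5 = γ * δ ∧ δ * μ = 2^e := by
  have : IsDomain (ℤ√d) := by
    have : NoZeroDivisors (ℤ√d) := ⟨by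
      intro a b h
      have := congrArg Zsqrtd.norm h
      rw [Zsqrtd.norm_mul, Zsqrtd.norm_zero, mul_eq_zero] at this
      exact this.imp (Zsqrtd.norm_eq_zero (dh_nonsq d hd) _).1 (Zsqrtd.norm_eq_zero (dh_nonsq d hd) _).1⟩
    exact NoZeroDivisors.to_isDomain _
  have hst : γ * star γ = (p:ℤ√d)^5 := by
    rw [← Zsqrtd.norm_eq_mul_conj, hN]; push_cast; rfl
  -- coprimality
  obtain ⟨i, A, B, hAB⟩ : ∃ (i : ℕ) (A B : ℤ√d), A * γ + B * star γ = 2^i := by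
    have hG : ∃ j, Int.gcd (Int.gcd γ.re (5 * γ.im)) (p^5) = 2^j := by
      rcases Nat.eq_two_pow_or_exists_odd_prime_and_dvd (Int.gcd (Int.gcd γ.re (5 * γ.im)) (p^5)) with h | ⟨l, hl, hd1, hodd⟩
      · exact h
      · exfalso
        have hd1' : (l:ℤ) ∣ (Int.gcd (Int.gcd γ.re (5 * γ.im)) (p^5) : ℤ) := by exact_mod_cast hd1
        have h1 := hd1'.trans (Int.gcd_dvd_left _ _)
        have h2 := hd1'.trans (Int.gcd_dvd_right _ _)
        refine hc l hl (by rintro rfl; revert hodd; decide) ⟨h1.trans (Int.gcd_dvd_left _ _), h1.trans (Int.gcd_dvd_right _ _), ?_⟩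
        exact (Nat.prime_iff_prime_int.1 hl).dvd_of_dvd_pow h2
    obtain ⟨j, hj⟩ := hG
    have b1 := Int.gcd_eq_gcd_ab (Int.gcd γ.re (5 * γ.im)) (p^5)
    have b2 := Int.gcd_eq_gcd_ab γ.re (5 * γ.im)
    generalize Int.gcdA γ.re (5 * γ.im) = x1 at b2
    generalize Int.gcdB γ.re (5 * γ.im) = x2 at b2
    generalize Int.gcdA (Int.gcd γ.re (5 * γ.im)) (p^5) = x3 at b1
    generalize Int.gcdB (Int.gcd γ.re (5 * γ.im)) (p^5) = x4 at b1
    rw [hj, b2] at b1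
    have b3 := congrArg (Int.cast (R := ℤ√d)) b1
    push_cast at b3
    have c1 : (2:ℤ√d) * (γ.re : ℤ√d) = γ + star γ := by
      apply Zsqrtd.ext <;> simp ; ring
    obtain ⟨τ, c2⟩ : ∃ τ : ℤ√d, (2:ℤ√d) * (5 * (γ.im : ℤ√d)) = τ * (γ - star γ) := by
      rcases hd with rfl | rfl
      · exact ⟨⟨0,1⟩, by apply Zsqrtd.ext <;> simp ; ring⟩
      · exact ⟨⟨0,-1⟩, by apply Zsqrtd.ext <;> simp ; ring⟩
    refine ⟨j+1, x1*x3 + τ*x2*x3 + 2*star γ*x4, x1*x3 - τ*x2*x3, ?_⟩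
    rw [pow_succ]
    linear_combination (-2)*b3 + (-1) * c1 * x1 * x3 - c2*x2*x3 + 2*x4*hst
  obtain ⟨α, X, Y, c1, c2, hα, hXY, h1, h2⟩ := dh_gcd d hd γ p hγ
  have hδ : α^5 = γ * (γ^4*X^5 + 5*γ^3*X^4*p*Y+10*γ^2*X^3*p^2*Y^2+10*γ*X^2*p^3*Y^3+5*X*p^4*Y^4+star γ*Y^5) := by
    rw [hXY]; linear_combination (-Y^5)*hst
  refine ⟨α, _, A^4*c1^5 + (4*A^3*γ^3*B+6*A^2*γ^2*B^2*star γ+4*A*γ*B^3*star γ^2+B^4*star γ^3)*c2^5, 4*i+5, hα, hδ, ?_⟩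
  set δ := (γ^4*X^5 + 5*γ^3*X^4*p*Y+10*γ^2*X^3*p^2*Y^2+10*γ*X^2*p^3*Y^3+5*X*p^4*Y^4+star γ*Y^5)
  apply mul_left_cancel₀ hγ
  have e1 : 32 * γ^5 = α^5*c1^5 := by rw [← mul_pow, ← h1]; ring
  have e2 : 32 * (γ * star γ) = α^5*c2^5 := by rw [← mul_pow, ← h2, hst]; ring
  have e3 : (A * γ + B * star γ)^4 = 2^(4*i) := by rw [hAB, ← pow_mul, mul_comm]
  rw [pow_add, ← e3, ← mul_assoc, ← hδ]
  linear_combination (-A^4) * e1 - (4*A^3*γ^3*B+6*A^2*γ^2*B^2*star γ+4*A*γ*B^3*star γ^2+B^4*star γ^3)*e2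


lemma nm_pow2 (d : ℤ) (δ μ : ℤ√d) (e : ℕ) (h : δ * μ = 2^e) : ∃ f, δ.norm.natAbs = 2^f := by
  have h1 := congrArg (fun z => (Zsqrtd.norm z).natAbs) h
  simp only [Zsqrtd.norm_mul, Int.natAbs_mul] at h1
  have h2 : ((2:ℤ√d)^e).norm = 4^e := by
    have : (2:ℤ√d)^e = ((2^e : ℤ) : ℤ√d) := by push_cast; rfl
    rw [this, Zsqrtd.norm_intCast, ← mul_pow]; norm_num
  rw [h2, Int.natAbs_pow] at h1
  have h3 : δ.norm.natAbs ∣ 2^(2*e) := ⟨_, by rw [h1, pow_mul]; rfl⟩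
  obtain ⟨f, -, hf⟩ := (Nat.dvd_prime_pow Nat.prime_two).1 h3
  exact ⟨f, hf⟩

lemma halve (d : ℤ) (δ : ℤ√d) (h1 : δ.re % 2 = 0) (h2 : δ.im % 2 = 0) : ∃ δ' : ℤ√d, δ = 2 * δ' :=
  ⟨⟨δ.re/2, δ.im/2⟩, by apply Zsqrtd.ext <;> simp <;> omega⟩

lemma nm_two_mul (d : ℤ) (δ : ℤ√d) : (2*δ).norm = 4 * δ.norm := by
  simp [Zsqrtd.norm_def]; ring

lemma odd_sq8 (x : ℤ) (h : x % 2 = 1) : ∃ k, x^2 = 8*k+1 := by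
  obtain ⟨m, rfl⟩ : ∃ m, x = 2*m+1 := ⟨x/2, by omega⟩
  obtain ⟨k, hk⟩ := Int.even_mul_succ_self m
  exact ⟨k, by linear_combination 4*hk⟩

lemma q_two (f : ℕ) : ∀ δ : ℤ√(-5), δ.norm.natAbs = 2^f → ∃ j : ℕ, δ = 2^j ∨ δ = -2^j := by
  induction f using Nat.strong_induction_on with
  | _ f ih =>
  intro δ h
  have hnn : δ.norm = δ.re^2 + 5*δ.im^2 := by rw [Zsqrtd.norm_def]; ring
  have hn : δ.re^2 + 5*δ.im^2 = 2^f := by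
    rw [← hnn]
    have : (0:ℤ) ≤ δ.norm := by rw [hnn]; positivity
    have h3 : ((δ.norm.natAbs : ℕ) : ℤ) = ((2^f : ℕ) : ℤ) := by rw [h]
    push_cast at h3
    rwa [abs_of_nonneg this] at h3
  rcases f with _ | f
  · have h0 : δ.im = 0 := by
      by_contra hne
      have : 0 < δ.im^2 := by positivity
      nlinarith [sq_nonneg δ.re]
    rw [h0] at hn
    have : δ.re = 1 ∨ δ.re = -1 := by
      have h5 : (δ.re - 1) * (δ.re + 1) = 0 := by linear_combination hn
      rcases mul_eq_zero.1 h5 with h | h <;> omega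
    refine ⟨0, ?_⟩
    rcases this with h | h
    · left; apply Zsqrtd.ext <;> simp [h, h0]
    · right; apply Zsqrtd.ext <;> simp [h, h0]
  · have hev : (δ.re^2 + 5*δ.im^2) % 2 = 0 := by rw [hn, pow_succ]; omega
    by_cases ho : δ.re % 2 = 1
    · exfalso
      obtain ⟨k, hk⟩ := odd_sq8 _ ho
      have ho2 : δ.im % 2 = 1 := by
        by_contra h2
        have h3 : δ.im = 2*(δ.im/2) := by omega
        have h4 : δ.im^2 = 4*(δ.im/2)^2 := by rw [h3]; ring_nf; simp
        omega
      obtain ⟨l, hl⟩ := odd_sq8 _ ho2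
      have h6 : 6 ≤ δ.re^2 + 5*δ.im^2 := by
        have := sq_nonneg δ.re
        have := sq_nonneg δ.im
        omega
      rcases f with _ | _ | f
      · norm_num at hn; omega
      · norm_num at hn; omega
      · rw [pow_succ, pow_succ, pow_succ] at hn; omega
    · have ho2 : δ.im % 2 = 0 := by
        have h3 : δ.re = 2*(δ.re/2) := by omega
        have h4 : δ.re^2 = 4*(δ.re/2)^2 := by rw [h3]; ring_nf; simp
        by_contra h5
        obtain ⟨l, hl⟩ := odd_sq8 δ.im (by omega)
        omega
      obtain ⟨δ', rfl⟩ := halve _ δ (by omega) ho2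
      rw [nm_two_mul, Int.natAbs_mul] at h
      rcases f with _ | f
      · norm_num at h; omega
      · obtain ⟨j, hj⟩ := ih f (by omega) δ' (by rw [pow_succ, pow_succ] at h; norm_num at h; omega)
        refine ⟨j+1, ?_⟩
        rcases hj with rfl | rfl
        · left; ring
        · right; ring

lemma five_dvd_exp (a p : ℤ) (j : ℕ) (hp : p ≠ 0) (h : a^5 = 4^j * p^5) : 5 ∣ j := by
  have : Fact (Nat.Prime 2) := ⟨Nat.prime_two⟩
  have ha : a ≠ 0 := by rintro rfl; norm_num at h; omega
  have h0 := congrArg Int.natAbs h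
  rw [Int.natAbs_mul, Int.natAbs_pow, Int.natAbs_pow, Int.natAbs_pow] at h0
  have h1 := congrArg (padicValNat 2) h0
  have hp' : p.natAbs ≠ 0 := by omega
  have ha' : a.natAbs ≠ 0 := by omega
  have e4 : padicValNat 2 ((4:ℤ).natAbs^j) = 2*j := by
    have : (4:ℤ).natAbs^j = 2^(2*j) := by rw [pow_mul]; norm_num
    rw [this, padicValNat.prime_pow]
  rw [padicValNat.mul (by positivity) (by positivity), e4, padicValNat.pow, padicValNat.pow] at h1
  omega

lemma nm_pow_two (d : ℤ) (j : ℕ) : ((2:ℤ√d)^j).norm = 4^j := by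
  have : (2:ℤ√d)^j = ((2^j : ℤ) : ℤ√d) := by push_cast; rfl
  rw [this, Zsqrtd.norm_intCast, ← mul_pow]; norm_num

lemma nm_pow (d : ℤ) (z : ℤ√d) (n : ℕ) : (z^n).norm = z.norm^n :=
  map_pow (Zsqrtd.normMonoidHom (d := d)) z n

lemma dom5 (d : ℤ) (hd : d = 5 ∨ d = -5) : IsDomain (ℤ√d) := by
  have : NoZeroDivisors (ℤ√d) := ⟨by
      intro a b h
      have := congrArg Zsqrtd.norm h
      rw [Zsqrtd.norm_mul, Zsqrtd.norm_zero, mul_eq_zero] at this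
      exact this.imp (Zsqrtd.norm_eq_zero (dh_nonsq d hd) _).1 (Zsqrtd.norm_eq_zero (dh_nonsq d hd) _).1⟩
  exact NoZeroDivisors.to_isDomain _

lemma two_pow_fifth (d : ℤ) (hd : d = 5 ∨ d = -5) (γ : ℤ√d) (p : ℤ) (hp : p ≠ 0)
    (hN : γ.norm = p^5) (j : ℕ) : ∀ α : ℤ√d, α^5 = 2^j * γ → ∃ β, γ = β^5 := by
  have := dom5 d hd
  induction j using Nat.strong_induction_on with
  | _ j ih =>
  intro α h
  rcases Nat.eq_zero_or_pos j with rfl | hj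
  · exact ⟨α, by rw [h]; ring⟩
  have h1 := congrArg Zsqrtd.norm h
  rw [nm_pow, Zsqrtd.norm_mul, nm_pow_two, hN] at h1
  obtain ⟨k, rfl⟩ := five_dvd_exp _ _ _ hp h1
  obtain ⟨k, rfl⟩ : ∃ l, k = l + 1 := ⟨k-1, by omega⟩
  have hre : 32 ∣ (α^5).re := ⟨((2:ℤ√d)^(5*k) * γ).re, by
    rw [h, mul_add, pow_add, show (2:ℤ√d)^(5*1) = ((32:ℤ):ℤ√d) by norm_num, mul_comm _ ((32:ℤ):ℤ√d), mul_assoc, Zsqrtd.re_smul]⟩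
  have him : 32 ∣ (α^5).im := ⟨((2:ℤ√d)^(5*k) * γ).im, by
    rw [h, mul_add, pow_add, show (2:ℤ√d)^(5*1) = ((32:ℤ):ℤ√d) by norm_num, mul_comm _ ((32:ℤ):ℤ√d), mul_assoc, Zsqrtd.im_smul]⟩
  have ere : (α^5).re = α.re * (α.re^4 + 10*d*(α.re^2*α.im^2) + 5*d^2*α.im^4) := by
    simp [pow_succ]; ring
  have eim : (α^5).im = α.im * (5*α.re^4 + 10*d*(α.re^2*α.im^2) + d^2*α.im^4) := by
    simp [pow_succ]; ring
  obtain ⟨α', rfl⟩ : ∃ α' : ℤ√d, α = 2 * α' := by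
    have hpar : ∀ x : ℤ, x % 2 = 1 ∨ ∃ y, x = 2*y := fun x => by
      rcases Int.emod_two_eq_zero_or_one x with h | h
      · exact Or.inr ⟨x/2, by omega⟩
      · exact Or.inl h
    have hodd : ∀ x y : ℤ, x % 2 = 1 → 32 ∣ x*y → 32 ∣ y := fun x y hx hxy => by
      refine IsCoprime.dvd_of_dvd_mul_left ?_ hxy
      have : IsCoprime (2:ℤ) x := by
        refine ⟨-(x/2), 1, by omega⟩
      simpa using this.pow_left (m := 5)
    have hd2 : d^2 = 25 := by rcases hd with rfl | rfl <;> norm_num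
    rw [ere, hd2] at hre
    rw [eim, hd2] at him
    rcases hpar α.re with ha | ⟨a, ha⟩
    · exfalso
      have hre := hodd _ _ ha hre
      obtain ⟨x, hx⟩ := odd_sq8 _ ha
      rcases hpar α.im with hb | ⟨b, hb⟩
      · have him := hodd _ _ hb him
        obtain ⟨y, hy⟩ := odd_sq8 _ hb
        have ha4 : α.re^4 = (8*x+1)^2 := by rw [← hx]; ring
        have hb4 : α.im^4 = (8*y+1)^2 := by rw [← hy]; ring
        rw [hx, hy, ha4, hb4] at him hre
        ring_nf at him hre
        rcases hd with rfl | rfl <;> omega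
      · have ha4 : α.re^4 = (8*x+1)^2 := by rw [← hx]; ring
        rw [hb, ha4] at hre
        ring_nf at hre
        rcases hd with rfl | rfl <;> omega
    · rcases hpar α.im with hb | ⟨b, hb⟩
      · exfalso
        have him := hodd _ _ hb him
        obtain ⟨y, hy⟩ := odd_sq8 _ hb
        have hb4 : α.im^4 = (8*y+1)^2 := by rw [← hy]; ring
        rw [ha, hb4] at him
        ring_nf at him
        rcases hd with rfl | rfl <;> omega
      · exact halve d α (by omega) (by omega)
  refine ih (5*k) (by omega) α' ?_
  have h32 : (32 : ℤ√d) ≠ 0 := by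
    intro h
    have := congrArg Zsqrtd.re h
    norm_num at this
  apply mul_left_cancel₀ h32
  rw [mul_add, pow_add] at h
  linear_combination h

theorem lemQ (γ : ℤ√(-5)) (p : ℤ) (hp : p ≠ 0) (hN : γ.norm = p^5)
    (hc : ∀ l : ℕ, l.Prime → l ≠ 2 → ¬ ((l:ℤ) ∣ γ.re ∧ (l:ℤ) ∣ 5 * γ.im ∧ (l:ℤ) ∣ p)) :
    ∃ β, γ = β^5 := by
  have hγ : γ ≠ 0 := by
    rintro rfl
    rw [Zsqrtd.norm_zero] at hN
    exact hp (pow_eq_zero_iff (by norm_num) |>.1 hN.symm)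
  obtain ⟨α, δ, μ, e, hα, h1, h2⟩ := q_core (-5) (Or.inr rfl) γ p hγ hN hc
  obtain ⟨f, hf⟩ := nm_pow2 _ _ _ _ h2
  obtain ⟨j, hj⟩ := q_two f δ hf
  rcases hj with rfl | rfl
  · exact two_pow_fifth _ (Or.inr rfl) γ p hp hN j α (by rw [h1]; ring)
  · exact two_pow_fifth _ (Or.inr rfl) γ p hp hN j (-α) (by linear_combination -h1)


lemma q5_two (f : ℕ) : ∀ δ : ℤ√5, δ.norm.natAbs = 2^f → ∃ (j : ℕ) (ε : ℤ√5), δ^6 = 2^j * ε ∧ ε.norm = 1 := by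
  induction f using Nat.strong_induction_on with
  | _ f ih =>
  intro δ h
  have hnn : δ.norm = δ.re^2 - 5*δ.im^2 := by rw [Zsqrtd.norm_def]; ring
  rcases f with _ | f
  · refine ⟨0, δ^6, by ring, ?_⟩
    rw [nm_pow]
    have : δ.norm = 1 ∨ δ.norm = -1 := by omega
    rcases this with h | h <;> rw [h] <;> norm_num
  · have hev : (δ.re^2 - 5*δ.im^2) % 2 = 0 := by rw [← hnn]; rw [pow_succ] at h; omega
    by_cases ho : δ.re % 2 = 1
    · obtain ⟨k, hk⟩ := odd_sq8 _ ho
      have ho2 : δ.im % 2 = 1 := by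
        by_contra h2
        have h3 : δ.im = 2*(δ.im/2) := by omega
        have h4 : δ.im^2 = 4*(δ.im/2)^2 := by rw [h3]; ring_nf; simp
        omega
      obtain ⟨l, hl⟩ := odd_sq8 _ ho2
      have h4 : δ.norm.natAbs = 4 := by
        rcases f with _ | _ | f
        · norm_num at h; omega
        · exact h
        · rw [pow_succ, pow_succ, pow_succ] at h; omega
      have e3 : δ^3 = 8 * ⟨δ.re*(k+15*l+2), δ.im*(3*k+5*l+1)⟩ := by
        apply Zsqrtd.ext
        · simp [pow_succ]; linear_combination δ.re*hk + 15*δ.re*hl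
        · simp [pow_succ]; linear_combination 3*δ.im*hk + 5*δ.im*hl
      set ε : ℤ√5 := ⟨δ.re*(k+15*l+2), δ.im*(3*k+5*l+1)⟩
      refine ⟨6, ε^2, ?_, ?_⟩
      · rw [show δ^6 = (δ^3)^2 by ring, e3]; ring
      · have h5 := congrArg (fun z => (Zsqrtd.norm z).natAbs) e3
        have h8 : (8:ℤ√5).norm = 64 := by rfl
        simp only [nm_pow, Zsqrtd.norm_mul, h8, Int.natAbs_pow, Int.natAbs_mul, h4] at h5
        rw [nm_pow]
        have : ε.norm = 1 ∨ ε.norm = -1 := by norm_num at h5; omega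
        rcases this with h | h <;> rw [h] <;> norm_num
    · have ho2 : δ.im % 2 = 0 := by
        have h3 : δ.re = 2*(δ.re/2) := by omega
        have h4 : δ.re^2 = 4*(δ.re/2)^2 := by rw [h3]; ring_nf; simp
        by_contra h5
        obtain ⟨l, hl⟩ := odd_sq8 δ.im (by omega)
        omega
      obtain ⟨δ', rfl⟩ := halve _ δ (by omega) ho2
      rw [nm_two_mul, Int.natAbs_mul] at h
      rcases f with _ | f
      · norm_num at h; omega
      · obtain ⟨j, ε, hj, hε⟩ := ih f (by omega) δ' (by rw [pow_succ, pow_succ] at h; norm_num at h; omega)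
        exact ⟨j+6, ε, by rw [mul_pow, hj]; ring, hε⟩

lemma fund5 : Pell.IsFundamental (Pell.Solution₁.mk (d := 5) 9 4 (by norm_num)) := by
  refine ⟨by simp, by simp, ?_⟩
  intro b hb
  by_contra h
  simp at h
  have hp := b.prop
  have h1 := b.prop_y
  set x := b.x
  set y := b.y
  have h2 : y ≤ 4 := by nlinarith
  have h3 : -4 ≤ y := by nlinarith
  interval_cases x <;> interval_cases y <;> omega

lemma norm_one5 (ε : ℤ√5) (h : ε.norm = 1) (h5 : 5 ∣ ε.im) : ∃ κ κ' : ℤ√5, ε = κ^5 ∧ κ * κ' = 1 := by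
  let a : Pell.Solution₁ 5 := Pell.Solution₁.mk (d := 5) 9 4 (by norm_num)
  let b : Pell.Solution₁ 5 := Pell.Solution₁.mk (d := 5) ε.re ε.im (by rw [← h, Zsqrtd.norm_def]; ring)
  have hb : (b : ℤ√5) = ε := by apply Zsqrtd.ext <;> rfl
  obtain ⟨n, hn⟩ := fund5.eq_zpow_or_neg_zpow b
  change b = a^n ∨ b = -a^n at hn
  -- sign
  obtain ⟨σ, hσ, hn⟩ : ∃ σ : Pell.Solution₁ 5, (σ = 1 ∨ σ = -1) ∧ b = σ * a^n := by
    rcases hn with h | h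
    · exact ⟨1, Or.inl rfl, by rw [h, one_mul]⟩
    · exact ⟨-1, Or.inr rfl, by rw [h, neg_one_mul]⟩
  have hσ5 : σ^5 = σ := by rcases hσ with rfl | rfl <;> simp [pow_succ]
  obtain ⟨m, r, hmr, hr⟩ : ∃ (m : ℤ) (r : ℕ), n = 5*m + r ∧ r < 5 :=
    ⟨n/5, (n%5).toNat, by omega, by omega⟩
  set c := σ * a^m with hc
  have hbc : b = c^5 * a^r := by
    rw [hn, hmr, hc, mul_pow, hσ5, zpow_add, zpow_mul, zpow_natCast, mul_assoc, ← zpow_natCast (a^m) 5, ← zpow_mul, ← zpow_mul, mul_comm (5:ℤ)]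
    rfl
  have hbc' : ε = (c:ℤ√5)^5 * (a:ℤ√5)^r := by
    rw [← hb, hbc]; rfl
  have ha : (a : ℤ√5) = ⟨9,4⟩ := rfl
  set c' : ℤ√5 := (c : ℤ√5)
  have hcc : c' * star c' = 1 := by
    rw [← Zsqrtd.norm_eq_mul_conj]
    have := c.prop
    have h2 : c'.norm = 1 := by rw [Zsqrtd.norm_def]; have := c.prop; change c'.re^2 - 5*c'.im^2 = 1 at this; linarith
    rw [h2]; rfl
  have him : 5 ∣ (c'^5).im := ⟨c'.im * (c'.re^4 + 10*(c'.re^2*c'.im^2) + 5*c'.im^4), by simp [pow_succ]; ring⟩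
  have hnc : (c'^5).norm = 1 := by
    rw [nm_pow]
    have h2 : c'.norm = 1 := by rw [Zsqrtd.norm_def]; have := c.prop; change c'.re^2 - 5*c'.im^2 = 1 at this; linarith
    rw [h2]; norm_num
  have hre : ¬ 5 ∣ (c'^5).re := by
    intro hd
    rw [Zsqrtd.norm_def] at hnc
    obtain ⟨x, hx⟩ := hd
    rw [hx] at hnc
    have : (5:ℤ) ∣ 1 := ⟨x * (5*x) - (c'^5).im*(c'^5).im, by linarith⟩
    omega
  rcases Nat.eq_zero_or_pos r with rfl | hr0
  · exact ⟨c', star c', by rw [hbc', pow_zero, mul_one], hcc⟩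
  · exfalso
    rw [hbc', ha] at h5
    set z := c'^5
    obtain ⟨y, hy⟩ := him
    apply hre
    interval_cases r <;> simp [pow_succ] at h5 <;> omega

theorem lemQ5 (γ : ℤ√5) (p : ℤ) (hp : p ≠ 0) (hN : γ.norm = p^5)
    (h5 : 5 ∣ γ.im) (h5' : ¬ 5 ∣ γ.re)
    (hc : ∀ l : ℕ, l.Prime → l ≠ 2 → ¬ ((l:ℤ) ∣ γ.re ∧ (l:ℤ) ∣ 5 * γ.im ∧ (l:ℤ) ∣ p)) :
    ∃ β, γ = β^5 := by
  have hγ : γ ≠ 0 := by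
    rintro rfl
    rw [Zsqrtd.norm_zero] at hN
    exact hp (pow_eq_zero_iff (by norm_num) |>.1 hN.symm)
  obtain ⟨α, δ, μ, e, hα, h1, h2⟩ := q_core 5 (Or.inl rfl) γ p hγ hN hc
  obtain ⟨f, hf⟩ := nm_pow2 _ _ _ _ h2
  obtain ⟨j, ε, hj, hε⟩ := q5_two f δ hf
  have h3 : (α*δ)^5 = ((2^j : ℤ) : ℤ√5) * (γ * ε) := by
    push_cast
    linear_combination δ^5 * h1 + γ * hj
  have him : 5 ∣ ((α*δ)^5).im := by
    set c' := α*δ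
    exact ⟨c'.im * (c'.re^4 + 10*(c'.re^2*c'.im^2) + 5*c'.im^4), by simp [pow_succ]; ring⟩
  have hP : Prime (5:ℤ) := by norm_num
  have hε5 : 5 ∣ ε.im := by
    rw [h3, Zsqrtd.im_smul] at him
    rcases hP.dvd_or_dvd him with h | h
    · have := hP.dvd_of_dvd_pow h; omega
    · rw [Zsqrtd.im_mul] at h
      have : (5:ℤ) ∣ γ.re * ε.im := (dvd_add_left (h5.mul_right _)).1 h
      exact (hP.dvd_or_dvd this).resolve_left h5'
  obtain ⟨κ, κ', hκ, hκ'⟩ := norm_one5 ε hε hε5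
  refine two_pow_fifth 5 (Or.inl rfl) γ p hp hN j (α*δ*κ') ?_
  rw [mul_pow, h3, hκ]
  push_cast
  have : κ^5*κ'^5 = 1 := by rw [← mul_pow, hκ', one_pow]
  linear_combination 2^j*γ*this


lemma key_split (κ A B c : ℤ) (hκ : κ ≠ 0) (h : A * B = κ * c^5) (hAB : IsCoprime A B)
    (hB : IsCoprime B κ) : ∃ m t, A = κ * m^5 ∧ B = t^5 := by
  have h1 : κ ∣ A := hB.symm.dvd_of_dvd_mul_right ⟨_, h⟩
  obtain ⟨A', rfl⟩ := h1
  have h2 : A' * B = c^5 := by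
    apply mul_left_cancel₀ hκ; rw [← h]; ring
  have h3 : IsCoprime A' B := hAB.of_mul_left_right
  obtain ⟨m, hm⟩ := Int.eq_pow_of_mul_eq_pow_odd_left h3 (by decide) h2
  obtain ⟨t, ht⟩ := Int.eq_pow_of_mul_eq_pow_odd_right h3 (by decide) h2
  exact ⟨m, t, by rw [hm], ht⟩

lemma cop_odd (x : ℤ) (h : x % 2 = 1) : IsCoprime x 2 := ⟨1, -(x/2), by omega⟩

lemma cop_prime (x : ℤ) (l : ℕ) (hl : l.Prime) (h : ¬ (l:ℤ) ∣ x) : IsCoprime x l :=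
  ((Nat.prime_iff_prime_int.1 hl).coprime_iff_not_dvd.2 h).symm

lemma not_both (u v : ℤ) (h : IsCoprime u v) (l : ℕ) (hl : l.Prime) : ¬ ((l:ℤ) ∣ u ∧ (l:ℤ) ∣ v) := by
  rintro ⟨h1, h2⟩
  have := h.isUnit_of_dvd' h1 h2
  exact (Nat.prime_iff_prime_int.1 hl).not_isUnit this

lemma cop_of (u v : ℤ) (h : ∀ l : ℕ, l.Prime → ¬ ((l:ℤ) ∣ u ∧ (l:ℤ) ∣ v)) : IsCoprime u v := by
  rw [Int.isCoprime_iff_gcd_eq_one]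
  by_contra hne
  obtain ⟨l, hl, hd⟩ := Nat.exists_prime_and_dvd hne
  have hd' : (l:ℤ) ∣ (Int.gcd u v : ℤ) := by exact_mod_cast hd
  exact h l hl ⟨hd'.trans (Int.gcd_dvd_left ..), hd'.trans (Int.gcd_dvd_right ..)⟩

lemma mod3_cases (u v : ℤ) (h : IsCoprime u v) : ¬ (u % 3 = 0 ∧ v % 3 = 0) := by
  rintro ⟨h1, h2⟩
  exact not_both u v h 3 Nat.prime_three ⟨by exact_mod_cast Int.dvd_of_emod_eq_zero h1, by exact_mod_cast Int.dvd_of_emod_eq_zero h2⟩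

lemma Qcop (u v : ℤ) (h : IsCoprime u v) (hpar : (u + v) % 2 = 1) (h5 : ¬ 5 ∣ u) :
    IsCoprime v (u^4+10*u^2*v^2+5*v^4) ∧ IsCoprime (u^4+10*u^2*v^2+5*v^4) 2 ∧
    IsCoprime (u^4+10*u^2*v^2+5*v^4) 3 ∧ IsCoprime (u^4+10*u^2*v^2+5*v^4) 5 := by
  refine ⟨?_, ?_, ?_, ?_⟩
  · have : IsCoprime v (u^4) := h.symm.pow_right
    have h2 := this.add_mul_left_right (10*u^2*v+5*v^3)
    rw [show u^4+10*u^2*v^2+5*v^4 = u^4 + v*(10*u^2*v+5*v^3) by ring]; exact h2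
  · apply cop_odd
    rcases Int.emod_two_eq_zero_or_one u with h1 | h1 <;> rcases Int.emod_two_eq_zero_or_one v with h2 | h2
    · omega
    · simp [Int.add_emod, Int.mul_emod, pow_succ, h1, h2]
    · simp [Int.add_emod, Int.mul_emod, pow_succ, h1, h2]
    · omega
  · apply cop_prime _ 3 Nat.prime_three
    intro hd
    have hd := Int.emod_eq_zero_of_dvd hd
    have := mod3_cases u v h
    have hu : u % 3 = 0 ∨ u % 3 = 1 ∨ u % 3 = 2 := by omega
    have hv : v % 3 = 0 ∨ v % 3 = 1 ∨ v % 3 = 2 := by omega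
    rcases hu with h1 | h1 | h1 <;> rcases hv with h2 | h2 | h2 <;>
      simp [Int.add_emod, Int.mul_emod, pow_succ, h1, h2] at hd this
  · apply cop_prime _ 5 Nat.prime_five
    intro hd
    apply h5
    have hP : Prime (5:ℤ) := by norm_num
    have h1 : (5:ℤ) ∣ u^4 := by
      have : u^4 = (u^4+10*u^2*v^2+5*v^4) - 5*(2*u^2*v^2+v^4) := by ring
      rw [this]; exact dvd_sub hd (dvd_mul_right _ _)
    exact hP.dvd_of_dvd_pow h1

lemma start (u v R S m : ℤ) (i j k : ℕ) (hR : u*(u^4+50*u^2*v^2+125*v^4) = R)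
    (hS : 5*v*(u^4+10*u^2*v^2+5*v^4) = S) (hS0 : S ≠ 0) (hpar : (R + S) % 2 = 1)
    (hcop : IsCoprime R S) (hSm : S = 2^i*3^j*5^(k+2)*m^5) :
    ∃ m' t, v = 2^i*3^j*5^(k+1)*m'^5 ∧ u^4+10*u^2*v^2+5*v^4 = t^5 ∧ IsCoprime u v ∧ (u+v) % 2 = 1
      ∧ v ≠ 0 := by
  have h1 : IsCoprime u v := by
    refine (hcop.of_isCoprime_of_dvd_left ⟨_, hR.symm⟩).of_isCoprime_of_dvd_right ?_
    rw [← hS]; exact ⟨5*(u^4+10*u^2*v^2+5*v^4), by ring⟩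
  have h5S : (5:ℤ) ∣ S := by rw [hSm]; exact ⟨2^i*3^j*5^(k+1)*m^5, by ring⟩
  have h5 : ¬ (5:ℤ) ∣ u := fun h => not_both R S hcop 5 Nat.prime_five
    ⟨by rw [← hR]; exact_mod_cast h.mul_right _, by exact_mod_cast h5S⟩
  have hp : (u+v) % 2 = 1 := by
    rw [← hR, ← hS] at hpar
    rcases Int.emod_two_eq_zero_or_one u with h1 | h1 <;> rcases Int.emod_two_eq_zero_or_one v with h2 | h2
    · exfalso; simp [Int.add_emod, Int.mul_emod, pow_succ, h1, h2] at hpar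
    · omega
    · omega
    · exfalso; simp [Int.add_emod, Int.mul_emod, pow_succ, h1, h2] at hpar
  obtain ⟨c1, c2, c3, c5⟩ := Qcop u v h1 hp h5
  obtain ⟨m', t, e1, e2⟩ := key_split (2^i*3^j*5^(k+1)) v (u^4+10*u^2*v^2+5*v^4) m (by positivity) (by
    have : (5:ℤ) ≠ 0 := by norm_num
    apply mul_left_cancel₀ this
    rw [← mul_assoc, hS, hSm]; ring) c1 ((c2.pow_right.mul_right c3.pow_right).mul_right c5.pow_right)
  refine ⟨m', t, e1, e2, h1, hp, ?_⟩
  rintro rfl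
  apply hS0; rw [← hS]; ring

lemma lemQ5' (R S t : ℤ) (ht : t ≠ 0) (hN : R^2-5*S^2 = t^5) (hc : IsCoprime R S) (h5 : 5 ∣ S) :
    ∃ u v : ℤ, u*(u^4+50*u^2*v^2+125*v^4) = R ∧ 5*v*(u^4+10*u^2*v^2+5*v^4) = S := by
  have h5R : ¬ (5:ℤ) ∣ R := fun h => not_both R S hc 5 Nat.prime_five ⟨by exact_mod_cast h, by exact_mod_cast h5⟩
  obtain ⟨β, hβ⟩ := lemQ5 ⟨R, S⟩ t ht (by rw [Zsqrtd.norm_def, ← hN]; ring) h5 h5R (by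
    rintro l hl hl2 ⟨h1, h2, -⟩
    simp only at h1 h2
    rcases (Nat.prime_iff_prime_int.1 hl).dvd_or_dvd h2 with h | h
    · have : l ∣ 5 := by exact_mod_cast h
      rw [Nat.prime_dvd_prime_iff_eq hl Nat.prime_five] at this
      subst this
      exact h5R (by exact_mod_cast h1)
    · exact not_both R S hc l hl ⟨h1, h⟩)
  refine ⟨β.re, β.im, ?_, ?_⟩
  · have := congrArg Zsqrtd.re hβ
    simp [pow_succ] at this
    rw [this]; ring
  · have := congrArg Zsqrtd.im hβ
    simp [pow_succ] at this
    rw [this]; ring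

lemma descent (n : ℕ) : ∀ (u v t m : ℤ) (i j k : ℕ), v.natAbs = n → v ≠ 0 → IsCoprime u v →
    (u + v) % 2 = 1 → u^4+10*u^2*v^2+5*v^4 = t^5 → v = 2^i*3^j*5^(k+1)*m^5 → False := by
  induction n using Nat.strong_induction_on with
  | _ n ih =>
  intro u v t m i j k hn hv hc hp hQ hvm
  have hv2 : 0 < v^2 := by positivity
  have h5v : (5:ℤ) ∣ v := by rw [hvm]; exact ⟨2^i*3^j*5^k*m^5, by ring⟩
  have h5u : ¬ (5:ℤ) ∣ u := fun h => not_both u v hc 5 Nat.prime_five ⟨by exact_mod_cast h, by exact_mod_cast h5v⟩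
  have ht : t ≠ 0 := by
    rintro rfl
    have : 0 < u^4+10*u^2*v^2+5*v^4 := by positivity
    rw [hQ] at this; norm_num at this
  have hpR : (u^2+5*v^2) % 2 = 1 := by
    rcases Int.emod_two_eq_zero_or_one u with h1 | h1 <;> rcases Int.emod_two_eq_zero_or_one v with h2 | h2
    · omega
    · simp [Int.add_emod, Int.mul_emod, pow_succ, h1, h2]
    · simp [Int.add_emod, Int.mul_emod, pow_succ, h1, h2]
    · omega
  have hcRS : IsCoprime (u^2+5*v^2) (2*v^2) := by
    refine (cop_odd _ hpR).mul_right ?_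
    apply IsCoprime.pow_right
    have := (hc.pow_left (m := 2)).add_mul_left_left (5*v)
    rw [show u^2+5*v^2 = u^2+v*(5*v) by ring]; exact this
  obtain ⟨u1, v1, hR, hS⟩ := lemQ5' (u^2+5*v^2) (2*v^2) t ht (by rw [← hQ]; ring) hcRS
    (by rw [sq]; exact (h5v.mul_left v).mul_left 2)
  obtain ⟨m1, t1, e1, e2, e3, e4, e5⟩ := start u1 v1 _ _ (m^2) (2*i+1) (2*j) (2*k) hR hS (by positivity)
    (by omega) hcRS (by rw [hvm]; ring)
  refine ih v1.natAbs ?_ u1 v1 t1 m1 _ _ _ rfl e5 e3 e4 e2 e1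
  rw [← hn]
  rw [Int.natAbs_lt_iff_sq_lt]
  have hv1 : 0 < v1^2 := by positivity
  by_contra hle
  push Not at hle
  have h4 := congrArg (fun x => x^2) hS
  have h6 : 5*v1^4 ≤ u1^4+10*u1^2*v1^2+5*v1^4 := by nlinarith [sq_nonneg (u1^2), sq_nonneg (u1*v1)]
  have h7 : (5*v1^4)^2 ≤ (u1^4+10*u1^2*v1^2+5*v1^4)^2 := pow_le_pow_left₀ (by positivity) h6 2
  have h8 : (5*v1)^2 * (5*v1^4)^2 ≤ (2*v^2)^2 := by rw [← h4, mul_pow (5*v1)]; gcongr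
  have h9 : (2*v^2)^2 ≤ (2*v1^2)^2 := by gcongr
  have h10 : (1:ℤ) ≤ v1^2 := hv1
  nlinarith [pow_le_pow_left₀ (by norm_num : (0:ℤ) ≤ 1) h10 3, sq_nonneg (v1^2), pow_pos hv1 2]


lemma lemQ' (u v p : ℤ) (hp : p ≠ 0) (hN : u^2+5*v^2 = p^5)
    (hc : ∀ l : ℕ, l.Prime → l ≠ 2 → (l:ℤ) ∣ u → (l:ℤ) ∣ 5 * v → (l:ℤ) ∣ p → False) :
    ∃ a b : ℤ, u = a*(a^4-50*a^2*b^2+125*b^4) ∧ v = 5*b*(a^4-10*a^2*b^2+5*b^4) ∧ a^2+5*b^2 = p := by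
  obtain ⟨β, hβ⟩ := lemQ ⟨u, v⟩ p hp (by rw [Zsqrtd.norm_def, ← hN]; ring) (by
    rintro l hl hl2 ⟨h1, h2, h3⟩
    exact hc l hl hl2 h1 h2 h3)
  refine ⟨β.re, β.im, ?_, ?_, ?_⟩
  · have := congrArg Zsqrtd.re hβ
    simp [pow_succ] at this
    rw [this]; ring
  · have := congrArg Zsqrtd.im hβ
    simp [pow_succ] at this
    rw [this]; ring
  · have := congrArg Zsqrtd.norm hβ
    rw [nm_pow, Zsqrtd.norm_def, Zsqrtd.norm_def] at this
    have h2 : (β.re^2+5*β.im^2)^5 = p^5 := by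
      rw [← hN]; linear_combination -this
    exact (Odd.strictMono_pow (by decide : Odd 5)).injective h2

lemma prime_fifth_dvd (l : ℕ) (hl : l.Prime) (w c : ℤ) (hw : ¬ (l:ℤ) ∣ w) (h : (l:ℤ)^5 ∣ c * w^5) :
    (l:ℤ)^5 ∣ c := by
  refine IsCoprime.dvd_of_dvd_mul_right ?_ h
  exact (cop_prime w l hl hw).symm.pow

lemma small_fifth (l : ℕ) (hl : l.Prime) (c : ℤ) (hc : 0 < c) (hc2 : c ≤ 1000) (h : (l:ℤ)^5 ∣ c) :
    (l = 2 ∧ 32 ∣ c) ∨ (l = 3 ∧ 243 ∣ c) := by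
  have h1 := Int.le_of_dvd hc h
  have h2 : l < 4 := by
    by_contra h4
    push Not at h4
    have h5 : (4:ℤ) ≤ l := by exact_mod_cast h4
    have := pow_le_pow_left₀ (by norm_num) h5 5
    omega
  have := hl.two_le
  interval_cases l
  · left; exact ⟨rfl, by norm_num at h; exact h⟩
  · right; exact ⟨rfl, by norm_num at h; exact h⟩

lemma dvd5 (l a b : ℤ) (ha : l ∣ a) (hb : l ∣ b) :
    l^5 ∣ a*(a^4-50*a^2*b^2+125*b^4) ∧ l^5 ∣ 5*b*(a^4-10*a^2*b^2+5*b^4) := by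
  obtain ⟨a, rfl⟩ := ha
  obtain ⟨b, rfl⟩ := hb
  exact ⟨⟨a*(a^4-50*a^2*b^2+125*b^4), by ring⟩, ⟨5*b*(a^4-10*a^2*b^2+5*b^4), by ring⟩⟩

lemma prime_in_prod (l : ℕ) (hl : l.Prime) (c w : ℤ) (n : ℕ) (h : (l:ℤ) ∣ c * w^n) : (l:ℤ) ∣ c ∨ (l:ℤ) ∣ w := by
  have hP := Nat.prime_iff_prime_int.1 hl
  exact (hP.dvd_or_dvd h).imp id hP.dvd_of_dvd_pow

lemma small_prime (l : ℕ) (hl : l.Prime) (c : ℕ) (hc : c ∣ 30^5) (h : (l:ℤ) ∣ (c:ℤ)) : l = 2 ∨ l = 3 ∨ l = 5 := by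
  have h1 : l ∣ c := by exact_mod_cast h
  have h2 : l ∣ 30 := hl.dvd_of_dvd_pow (h1.trans hc)
  have h3 : l ∣ 2*3*5 := h2
  rcases hl.dvd_mul.1 h3 with h4 | h4
  · rcases hl.dvd_mul.1 h4 with h5 | h5
    · left; exact (Nat.prime_dvd_prime_iff_eq hl Nat.prime_two).1 h5
    · right; left; exact (Nat.prime_dvd_prime_iff_eq hl Nat.prime_three).1 h5
  · right; right; exact (Nat.prime_dvd_prime_iff_eq hl Nat.prime_five).1 h4

lemma caseB (p r w : ℤ) (hpw : IsCoprime p w) (h5 : ¬ 5 ∣ p) (h3 : ¬ 3 ∣ w) 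
    (h : 27*p^5 = r^2+5*(100*w^5)^2) : False := by
  -- choose sign
  obtain ⟨r', hr', hm⟩ : ∃ r', r'^2 = r^2 ∧ (r' + w^5) % 3 = 0 := by
    have hr : (r^2 + 5*(100*w^5)^2) % 3 = 0 := by omega
    have h3' : w % 3 ≠ 0 := fun h => h3 (Int.dvd_of_emod_eq_zero h)
    have hw : w % 3 = 1 ∨ w % 3 = 2 := by omega
    have hu : r % 3 = 0 ∨ r % 3 = 1 ∨ r % 3 = 2 := by omega
    rcases hw with h1 | h1 <;> rcases hu with h2 | h2 | h2
    · exfalso; simp [Int.add_emod, Int.mul_emod, pow_succ, h1, h2] at hr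
    · refine ⟨-r, by ring, ?_⟩
      have : w^5 % 3 = 1 := by simp [Int.mul_emod, pow_succ, h1]
      omega
    · refine ⟨r, by ring, ?_⟩
      have : w^5 % 3 = 1 := by simp [Int.mul_emod, pow_succ, h1]
      omega
    · exfalso; simp [Int.add_emod, Int.mul_emod, pow_succ, h1, h2] at hr
    · refine ⟨r, by ring, ?_⟩
      have : w^5 % 3 = 2 := by simp [Int.mul_emod, pow_succ, h1]
      omega
    · refine ⟨-r, by ring, ?_⟩
      have : w^5 % 3 = 2 := by simp [Int.mul_emod, pow_succ, h1]
      omega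
  rw [← hr'] at h
  have hp : p ≠ 0 := by rintro rfl; exact h5 (dvd_zero 5)
  obtain ⟨a, b, h1, h2, -⟩ := lemQ' (2*r'-500*w^5) (r'+200*w^5) (3*p) (by omega) (by linear_combination (-9)*h) (by
    intro l hl hl2 d1 d2 d3
    have hP := Nat.prime_iff_prime_int.1 hl
    by_cases l5 : l = 5
    · subst l5; rcases hP.dvd_or_dvd d3 with h | h
      · norm_num at h
      · exact h5 h
    by_cases l3 : l = 3
    · subst l3
      have h4 : (3:ℤ) ∣ 1 * w^5 := by push_cast at d1; omega
      rcases prime_in_prod 3 hl _ _ _ h4 with h | h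
      · norm_num at h
      · exact h3 h
    have d2' : (l:ℤ) ∣ r'+200*w^5 := by
      rcases hP.dvd_or_dvd d2 with h | h
      · exfalso; rcases small_prime l hl 5 (by norm_num) h with h | h | h <;> omega
      · exact h
    have d4 : (l:ℤ) ∣ 900 * w^5 := by
      have : 900*w^5 = (r'+200*w^5)*2 - (2*r'-500*w^5) := by ring
      rw [this]; exact dvd_sub (d2'.mul_right 2) d1
    have d5 : (l:ℤ) ∣ p := by
      rcases hP.dvd_or_dvd d3 with h | h
      · exfalso; rcases small_prime l hl 3 (by norm_num) h with h | h | h <;> omega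
      · exact h
    rcases prime_in_prod l hl _ _ _ d4 with h | h
    · exfalso; rcases small_prime l hl 900 (by norm_num) h with h | h | h <;> omega
    · exact not_both p w hpw l hl ⟨d5, h⟩)
  have hr5 : (5:ℤ) ∣ r' := ⟨b*(a^4-10*a^2*b^2+5*b^4) - 40*w^5, by linear_combination h2⟩
  obtain ⟨x, rfl⟩ := hr5
  have : (5:ℤ) ∣ 27*p^5 := ⟨5*x^2+(100*w^5)^2, by rw [h]; ring⟩
  rcases prime_in_prod 5 Nat.prime_five _ _ _ this with h | h
  · norm_num at h
  · exact h5 h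

lemma fifth25 : ∀ t c : ZMod 25, (t^5 = 20736*c^20 → 5*c = 0) ∧ (4*t^5 = 81*c^20 → 5*c = 0) := by
  decide +kernel

lemma five_of_zmod (c : ℤ) (h : (5:ZMod 25) * (c : ZMod 25) = 0) : (5:ℤ) ∣ c := by
  have : ((5*c : ℤ) : ZMod 25) = 0 := by push_cast; exact h
  rw [ZMod.intCast_zmod_eq_zero_iff_dvd] at this
  push_cast at this
  omega

lemma par_cases (a b : ℤ) (hab : IsCoprime a b) : (a+b) % 2 = 1 ∨ (a % 2 = 1 ∧ b % 2 = 1) := by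
  have := not_both a b hab 2 Nat.prime_two
  push_cast at this
  omega

lemma caseC (p r w : ℤ) (hpw : IsCoprime p w) (h3 : ¬ 3 ∣ p) (h5 : ¬ 5 ∣ p)
    (h : p^5 = 5*r^2+144*w^10) : False := by
  have hp : p ≠ 0 := by rintro rfl; exact h5 (dvd_zero 5)
  obtain ⟨a, b, h1, h2, hab⟩ := lemQ' (12*w^5) r p hp (by linear_combination -h) (by
    intro l hl hl2 d1 d2 d3
    rcases prime_in_prod l hl _ _ _ d1 with h | h
    · rcases small_prime l hl 12 (by norm_num) h with rfl | rfl | rfl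
      · omega
      · exact h3 d3
      · exact h5 d3
    · exact not_both p w hpw l hl ⟨d3, h⟩)
  have hc : IsCoprime a b := by
    apply cop_of
    rintro l hl ⟨da, db⟩
    have d1 := (dvd5 l a b da db).1
    rw [← h1] at d1
    have d3 : (l:ℤ) ∣ p := by
      rw [← hab]; exact dvd_add (dvd_pow da (by norm_num)) ((dvd_pow db (by norm_num)).mul_left 5)
    have := prime_fifth_dvd l hl w 12 (fun h => not_both p w hpw l hl ⟨d3, h⟩) d1
    rcases small_fifth l hl 12 (by norm_num) (by norm_num) this with ⟨_, h⟩ | ⟨_, h⟩ <;> norm_num at h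
  have h5a : ¬ (5:ℤ) ∣ a := fun h => h5 (by
    rw [← hab]; exact dvd_add (dvd_pow h (by norm_num)) (dvd_mul_right _ _))
  set H := a^4-50*a^2*b^2+125*b^4 with hH
  have caH : IsCoprime a H := by
    have c1 : IsCoprime a (125*b^4) := by
      have : IsCoprime a (5^3) := (cop_prime a 5 Nat.prime_five h5a).pow_right
      norm_num at this
      exact this.mul_right hc.pow_right
    have := c1.add_mul_left_right (a^3-50*a*b^2)
    rw [show H = 125*b^4 + a*(a^3-50*a*b^2) by rw [hH]; ring]; exact this
  have cH3 : IsCoprime H 3 := by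
    apply cop_prime _ 3 Nat.prime_three
    intro hd
    have hd := Int.emod_eq_zero_of_dvd hd
    have := mod3_cases a b hc
    have hu : a % 3 = 0 ∨ a % 3 = 1 ∨ a % 3 = 2 := by omega
    have hv : b % 3 = 0 ∨ b % 3 = 1 ∨ b % 3 = 2 := by omega
    rw [hH] at hd
    rcases hu with h1 | h1 | h1 <;> rcases hv with h2 | h2 | h2 <;>
      simp [Int.add_emod, Int.sub_emod, Int.mul_emod, pow_succ, h1, h2] at hd this
  have hz25 : (50 : ZMod 25) = 0 ∧ (125 : ZMod 25) = 0 := by decide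
  have hH25 : (H : ZMod 25) = (a:ZMod 25)^4 := by
    rw [hH]; push_cast; rw [hz25.1, hz25.2]; ring
  rcases par_cases a b hc with hpar | ⟨ho1, ho2⟩
  · have cH2 : IsCoprime H 2 := by
      apply cop_odd
      rw [hH]
      rcases Int.emod_two_eq_zero_or_one a with h1 | h1 <;> rcases Int.emod_two_eq_zero_or_one b with h2 | h2
      · omega
      · simp [Int.add_emod, Int.sub_emod, Int.mul_emod, pow_succ, h1, h2]
      · simp [Int.add_emod, Int.sub_emod, Int.mul_emod, pow_succ, h1, h2]
      · omega
    obtain ⟨m, t, e1, e2⟩ := key_split 12 a H w (by norm_num) h1.symm caH (by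
      have := (cH2.pow_right (n := 2)).mul_right cH3
      norm_num at this; exact this)
    have := (fifth25 t m).1 (by
      have : ((t^5 : ℤ) : ZMod 25) = (a:ZMod 25)^4 := by rw [← e2, hH25]
      push_cast at this
      rw [this, e1]; push_cast; ring)
    have := five_of_zmod m this
    exact h5a (by rw [e1]; exact (dvd_pow this (by norm_num)).mul_left 12)
  · obtain ⟨x, hx⟩ := odd_sq8 _ ho1
    obtain ⟨y, hy⟩ := odd_sq8 _ ho2
    have hH8 : H = (8*x+1)^2-50*(8*x+1)*(8*y+1)+125*(8*y+1)^2 := by rw [hH, ← hx, ← hy]; ring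
    obtain ⟨H', hH', hodd⟩ : ∃ H', H = 4*H' ∧ H' % 2 = 1 := by
      refine ⟨H/4, ?_, ?_⟩ <;> (rw [hH8]; ring_nf; omega)
    rw [hH'] at caH cH3 h1 hH25
    obtain ⟨m, t, e1, e2⟩ := key_split 3 a H' w (by norm_num) (by linarith) caH.of_mul_right_right cH3.of_mul_left_right
    have := (fifth25 t m).2 (by
      have : ((4*t^5 : ℤ) : ZMod 25) = (a:ZMod 25)^4 := by rw [← e2, hH25]
      push_cast at this
      rw [this, e1]; push_cast; ring)
    have := five_of_zmod m this
    exact h5a (by rw [e1]; exact (dvd_pow this (by norm_num)).mul_left 3)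

lemma caseD (p r w : ℤ) (hw : w ≠ 0) (hpw : IsCoprime p w) (h3 : ¬ 3 ∣ p) (h5 : ¬ 5 ∣ p)
    (h : p^5 = r^2+5*(300*w^5)^2) : False := by
  have hp : p ≠ 0 := by rintro rfl; exact h5 (dvd_zero 5)
  obtain ⟨a, b, h1, h2, hab⟩ := lemQ' r (300*w^5) p hp (by linear_combination -h) (by
    intro l hl hl2 d1 d2 d3
    rw [← mul_assoc] at d2
    rcases prime_in_prod l hl _ _ _ d2 with h | h
    · rcases small_prime l hl 1500 (by norm_num) (by norm_num at h; exact h) with rfl | rfl | rfl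
      · omega
      · exact h3 d3
      · exact h5 d3
    · exact not_both p w hpw l hl ⟨d3, h⟩)
  have hc : IsCoprime a b := by
    apply cop_of
    rintro l hl ⟨da, db⟩
    have d1 := (dvd5 l a b da db).2
    rw [← h2] at d1
    have d3 : (l:ℤ) ∣ p := by
      rw [← hab]; exact dvd_add (dvd_pow da (by norm_num)) ((dvd_pow db (by norm_num)).mul_left 5)
    have := prime_fifth_dvd l hl w 300 (fun h => not_both p w hpw l hl ⟨d3, h⟩) d1
    rcases small_fifth l hl 300 (by norm_num) (by norm_num) this with ⟨_, h⟩ | ⟨_, h⟩ <;> norm_num at h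
  have h5a : ¬ (5:ℤ) ∣ a := fun h => h5 (by
    rw [← hab]; exact dvd_add (dvd_pow h (by norm_num)) (dvd_mul_right _ _))
  set H := a^4-10*a^2*b^2+5*b^4 with hH
  have h2' : b * H = 60*w^5 := by linarith
  have cbH : IsCoprime b H := by
    have := (hc.symm.pow_right (n := 4)).add_mul_left_right (-10*a^2*b+5*b^3)
    rw [show H = a^4 + b*(-10*a^2*b+5*b^3) by rw [hH]; ring]; exact this
  have cH5 : IsCoprime H 5 := by
    have := ((cop_prime a 5 Nat.prime_five h5a).pow_left (m := 4)).add_mul_left_left (-2*a^2*b^2+b^4)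
    push_cast at this
    rw [show H = a^4 + 5*(-2*a^2*b^2+b^4) by rw [hH]; ring]; exact this
  have cH3 : IsCoprime H 3 := by
    apply cop_prime _ 3 Nat.prime_three
    intro hd
    have hd := Int.emod_eq_zero_of_dvd hd
    have := mod3_cases a b hc
    have hu : a % 3 = 0 ∨ a % 3 = 1 ∨ a % 3 = 2 := by omega
    have hv : b % 3 = 0 ∨ b % 3 = 1 ∨ b % 3 = 2 := by omega
    rw [hH] at hd
    rcases hu with h1 | h1 | h1 <;> rcases hv with h2 | h2 | h2 <;>
      simp [Int.add_emod, Int.sub_emod, Int.mul_emod, pow_succ, h1, h2] at hd this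
  have hb0 : b ≠ 0 := by
    rintro hb
    rw [hb] at h2'
    have : w^5 ≠ 0 := pow_ne_zero 5 hw
    omega
  have hb2 : 0 < b^2 := by positivity
  have h5b : (5:ℤ) ∣ b := by
    refine cH5.symm.dvd_of_dvd_mul_right ?_
    rw [h2']; exact ⟨12*w^5, by ring⟩
  have h5b2 : (5:ℤ) ∣ b^2 := dvd_pow h5b (by norm_num)
  have cab : IsCoprime (a^2-5*b^2) b := by
    have := (hc.pow_left (m := 2)).add_mul_left_left (-5*b)
    rw [show a^2-5*b^2 = a^2 + b*(-5*b) by ring]; exact this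
  rcases par_cases a b hc with hpar | ⟨ho1, ho2⟩
  · have cH2 : H % 2 = 1 := by
      rw [hH]
      rcases Int.emod_two_eq_zero_or_one a with h1 | h1 <;> rcases Int.emod_two_eq_zero_or_one b with h2 | h2
      · omega
      · simp [Int.add_emod, Int.sub_emod, Int.mul_emod, pow_succ, h1, h2]
      · simp [Int.add_emod, Int.sub_emod, Int.mul_emod, pow_succ, h1, h2]
      · omega
    obtain ⟨m, t, e1, e2⟩ := key_split 60 b H w (by norm_num) h2' cbH (by
      have := (((cop_odd H cH2).pow_right (n := 2)).mul_right cH3).mul_right cH5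
      norm_num at this; exact this)
    have hRo : (a^2-5*b^2) % 2 = 1 := by
      rcases Int.emod_two_eq_zero_or_one a with h1 | h1 <;> rcases Int.emod_two_eq_zero_or_one b with h2 | h2
      · omega
      · simp [Int.sub_emod, Int.mul_emod, pow_succ, h1, h2]
      · simp [Int.sub_emod, Int.mul_emod, pow_succ, h1, h2]
      · omega
    have hcRS : IsCoprime (a^2-5*b^2) (-(2*b^2)) := ((cop_odd _ hRo).mul_right cab.pow_right).neg_right
    have ht : t ≠ 0 := by rintro rfl; rw [e2] at cH2; norm_num at cH2
    obtain ⟨u, v, hR, hS⟩ := lemQ5' _ _ t ht (by rw [← e2, hH]; ring) hcRS (by omega)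
    obtain ⟨m1, t1, g1, g2, g3, g4, g5⟩ := start u v _ _ (-m^2) 5 2 0 hR hS (by omega) (by omega) hcRS
      (by rw [e1]; ring)
    exact descent _ u v t1 m1 _ _ _ rfl g5 g3 g4 g2 g1
  · obtain ⟨x, hx⟩ := odd_sq8 _ ho1
    obtain ⟨y, hy⟩ := odd_sq8 _ ho2
    have hH8 : H = (8*x+1)^2-10*(8*x+1)*(8*y+1)+5*(8*y+1)^2 := by rw [hH, ← hx, ← hy]; ring
    obtain ⟨H', hH', hodd⟩ : ∃ H', H = 4*H' ∧ H' % 2 = 1 := by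
      refine ⟨H/4, ?_, ?_⟩ <;> (rw [hH8]; ring_nf; omega)
    rw [hH'] at cbH cH3 cH5 h2'
    obtain ⟨m, t, e1, e2⟩ := key_split 15 b H' w (by norm_num) (by linarith) cbH.of_mul_right_right (by
      have := cH3.of_mul_left_right.mul_right cH5.of_mul_left_right
      norm_num at this; exact this)
    obtain ⟨R, hRR⟩ : ∃ R, a^2-5*b^2 = 2*R := ⟨4*x-20*y-2, by rw [hx, hy]; ring⟩
    have ht : t ≠ 0 := by rintro rfl; rw [e2] at hodd; norm_num at hodd
    have hcRS : IsCoprime R (-b^2) := by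
      rw [hRR] at cab
      exact cab.of_mul_left_right.pow_right.neg_right
    obtain ⟨u, v, hR, hS⟩ := lemQ5' R (-b^2) t ht (by
      have : 4*(R^2-5*(-b^2)^2) = 4*t^5 := by
        rw [← e2, ← hH', hH]; linear_combination (-1)*(a^2-5*b^2+2*R)*hRR
      linarith) hcRS (by omega)
    obtain ⟨m1, t1, g1, g2, g3, g4, g5⟩ := start u v _ _ (-m^2) 0 2 0 hR hS (by omega) (by omega) hcRS
      (by rw [e1]; ring)
    exact descent _ u v t1 m1 _ _ _ rfl g5 g3 g4 g2 g1


def CoreA : Prop := ∀ a b w : ℤ, IsCoprime a b → ¬ 5 ∣ a → a % 2 = 1 → ¬ 3 ∣ w → ¬ 5 ∣ w → w ≠ 0 →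
  2*a^5+25*a^4*b-100*a^3*b^2-250*a^2*b^3+250*a*b^4+125*b^5 = 36*w^5 → False

lemma caseA (hA : CoreA) (p r w : ℤ) (hw0 : w ≠ 0) (hpw : IsCoprime p w) (h5 : ¬ 5 ∣ w) (h3 : ¬ 3 ∣ w) 
    (h : 27*p^5 = 5*r^2+16*w^10) : False := by
  -- choose sign
  obtain ⟨r', hr', hm⟩ : ∃ r', r'^2 = r^2 ∧ (r' + w^5) % 3 = 0 := by
    have hr : (5*r^2 + 16*w^10) % 3 = 0 := by omega
    have h3' : w % 3 ≠ 0 := fun h => h3 (Int.dvd_of_emod_eq_zero h)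
    have hw : w % 3 = 1 ∨ w % 3 = 2 := by omega
    have hu : r % 3 = 0 ∨ r % 3 = 1 ∨ r % 3 = 2 := by omega
    rcases hw with h1 | h1 <;> rcases hu with h2 | h2 | h2
    · exfalso; simp [Int.add_emod, Int.mul_emod, pow_succ, h1, h2] at hr
    · refine ⟨-r, by ring, ?_⟩
      have : w^5 % 3 = 1 := by simp [Int.mul_emod, pow_succ, h1]
      omega
    · refine ⟨r, by ring, ?_⟩
      have : w^5 % 3 = 1 := by simp [Int.mul_emod, pow_succ, h1]
      omega
    · exfalso; simp [Int.add_emod, Int.mul_emod, pow_succ, h1, h2] at hr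
    · refine ⟨r, by ring, ?_⟩
      have : w^5 % 3 = 2 := by simp [Int.mul_emod, pow_succ, h1]
      omega
    · refine ⟨-r, by ring, ?_⟩
      have : w^5 % 3 = 2 := by simp [Int.mul_emod, pow_succ, h1]
      omega
  rw [← hr'] at h
  have h3re : ¬ (3:ℤ) ∣ 8*w^5-5*r' := by
    intro hd
    have h4 : (3:ℤ) ∣ 1 * w^5 := by omega
    rcases prime_in_prod 3 Nat.prime_three _ _ _ h4 with h | h
    · norm_num at h
    · exact h3 h
  have h5re : ¬ (5:ℤ) ∣ 8*w^5-5*r' := by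
    intro hd
    have h4 : (5:ℤ) ∣ 8 * w^5 := by omega
    rcases prime_in_prod 5 Nat.prime_five _ _ _ h4 with h | h
    · norm_num at h
    · exact h5 h
  have hp : p ≠ 0 := by
    rintro rfl
    have : 0 < w^10 := by positivity
    nlinarith [sq_nonneg r']
  obtain ⟨a, b, h1, h2, hab⟩ := lemQ' (8*w^5-5*r') (4*w^5+2*r') (3*p) (by omega) (by linear_combination (-9)*h) (by
    intro l hl hl2 d1 d2 d3
    have hP := Nat.prime_iff_prime_int.1 hl
    by_cases l5 : l = 5
    · subst l5; exact h5re d1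
    by_cases l3 : l = 3
    · subst l3; exact h3re d1
    have d2' : (l:ℤ) ∣ 4*w^5+2*r' := by
      rcases hP.dvd_or_dvd d2 with h | h
      · exfalso; rcases small_prime l hl 5 (by norm_num) h with h | h | h <;> omega
      · exact h
    have d4 : (l:ℤ) ∣ 36 * w^5 := by
      have : 36*w^5 = (4*w^5+2*r')*5 + (8*w^5-5*r')*2 := by ring
      rw [this]; exact dvd_add (d2'.mul_right 5) (d1.mul_right 2)
    have d5 : (l:ℤ) ∣ p := by
      rcases hP.dvd_or_dvd d3 with h | h
      · exfalso; rcases small_prime l hl 3 (by norm_num) h with h | h | h <;> omega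
      · exact h
    rcases prime_in_prod l hl _ _ _ d4 with h | h
    · exfalso; rcases small_prime l hl 36 (by norm_num) h with h | h | h <;> omega
    · exact not_both p w hpw l hl ⟨d5, h⟩)
  have hF : 2*a^5+25*a^4*b-100*a^3*b^2-250*a^2*b^3+250*a*b^4+125*b^5 = 36*w^5 := by
    linear_combination (-2)*h1-5*h2
  refine hA a b w ?_ ?_ ?_ h3 h5 hw0 hF
  · apply cop_of
    rintro l hl ⟨da, db⟩
    by_cases l3 : l = 3
    · subst l3
      apply h3re; rw [h1]; exact (by exact_mod_cast da : (3:ℤ) ∣ a).mul_right _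
    have hP := Nat.prime_iff_prime_int.1 hl
    have d1 := dvd5 l a b da db
    rw [← h1, ← h2] at d1
    have d4 : (l:ℤ)^5 ∣ 36 * w^5 := by
      have : 36*w^5 = (4*w^5+2*r')*5 + (8*w^5-5*r')*2 := by ring
      rw [this]; exact dvd_add (d1.2.mul_right 5) (d1.1.mul_right 2)
    have d3 : (l:ℤ) ∣ 3*p := by
      rw [← hab]; exact dvd_add (dvd_pow da (by norm_num)) ((dvd_pow db (by norm_num)).mul_left 5)
    have d5 : (l:ℤ) ∣ p := by
      rcases hP.dvd_or_dvd d3 with h | h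
      · exfalso
        have : l ∣ 3 := by exact_mod_cast h
        exact l3 ((Nat.prime_dvd_prime_iff_eq hl Nat.prime_three).1 this)
      · exact h
    have := prime_fifth_dvd l hl w 36 (fun h => not_both p w hpw l hl ⟨d5, h⟩) d4
    rcases small_fifth l hl 36 (by norm_num) (by norm_num) this with ⟨_, h⟩ | ⟨_, h⟩ <;> norm_num at h
  · intro h; apply h5re; rw [h1]; exact h.mul_right _
  · by_contra ho
    have ho : a % 2 = 0 := by omega
    obtain ⟨a', rfl⟩ : ∃ a', a = 2*a' := ⟨a/2, by omega⟩
    have hb2 : b % 2 = 0 := by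
      by_contra hb
      have hb1 : b % 2 = 1 := by omega
      have hb5 : b^5 % 2 = 1 := by simp [pow_succ, Int.mul_emod, hb1]
      have : 125*b^5 = 2*(18*w^5-32*a'^5-200*a'^4*b+400*a'^3*b^2+500*a'^2*b^3-250*a'*b^4) := by linear_combination hF
      omega
    obtain ⟨b', rfl⟩ : ∃ a', b = 2*a' := ⟨b/2, by omega⟩
    -- both even : 4 ∣ 3 p, and 32 ∣ 36 w^5
    have e1 : 8*(2*a'^5+25*a'^4*b'-100*a'^3*b'^2-250*a'^2*b'^3+250*a'*b'^4+125*b'^5) = 9*w^5 := by linarith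
    have e2 : (2:ℤ) ∣ 9*w^5 := ⟨4*(2*a'^5+25*a'^4*b'-100*a'^3*b'^2-250*a'^2*b'^3+250*a'*b'^4+125*b'^5), by linarith⟩
    have e3 : (2:ℤ) ∣ w := (prime_in_prod 2 Nat.prime_two _ _ _ e2).resolve_left (by norm_num)
    have e4 : (2:ℤ) ∣ p := by
      have : 4*(a'^2+5*b'^2) = 3*p := by linarith
      omega
    exact not_both p w hpw 2 Nat.prime_two ⟨e4, e3⟩

lemma rat_sq_int (y : ℚ) (n : ℤ) (h : y^2 = n) : ∃ m : ℤ, y = m := by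
  have h1 : (y^2).den = 1 := by rw [h]; rfl
  rw [Rat.den_pow] at h1
  have h2 : y.den = 1 := by
    rcases Nat.eq_one_of_mul_eq_one_left (m := y.den) (n := y.den) (by rw [← sq]; exact h1) with h
    exact h
  exact ⟨y.num, (Rat.den_eq_one_iff y).1 h2 |>.symm⟩

lemma nine_of (r : ℤ) (h : (27:ℤ) ∣ 5*r^2) : (9:ℤ) ∣ r := by
  have h0 : (3:ℤ) ∣ 5*r^2 := dvd_trans (by norm_num) h
  have h1 : (3:ℤ) ∣ r := (prime_in_prod 3 Nat.prime_three _ _ _ h0).resolve_left (by norm_num)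
  obtain ⟨s, rfl⟩ := h1
  have h2 : (3:ℤ) ∣ 5*s^2 := by
    have : 5*(3*s)^2 = 9*(5*s^2) := by ring
    rw [this] at h; omega
  have h3 : (3:ℤ) ∣ s := (prime_in_prod 3 Nat.prime_three _ _ _ h2).resolve_left (by norm_num)
  obtain ⟨t, rfl⟩ := h3
  exact ⟨t, by ring⟩

lemma three_of (p r w k : ℤ) (hw : 3 ∣ w) (h : 27*p^5 = 5*r^2 + 16*k*w^10) : (3:ℤ) ∣ p := by
  obtain ⟨x, rfl⟩ := hw
  have : (27:ℤ) ∣ 5*r^2 := ⟨p^5 - 16*k*3^7*x^10, by linear_combination (-1)*h⟩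
  obtain ⟨s, rfl⟩ := nine_of r this
  have : (3:ℤ) ∣ 1*p^5 := ⟨5*s^2+16*k*3^6*x^10, by linarith⟩
  exact (prime_in_prod 3 Nat.prime_three _ _ _ this).resolve_left (by norm_num)

lemma sqf15 (d : ℕ) (hd : Squarefree d) (h : ∀ l : ℕ, l.Prime → l ∣ d → l = 3 ∨ l = 5) : d = 1 ∨ d = 3 ∨ d = 5 ∨ d = 15 := by
  have h1 : d ∣ 15 := by
    rw [← Nat.prod_primeFactors_of_squarefree hd]
    have : d.primeFactors ⊆ {3, 5} := by
      intro l hl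
      rw [Nat.mem_primeFactors] at hl
      simpa using h l hl.1 hl.2.1
    exact (Finset.prod_dvd_prod_of_subset _ _ _ this).trans (by decide)
  have : d ∈ Nat.divisors 15 := by simp [h1]
  have h2 : Nat.divisors 15 = {1,3,5,15} := by decide
  rw [h2] at this
  simpa using this

theorem main_of_core (hA : CoreA) (X Y : ℚ) : Y ^ 2 ≠ 3 ^ 3 * 5 * X ^ 5 - 2 ^ 4 * 5 := by
  intro hXY
  set p := X.num with hp
  obtain ⟨d, w, hdw, hsq⟩ := Nat.sq_mul_squarefree X.den
  rename' d => d, w => w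
  have hX : X = (p:ℚ) / (X.den : ℚ) := (Rat.num_div_den X).symm
  have hden0 : X.den ≠ 0 := X.den_nz
  have hcop : IsCoprime p (X.den : ℤ) := by
    rw [Int.isCoprime_iff_gcd_eq_one]; exact X.reduced
  set q : ℤ := (X.den : ℤ) with hq
  have hq0 : q ≠ 0 := by rw [hq]; exact_mod_cast hden0
  have hqq : (X.den : ℚ) = (q : ℚ) := by rw [hq]; push_cast; rfl
  rw [hqq] at hX
  have hq0' : (q:ℚ) ≠ 0 := by exact_mod_cast hq0
  obtain ⟨T, hT⟩ := rat_sq_int (Y * q^3) (5*q*(27*p^5-16*q^5)) (by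
    rw [mul_pow, hXY, hX]; push_cast; field_simp; ring)
  have hT2 : T^2 = 5*q*(27*p^5-16*q^5) := by
    have : ((T^2 : ℤ) : ℚ) = ((5*q*(27*p^5-16*q^5) : ℤ) : ℚ) := by
      push_cast; rw [← hT, mul_pow, hXY, hX]; field_simp; ring
    exact_mod_cast this
  have hqd : q = (w:ℤ)^2 * d := by rw [hq, ← hdw]; push_cast; ring
  clear_value p q
  have hw0 : (w:ℤ) ≠ 0 := by rintro h; rw [h] at hqd; apply hq0; rw [hqd]; ring
  have hwT : (w:ℤ) ∣ T := by
    have : (w:ℤ)^2 ∣ T^2 := ⟨5*d*(27*p^5-16*q^5), by rw [hT2, hqd]; ring⟩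
    exact (Int.pow_dvd_pow_iff (by norm_num)).1 this
  obtain ⟨S, hS⟩ := hwT
  have hS2 : S^2 = 5*d*(27*p^5-16*q^5) := by
    have h2 : (w:ℤ)^2 ≠ 0 := pow_ne_zero 2 hw0
    apply mul_left_cancel₀ h2
    rw [← mul_pow, ← hS, hT2, hqd]; ring
  have hpw : IsCoprime p (w:ℤ) := hcop.of_isCoprime_of_dvd_right ⟨w*d, by rw [hqd]; ring⟩
  have hpd : IsCoprime p (d:ℤ) := hcop.of_isCoprime_of_dvd_right ⟨w^2, by rw [hqd]; ring⟩
  have hd15 := sqf15 d hsq (by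
    intro l hl hld
    have hP := Nat.prime_iff_prime_int.1 hl
    by_contra hne
    push Not at hne
    obtain ⟨c, hc⟩ := hld
    have hlc : ¬ l ∣ c := by
      rintro ⟨e, he⟩
      have : l * l ∣ d := ⟨e, by rw [hc, he]; ring⟩
      exact hl.not_isUnit (hsq l this)
    have hlS : (l:ℤ) ∣ S := by
      apply hP.dvd_of_dvd_pow (n := 2)
      rw [hS2, hc]; push_cast; exact ⟨5*c*(27*p^5-16*q^5), by ring⟩
    obtain ⟨s, hs⟩ := hlS
    have hl0 : (l:ℤ) ≠ 0 := by exact_mod_cast hl.ne_zero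
    have h1 : (l:ℤ)*s^2 = 5*c*(27*p^5-16*q^5) := by
      apply mul_left_cancel₀ hl0
      rw [hs, hc] at hS2; push_cast at hS2; linear_combination hS2
    have h2 : (l:ℤ) ∣ (5*c)*(27*p^5-16*q^5) := ⟨s^2, h1.symm⟩
    rcases hP.dvd_or_dvd h2 with h | h
    · rcases hP.dvd_or_dvd h with h | h
      · have : l ∣ 5 := by exact_mod_cast h
        exact hne.2 ((Nat.prime_dvd_prime_iff_eq hl Nat.prime_five).1 this)
      · exact hlc (by exact_mod_cast h)
    · have hlq : (l:ℤ) ∣ q := by rw [hqd, hc]; push_cast; exact ⟨w^2*c, by ring⟩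
      have h3 : (l:ℤ) ∣ 27*p^5 := by
        have : 27*p^5 = (27*p^5-16*q^5) + q*(16*q^4) := by ring
        rw [this]; exact dvd_add h (hlq.mul_right _)
      rcases prime_in_prod l hl _ _ _ h3 with h | h
      · have : l ∣ 3^3 := by exact_mod_cast h
        exact hne.1 ((Nat.prime_dvd_prime_iff_eq hl Nat.prime_three).1 (hl.dvd_of_dvd_pow this))
      · exact not_both p q hcop l hl ⟨h, hlq⟩)
  have h5S : (5:ℤ) ∣ S := by
    have : (5:ℤ) ∣ 1*S^2 := by rw [hS2]; exact ⟨d*(27*p^5-16*q^5), by ring⟩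
    exact (prime_in_prod 5 Nat.prime_five _ _ _ this).resolve_left (by norm_num)
  have not3w : ¬ (3:ℤ) ∣ p → ∀ r k : ℤ, 27*p^5 = 5*r^2 + 16*k*w^10 → ¬ (3:ℤ) ∣ w :=
    fun h r k h1 h2 => h (three_of p r w k h2 h1)
  clear hT hX hXY hT2
  obtain ⟨r, rfl⟩ := h5S
  subst hqd
  rcases hd15 with rfl | rfl | rfl | rfl
  · push_cast at hS2
    have e : 27*p^5 = 5*r^2+16*(w:ℤ)^10 := by linarith
    refine caseA hA p r w hw0 hpw ?_ ?_ e
    · intro h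
      have h1 : (5:ℤ) ∣ 27*p^5 := by rw [e]; exact dvd_add (dvd_mul_right _ _) ((dvd_pow h (by norm_num)).mul_left _)
      have h2 := (prime_in_prod 5 Nat.prime_five _ _ _ h1).resolve_left (by norm_num)
      exact not_both p w hpw 5 Nat.prime_five ⟨h2, h⟩
    · intro h
      have := three_of p r w 1 h (by linarith)
      exact not_both p w hpw 3 Nat.prime_three ⟨this, h⟩
  · push_cast at hS2 hpd
    have h3p : ¬ (3:ℤ) ∣ p := fun h => not_both p 3 hpd 3 Nat.prime_three ⟨h, by norm_num⟩
    have e : 5*r^2 = 3*(27*p^5-16*(w^2*3)^5) := by linarith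
    have h1 : (27:ℤ) ∣ 5*r^2 := ⟨3*p^5-16*27*w^10, by rw [e]; ring⟩
    obtain ⟨s, rfl⟩ := nine_of r h1
    have e' : p^5 = 5*s^2+144*w^10 := by linarith
    refine caseC p s w hpw h3p ?_ e'
    intro h
    have h1 : (5:ℤ) ∣ 144*w^10 := by
      have : 144*(w:ℤ)^10 = p^5-5*s^2 := by linarith
      rw [this]; exact dvd_sub (dvd_pow h (by norm_num)) (dvd_mul_right _ _)
    have h2 := (prime_in_prod 5 Nat.prime_five _ _ _ h1).resolve_left (by norm_num)
    exact not_both p w hpw 5 Nat.prime_five ⟨h, h2⟩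
  · push_cast at hS2 hpd
    have h5p : ¬ (5:ℤ) ∣ p := fun h => not_both p 5 hpd 5 Nat.prime_five ⟨h, by norm_num⟩
    have e : 27*p^5 = r^2+5*(100*(w:ℤ)^5)^2 := by linarith
    refine caseB p r w hpw h5p ?_ e
    intro h
    have h3p : (3:ℤ) ∣ p := by
      obtain ⟨x, hx⟩ := h
      have h27 : (27:ℤ) ∣ 5*r^2 := ⟨5*(p^5 - 50000*3^7*x^10), by rw [hx] at e; linear_combination (-5)*e⟩
      obtain ⟨s, rfl⟩ := nine_of r h27
      have : (3:ℤ) ∣ 1*p^5 := ⟨s^2+50000*3^6*x^10, by rw [hx] at e; linarith⟩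
      exact (prime_in_prod 3 Nat.prime_three _ _ _ this).resolve_left (by norm_num)
    exact not_both p w hpw 3 Nat.prime_three ⟨h3p, h⟩
  · push_cast at hS2 hpd
    have h5p : ¬ (5:ℤ) ∣ p := fun h => not_both p 15 hpd 5 Nat.prime_five ⟨h, by norm_num⟩
    have h3p : ¬ (3:ℤ) ∣ p := fun h => not_both p 15 hpd 3 Nat.prime_three ⟨h, by norm_num⟩
    have e : r^2 = 81*(p^5-16*5^5*9*w^10) := by linarith
    have h1 : (27:ℤ) ∣ 5*r^2 := ⟨15*(p^5-16*5^5*9*w^10), by rw [e]; ring⟩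
    obtain ⟨s, rfl⟩ := nine_of r h1
    exact caseD p s w hw0 hpw h3p h5p (by linarith)


/-! ## The quintic order -/

@[ext] structure Q5 where
  a : ℤ
  b : ℤ
  c : ℤ
  d : ℤ
  e : ℤ

namespace Q5

instance : Zero Q5 := ⟨⟨0,0,0,0,0⟩⟩
instance : One Q5 := ⟨⟨1,0,0,0,0⟩⟩
instance : Add Q5 := ⟨fun x y => ⟨x.a+y.a,x.b+y.b,x.c+y.c,x.d+y.d,x.e+y.e⟩⟩
instance : Neg Q5 := ⟨fun x => ⟨-x.a,-x.b,-x.c,-x.d,-x.e⟩⟩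
def mul5 (x y : Q5) : Q5 :=
  ⟨x.a*y.a + 12*(x.b*y.b) + 6*(x.b*y.d+x.d*y.b) + 12*(x.c*y.c) + 6*(x.c*y.e+x.e*y.c) + 18*(x.d*y.d) + 18*(x.e*y.e),
   x.a*y.b + x.b*y.a - 3*(x.b*y.e+x.e*y.b) - 2*(x.c*y.c) + 3*(x.c*y.d+x.d*y.c) + (x.c*y.e+x.e*y.c) + 4*(x.e*y.e),
   x.a*y.c + x.c*y.a + 2*(x.b*y.b) - 2*(x.b*y.c+x.c*y.b) + 3*(x.b*y.d+x.d*y.b) + (x.b*y.e+x.e*y.b) + (x.c*y.d+x.d*y.c) + 4*(x.d*y.e+x.e*y.d),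
   x.a*y.d + x.d*y.a + 2*(x.b*y.c+x.c*y.b) + 2*(x.b*y.e+x.e*y.b) + 2*(x.c*y.c) + 2*(x.c*y.e+x.e*y.c) + 3*(x.d*y.e+x.e*y.d) - x.e*y.e,
   x.a*y.e + x.e*y.a - 2*(x.b*y.b) + 2*(x.b*y.c+x.c*y.b) + 2*(x.b*y.e+x.e*y.b) + 2*(x.c*y.d+x.d*y.c) + 3*(x.d*y.d) - (x.d*y.e+x.e*y.d)⟩
instance : Mul Q5 := ⟨mul5⟩

theorem zero_def : (0:Q5) = ⟨0,0,0,0,0⟩ := rfl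
instance : SMul ℕ Q5 := ⟨fun n x => ⟨n*x.a,n*x.b,n*x.c,n*x.d,n*x.e⟩⟩
instance : SMul ℤ Q5 := ⟨fun n x => ⟨n*x.a,n*x.b,n*x.c,n*x.d,n*x.e⟩⟩
instance : NatCast Q5 := ⟨fun n => ⟨n,0,0,0,0⟩⟩
instance : IntCast Q5 := ⟨fun n => ⟨n,0,0,0,0⟩⟩
theorem nsmul_def (n : ℕ) (x : Q5) : n • x = ⟨n*x.a,n*x.b,n*x.c,n*x.d,n*x.e⟩ := rfl
theorem zsmul_def (n : ℤ) (x : Q5) : n • x = ⟨n*x.a,n*x.b,n*x.c,n*x.d,n*x.e⟩ := rfl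
theorem natCast_def (n : ℕ) : (n : Q5) = ⟨n,0,0,0,0⟩ := rfl
theorem intCast_def (n : ℤ) : (n : Q5) = ⟨n,0,0,0,0⟩ := rfl
theorem one_def : (1:Q5) = ⟨1,0,0,0,0⟩ := rfl
theorem add_def (x y : Q5) : x + y = ⟨x.a+y.a,x.b+y.b,x.c+y.c,x.d+y.d,x.e+y.e⟩ := rfl
theorem neg_def (x : Q5) : -x = ⟨-x.a,-x.b,-x.c,-x.d,-x.e⟩ := rfl
theorem mul_def (x y : Q5) : x * y = mul5 x y := rfl

instance : CommRing Q5 where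
  add_assoc x y z := by simp only [add_def]; ext <;> simp only <;> ring
  zero_add x := by simp only [add_def, zero_def]; ext <;> simp only <;> ring
  add_zero x := by simp only [add_def, zero_def]; ext <;> simp only <;> ring
  add_comm x y := by simp only [add_def]; ext <;> simp only <;> ring
  neg_add_cancel x := by simp only [add_def, neg_def, zero_def]; ext <;> simp only <;> ring
  mul_assoc x y z := by simp only [mul_def, mul5]; ext <;> simp only <;> ring
  mul_comm x y := by simp only [mul_def, mul5]; ext <;> simp only <;> ring
  one_mul x := by simp only [mul_def, mul5, one_def]; ext <;> simp only <;> ring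
  mul_one x := by simp only [mul_def, mul5, one_def]; ext <;> simp only <;> ring
  left_distrib x y z := by simp only [mul_def, mul5, add_def]; ext <;> simp only <;> ring
  right_distrib x y z := by simp only [mul_def, mul5, add_def]; ext <;> simp only <;> ring
  zero_mul x := by simp only [mul_def, mul5, zero_def]; ext <;> simp only <;> ring
  mul_zero x := by simp only [mul_def, mul5, zero_def]; ext <;> simp only <;> ring
  nsmul n x := n • x
  nsmul_zero x := by simp only [nsmul_def, zero_def]; ext <;> simp
  nsmul_succ n x := by simp only [add_def, nsmul_def]; ext <;> push_cast <;> ring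
  zsmul n x := n • x
  zsmul_zero' x := by simp only [zsmul_def, zero_def]; ext <;> simp
  zsmul_succ' n x := by simp only [add_def, zsmul_def]; ext <;> push_cast <;> ring
  zsmul_neg' n x := by
    simp only [neg_def, zsmul_def]; ext <;> simp only [Int.negSucc_eq] <;> push_cast <;> ring
  natCast n := n
  natCast_zero := rfl
  natCast_succ n := by simp only [add_def, one_def, natCast_def]; ext <;> simp
  intCast n := n
  intCast_ofNat n := rfl
  intCast_negSucc n := by
    simp only [neg_def, intCast_def, natCast_def]; ext <;> simp [Int.negSucc_eq]

theorem ofNat_def (n : ℕ) [n.AtLeastTwo] : (OfNat.ofNat n : Q5) = ⟨OfNat.ofNat n,0,0,0,0⟩ := rfl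
theorem sub_def (x y : Q5) : x - y = ⟨x.a-y.a,x.b-y.b,x.c-y.c,x.d-y.d,x.e-y.e⟩ := by
  rw [sub_eq_add_neg, neg_def, add_def]; simp [sub_eq_add_neg]
theorem int_mul (n : ℤ) (x : Q5) : (n:Q5) * x = ⟨n*x.a,n*x.b,n*x.c,n*x.d,n*x.e⟩ := by
  rw [← zsmul_eq_mul]; rfl

def equivFun : Q5 ≃ₗ[ℤ] (Fin 5 → ℤ) where
  toFun x := ![x.a,x.b,x.c,x.d,x.e]
  invFun v := ⟨v 0, v 1, v 2, v 3, v 4⟩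
  left_inv x := rfl
  right_inv v := by ext i; fin_cases i <;> rfl
  map_add' x y := by ext i; fin_cases i <;> rfl
  map_smul' n x := by ext i; fin_cases i <;> rfl

noncomputable def basis : Module.Basis (Fin 5) ℤ Q5 := Module.Basis.ofEquivFun equivFun

instance : Module.Finite ℤ Q5 := Module.Finite.of_basis basis

def e0 : Q5 := ⟨1,0,0,0,0⟩
def e1 : Q5 := ⟨0,1,0,0,0⟩
def e2 : Q5 := ⟨0,0,1,0,0⟩
def e3 : Q5 := ⟨0,0,0,1,0⟩
def e4 : Q5 := ⟨0,0,0,0,1⟩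
def ee : Fin 5 → Q5 := ![e0,e1,e2,e3,e4]

theorem equivFun_apply (x : Q5) : equivFun x = ![x.a,x.b,x.c,x.d,x.e] := rfl

theorem basis_apply (j : Fin 5) : basis j = ee j := by
  rw [basis, Module.Basis.coe_ofEquivFun]
  fin_cases j <;> rfl

def M5 (x : Q5) : Matrix (Fin 5) (Fin 5) ℤ := Matrix.of fun i j => equivFun (x * ee j) i

/-- determinant of columns -/
def d2 (x y : Q5) : ℤ := x.d*y.e-x.e*y.d
def d3 (x y z : Q5) : ℤ := x.c*d2 y z - y.c*d2 x z + z.c*d2 x y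
def d4 (x y z w : Q5) : ℤ := x.b*d3 y z w - y.b*d3 x z w + z.b*d3 x y w - w.b*d3 x y z
def d5 (x y z w v : Q5) : ℤ :=
  x.a*d4 y z w v - y.a*d4 x z w v + z.a*d4 x y w v - w.a*d4 x y z v + v.a*d4 x y z w

theorem det_eq (f : Fin 5 → Q5) :
    (Matrix.of fun i j => equivFun (f j) i : Matrix (Fin 5) (Fin 5) ℤ).det
      = d5 (f 0) (f 1) (f 2) (f 3) (f 4) := by
  simp only [equivFun_apply]
  rw [Matrix.det_succ_row_zero]
  simp [Fin.sum_univ_succ, Matrix.det_succ_row_zero, Fin.succAbove, d5, d4, d3, d2]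
  ring

def N5 (x : Q5) : ℤ := d5 (x*e0) (x*e1) (x*e2) (x*e3) (x*e4)

theorem det_M5 (x : Q5) : (M5 x).det = N5 x := by
  rw [M5, det_eq]; rfl

theorem norm_eq (x : Q5) : Algebra.norm ℤ x = N5 x := by
  rw [Algebra.norm_eq_matrix_det basis, ← det_M5]
  congr 1
  ext i j
  rw [Algebra.leftMulMatrix_eq_repr_mul, basis_apply]
  rfl

theorem trace_eq (x : Q5) : Algebra.trace ℤ Q5 x = 5 * x.a := by
  rw [Algebra.trace_eq_matrix_trace basis, Matrix.trace]
  have : ∀ i, (Algebra.leftMulMatrix basis x).diag i = equivFun (x * ee i) i := by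
    intro i
    rw [Matrix.diag_apply, Algebra.leftMulMatrix_eq_repr_mul, basis_apply]; rfl
  simp only [this, Fin.sum_univ_five, ee, equivFun_apply, e0, e1, e2, e3, e4, mul_def, mul5]
  simp
  ring

end Q5


/-! ## The quintic field -/
open Polynomial in
noncomputable def hZ : ℤ[X] := X^5 + (C (-10) * X^4 + C 10 * X^3 + C 100 * X^2 + C (-100) * X + C (-80))

open Polynomial in
theorem hZ_deg : hZ.natDegree = 5 := by
  unfold hZ; compute_degree!

open Polynomial in
theorem hZ_monic : hZ.Monic := by
  unfold hZ; monicity!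

open Polynomial in
theorem hZ_irr : Irreducible hZ := by
  have hp : (Ideal.span {(5:ℤ)}).IsPrime := by
    rw [Ideal.span_singleton_prime (by norm_num)]; exact Int.prime_iff_natAbs_prime.2 (by norm_num)
  refine Polynomial.IsEisensteinAt.irreducible (𝓟 := Ideal.span {(5:ℤ)}) ?_ hp hZ_monic.isPrimitive (by rw [hZ_deg]; norm_num)
  refine ⟨?_, ?_, ?_⟩
  · rw [hZ_monic.leadingCoeff, Ideal.mem_span_singleton]; norm_num
  · intro n hn
    rw [hZ_deg] at hn
    rw [Ideal.mem_span_singleton]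
    interval_cases n <;> simp [hZ, coeff_X, coeff_C, coeff_X_pow] 
  · rw [Ideal.span_singleton_pow, Ideal.mem_span_singleton]
    simp [hZ]

open Polynomial in
noncomputable def hQ : ℚ[X] := hZ.map (Int.castRingHom ℚ)

theorem hQ_irr : Irreducible hQ :=
  (Polynomial.IsPrimitive.Int.irreducible_iff_irreducible_map_cast hZ_monic.isPrimitive).1 hZ_irr

theorem hQ_deg : hQ.natDegree = 5 := by
  unfold hQ; rw [hZ_monic.natDegree_map, hZ_deg]

instance : Fact (Irreducible hQ) := ⟨hQ_irr⟩

abbrev L5 := AdjoinRoot hQ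

noncomputable def yy : L5 := AdjoinRoot.root hQ

theorem yy_rel : yy^5-10*yy^4+10*yy^3+100*yy^2-100*yy-80 = 0 := by
  have h : Polynomial.eval₂ (AdjoinRoot.of hQ) yy hQ = 0 := AdjoinRoot.eval₂_root hQ
  generalize yy = y at h ⊢
  have key : ∀ g : ℚ →+* L5, Polynomial.eval₂ g y hQ = Polynomial.eval₂ (g.comp (Int.castRingHom ℚ)) y hZ :=
    fun g => Polynomial.eval₂_map _ _ _
  rw [key, hZ] at h
  simp only [Polynomial.eval₂_add, Polynomial.eval₂_mul, Polynomial.eval₂_C, Polynomial.eval₂_X, Polynomial.eval₂_X_pow] at h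
  simp only [eq_intCast] at h
  push_cast at h
  linear_combination h

theorem finrank_L5 : Module.finrank ℚ L5 = 5 := by
  rw [(AdjoinRoot.powerBasis hQ_irr.ne_zero).finrank, AdjoinRoot.powerBasis_dim, hQ_deg]

instance : FiniteDimensional ℚ L5 := (AdjoinRoot.powerBasis hQ_irr.ne_zero).finite
instance : CharZero L5 := charZero_of_injective_algebraMap (algebraMap ℚ L5).injective
noncomputable instance : NumberField L5 where
  to_charZero := inferInstance
  to_finiteDimensional := inferInstance

/-- powers of `yy` below five are independent -/
theorem yy_indep (a b c d e : ℚ) (h : (a:L5) + b*yy + c*yy^2+d*yy^3+e*yy^4 = 0) :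
    a = 0 ∧ b = 0 ∧ c = 0 ∧ d = 0 ∧ e = 0 := by
  have hl := (AdjoinRoot.powerBasis hQ_irr.ne_zero).basis.linearIndependent
  rw [Fintype.linearIndependent_iff] at hl
  have hd : (AdjoinRoot.powerBasis hQ_irr.ne_zero).dim = 5 := by
    rw [AdjoinRoot.powerBasis_dim, hQ_deg]
  let v : Fin 5 → ℚ := ![a,b,c,d,e]
  have h2 := hl (fun i => v (Fin.cast hd i)) (by
    rw [← h]
    simp only [PowerBasis.coe_basis, AdjoinRoot.powerBasis_gen]
    rw [← (finCongr hd).symm.sum_comp]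
    simp [Fin.sum_univ_five, v, Rat.smul_def, yy])
  have h3 : ∀ i, v i = 0 := fun i => by simpa using h2 (Fin.cast hd.symm i)
  exact ⟨h3 0, h3 1, h3 2, h3 3, h3 4⟩

noncomputable def b1 : L5 := -2 + yy
noncomputable def b2 : L5 := -14/3 + yy + yy^2 - 1/6*yy^3
noncomputable def b3 : L5 := 2/3 - 16/3*yy + 2/3*yy^3 - 1/12*yy^4
noncomputable def b4 : L5 := -2/3 + 3*yy + 1/2*yy^2 - 1/6*yy^3

theorem b11 : b1*b1 = 12+2*b2-2*b4 := by
  unfold b1 b2 b4; ring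
theorem b12 : b1*b2 = -2*b2+2*b3+2*b4 := by
  unfold b1 b2 b3 b4; ring
theorem b13 : b1*b3 = 6+3*b2 := by
  unfold b1 b2 b3; linear_combination (-1/12)*yy_rel
theorem b14 : b1*b4 = -3*b1+b2+2*b3+2*b4 := by
  unfold b1 b2 b3 b4; ring
theorem b22 : b2*b2 = 12-2*b1+2*b3 := by
  unfold b1 b2 b3; linear_combination (-1/18+1/36*yy)*yy_rel
theorem b23 : b2*b3 = 3*b1+b2+2*b4 := by
  unfold b1 b2 b3 b4; linear_combination (-1/9-1/18*yy+1/72*yy^2)*yy_rel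
theorem b24 : b2*b4 = 6+b1+2*b3 := by
  unfold b1 b2 b3 b4; linear_combination (1/36+1/36*yy)*yy_rel
theorem b33 : b3*b3 = 18+3*b4 := by
  unfold b3 b4; linear_combination (7/36-1/24*yy-1/24*yy^2+1/144*yy^3)*yy_rel
theorem b34 : b3*b4 = 4*b2+3*b3-b4 := by
  unfold b2 b3 b4; linear_combination (-7/36-1/72*yy+1/72*yy^2)*yy_rel
theorem b44 : b4*b4 = 18+4*b1-b3 := by
  unfold b1 b3 b4; linear_combination (1/9+1/36*yy)*yy_rel

noncomputable def phi : Q5 →+* L5 where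
  toFun x := x.a + x.b*b1 + x.c*b2 + x.d*b3 + x.e*b4
  map_one' := by simp [Q5.one_def]
  map_zero' := by simp [Q5.zero_def]
  map_add' x y := by simp only [Q5.add_def]; push_cast; ring
  map_mul' x y := by
    simp only [Q5.mul_def, Q5.mul5]; push_cast
    linear_combination (-(x.b:L5)*y.b)*b11 - ((x.b:L5)*y.c+x.c*y.b)*b12 - ((x.b:L5)*y.d+x.d*y.b)*b13
      - ((x.b:L5)*y.e+x.e*y.b)*b14 - ((x.c:L5)*y.c)*b22 - ((x.c:L5)*y.d+x.d*y.c)*b23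
      - ((x.c:L5)*y.e+x.e*y.c)*b24 - ((x.d:L5)*y.d)*b33 - ((x.d:L5)*y.e+x.e*y.d)*b34 - ((x.e:L5)*y.e)*b44

theorem phi_def (x : Q5) : phi x = x.a + x.b*b1 + x.c*b2 + x.d*b3 + x.e*b4 := rfl

theorem b_indep (a b c d e : ℚ) (h : (a:L5) + b*b1+c*b2+d*b3+e*b4 = 0) :
    a = 0 ∧ b = 0 ∧ c = 0 ∧ d = 0 ∧ e = 0 := by
  have h1 := yy_indep (a-2*b-14/3*c+2/3*d-2/3*e) (b+c-16/3*d+3*e) (c+1/2*e) (-1/6*c+2/3*d-1/6*e) (-1/12*d) (by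
    push_cast; rw [← h]; unfold b1 b2 b3 b4; ring)
  obtain ⟨h0,h1,h2,h3,h4⟩ := h1
  have hd : d = 0 := by linarith
  subst hd
  have hc : c = 0 := by linarith
  have he : e = 0 := by linarith
  subst hc he
  have hb : b = 0 := by linarith
  subst hb
  exact ⟨by linarith, rfl, rfl, rfl, rfl⟩

theorem phi_inj : Function.Injective phi := by
  rw [injective_iff_map_eq_zero]
  intro x hx
  rw [phi_def] at hx
  obtain ⟨h0,h1,h2,h3,h4⟩ := b_indep x.a x.b x.c x.d x.e (by push_cast; exact hx)
  have g0 : x.a = 0 := by exact_mod_cast h0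
  have g1 : x.b = 0 := by exact_mod_cast h1
  have g2 : x.c = 0 := by exact_mod_cast h2
  have g3 : x.d = 0 := by exact_mod_cast h3
  have g4 : x.e = 0 := by exact_mod_cast h4
  rw [Q5.zero_def]; ext <;> assumption

theorem phi_e (j : Fin 5) : phi (Q5.ee j) = ![1,b1,b2,b3,b4] j := by
  fin_cases j <;> simp [Q5.ee, phi_def, Q5.e0, Q5.e1, Q5.e2, Q5.e3, Q5.e4]

theorem b_li : LinearIndependent ℚ (fun j => phi (Q5.ee j)) := by
  rw [Fintype.linearIndependent_iff]
  intro g hg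
  simp only [phi_e, Fin.sum_univ_five, Rat.smul_def] at hg
  obtain ⟨h0,h1,h2,h3,h4⟩ := b_indep (g 0) (g 1) (g 2) (g 3) (g 4) (by rw [← hg]; simp)
  intro i; fin_cases i <;> assumption

noncomputable def bL : Module.Basis (Fin 5) ℚ L5 :=
  basisOfLinearIndependentOfCardEqFinrank b_li (by rw [finrank_L5]; rfl)

theorem bL_apply (j : Fin 5) : bL j = phi (Q5.ee j) := by simp [bL]

theorem bL_repr (x : Q5) (i : Fin 5) : bL.repr (phi x) i = (Q5.equivFun x i : ℚ) := by
  have : phi x = ∑ j, (Q5.equivFun x j : ℚ) • bL j := by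
    simp only [bL_apply, phi_e, Fin.sum_univ_five, Rat.smul_def, Q5.equivFun_apply]
    rw [phi_def]
    simp
  rw [this, Module.Basis.repr_sum_self]

theorem lmul (x : Q5) : Algebra.leftMulMatrix bL (phi x) = (Q5.M5 x).map (Int.cast : ℤ → ℚ) := by
  ext i j
  rw [Algebra.leftMulMatrix_eq_repr_mul, bL_apply, ← map_mul, bL_repr]
  rfl

theorem normL (x : Q5) : Algebra.norm ℚ (phi x) = Q5.N5 x := by
  rw [Algebra.norm_eq_matrix_det bL, lmul, ← Q5.det_M5, Int.cast_det]

theorem traceL (x : Q5) : Algebra.trace ℚ L5 (phi x) = 5 * x.a := by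
  rw [Algebra.trace_eq_matrix_trace bL, lmul, Matrix.trace]
  have : ∀ i, ((Q5.M5 x).map (Int.cast : ℤ → ℚ)).diag i = Q5.equivFun (x * Q5.ee i) i := by
    intro i; rfl
  simp only [this, Fin.sum_univ_five, Q5.ee, Q5.equivFun_apply, Q5.e0, Q5.e1, Q5.e2, Q5.e3, Q5.e4, Q5.mul_def, Q5.mul5]
  simp
  ring

theorem phi_int (x : Q5) : IsIntegral ℤ (phi x) :=
  (IsIntegral.of_finite ℤ x).map (phi.toIntAlgHom)


theorem int_of_integral (q : ℚ) (h : IsIntegral ℤ q) : ∃ n : ℤ, q = n := by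
  obtain ⟨n, hn⟩ := IsIntegrallyClosed.isIntegral_iff.1 h
  exact ⟨n, by rw [← hn]; simp⟩

theorem denom150 (β : L5) (h : IsIntegral ℤ β) : ∃ r : Q5, 150 * β = phi r := by
  have hs := (bL.sum_repr β).symm
  set x := bL.repr β with hx
  have ht : ∀ j, ∃ n : ℤ, ∑ i, x i * (5 * ((Q5.ee i * Q5.ee j).a : ℚ)) = n := by
    intro j
    obtain ⟨n, hn⟩ := int_of_integral _ (Algebra.isIntegral_trace (L := ℚ) (h.mul (phi_int (Q5.ee j))))
    refine ⟨n, ?_⟩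
    rw [← hn, hs, Finset.sum_mul, map_sum]
    refine Finset.sum_congr rfl fun i _ => ?_
    rw [smul_mul_assoc, map_smul, bL_apply, ← map_mul, traceL, smul_eq_mul]
  obtain ⟨n0, h0⟩ := ht 0
  obtain ⟨n1, h1⟩ := ht 1
  obtain ⟨n2, h2⟩ := ht 2
  obtain ⟨n3, h3⟩ := ht 3
  obtain ⟨n4, h4⟩ := ht 4
  simp [Fin.sum_univ_five, Q5.ee, Q5.e0, Q5.e1, Q5.e2, Q5.e3, Q5.e4, Q5.mul_def, Q5.mul5] at h0 h1 h2 h3 h4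
  refine ⟨⟨30*n0, 3*n1-n3, 3*n2-n4, 2*n3-n1, 2*n4-n2⟩, ?_⟩
  rw [hs, phi_def]
  simp only [Fin.sum_univ_five, Rat.smul_def, bL_apply, phi_e]
  simp
  have g0 : 150 * x 0 = 30*n0 := by linarith
  have g1 : 150 * x 1 = 3*n1-n3 := by linarith
  have g2 : 150 * x 2 = 3*n2-n4 := by linarith
  have g3 : 150 * x 3 = 2*n3-n1 := by linarith
  have g4 : 150 * x 4 = 2*n4-n2 := by linarith
  have k0 : (150:L5) * (x 0 : ℚ) = 30*n0 := by exact_mod_cast congrArg (Rat.cast : ℚ → L5) g0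
  have k1 : (150:L5) * (x 1 : ℚ) = 3*n1-n3 := by exact_mod_cast congrArg (Rat.cast : ℚ → L5) g1
  have k2 : (150:L5) * (x 2 : ℚ) = 3*n2-n4 := by exact_mod_cast congrArg (Rat.cast : ℚ → L5) g2
  have k3 : (150:L5) * (x 3 : ℚ) = 2*n3-n1 := by exact_mod_cast congrArg (Rat.cast : ℚ → L5) g3
  have k4 : (150:L5) * (x 4 : ℚ) = 2*n4-n2 := by exact_mod_cast congrArg (Rat.cast : ℚ → L5) g4
  linear_combination k0 + b1*k1+b2*k2+b3*k3+b4*k4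

def trc (r : Q5) : ℤ := 5*(r*r).a
def trc1 (r : Q5) : ℤ := 5*(r*r*Q5.e1).a
def remOK (p : ℕ) : Bool := (List.range p).all fun a => (List.range p).all fun b =>
  (List.range p).all fun c => (List.range p).all fun d => (List.range p).all fun e =>
    (a == 0 && b == 0 && c == 0 && d == 0 && e == 0) ||
    (trc ⟨a,b,c,d,e⟩ % p^2 != 0 || trc1 ⟨a,b,c,d,e⟩ % p^2 != 0) ||
    ((Q5.N5 ⟨a,b,c,d,e⟩ % p^5 != 0) || (Q5.N5 ⟨a,b,c,d,e+p⟩ % p^5 != 0))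

theorem rem2 : remOK 2 = true := by decide +kernel
theorem rem3 : remOK 3 = true := by decide +kernel
theorem rem5 : remOK 5 = true := by decide +kernel

theorem norm_dvd (p : ℕ) (γ : L5) (h : IsIntegral ℤ γ) (r : Q5) (e : p * γ = phi r) :
    Q5.N5 r % p^5 = 0 := by
  obtain ⟨n, hn⟩ := int_of_integral _ (Algebra.isIntegral_norm ℚ h)
  have h1 := congrArg (Algebra.norm ℚ) e
  rw [normL, map_mul, hn] at h1
  have h2 : Algebra.norm ℚ (p : L5) = (p:ℚ)^5 := by
    have := Algebra.norm_algebraMap (R := ℚ) (S := L5) (p:ℚ)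
    rw [finrank_L5] at this
    rw [← this]; simp
  rw [h2] at h1
  have h3 : (p:ℤ)^5*n = Q5.N5 r := by exact_mod_cast h1
  rw [← h3]; simp

theorem trace_dvd (p : ℕ) (γ : L5) (h : IsIntegral ℤ γ) (r s : Q5) (e : p * γ = phi r) :
    (5*(r*r*s).a) % p^2 = 0 := by
  obtain ⟨n, hn⟩ := int_of_integral _ (Algebra.isIntegral_trace (L := ℚ) ((h.mul h).mul (phi_int s)))
  have h1 : phi (r*r*s) = ((p:ℚ)^2) • (γ*γ*phi s) := by
    rw [map_mul, map_mul, ← e, Rat.smul_def]; push_cast; ring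
  have h2 := traceL (r*r*s)
  rw [h1, map_smul, hn, smul_eq_mul] at h2
  have h3 : (p:ℤ)^2*n = 5*(r*r*s).a := by exact_mod_cast h2
  rw [← h3]; simp

theorem step (p : ℕ) (hp : 0 < p) (hr : remOK p = true) (γ : L5) (h : IsIntegral ℤ γ) (r : Q5) (e : p * γ = phi r) :
    ∃ s, γ = phi s := by
  have hp' : (0:ℤ) < p := by exact_mod_cast hp
  have hpL : (p:L5) ≠ 0 := by exact_mod_cast hp.ne'
  let s : Q5 := ⟨r.a/p, r.b/p, r.c/p, r.d/p, r.e/p⟩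
  have key : ∀ x : ℤ, ∃ n : ℕ, n < p ∧ x = p*(x/p) + n := by
    intro x
    refine ⟨(x % p).toNat, ?_, ?_⟩
    · have := Int.emod_lt_of_pos x hp'; omega
    · rw [Int.toNat_of_nonneg (Int.emod_nonneg _ hp'.ne')]; exact (Int.mul_ediv_add_emod x p).symm
  obtain ⟨a, ha, ea⟩ := key r.a
  obtain ⟨b, hb, eb⟩ := key r.b
  obtain ⟨c, hc, ec⟩ := key r.c
  obtain ⟨d, hd, ed⟩ := key r.d
  obtain ⟨f, hf, ef⟩ := key r.e
  have er : r = (p:Q5) * s + ⟨a,b,c,d,f⟩ := by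
    rw [← Int.cast_natCast, Q5.int_mul, Q5.add_def]; ext <;> simpa [s]
  have e1 : p * (γ - phi s) = phi ⟨a,b,c,d,f⟩ := by
    rw [mul_sub, e]; nth_rewrite 1 [er]; simp
  have e2 : p * (γ - phi s + phi Q5.e4) = phi ⟨a,b,c,d,f+p⟩ := by
    rw [mul_add, e1]
    have : (⟨a,b,c,d,f+p⟩ : Q5) = ⟨a,b,c,d,f⟩ + (p:Q5)*Q5.e4 := by
      have : (p:Q5) = ((p:ℤ):Q5) := rfl
      rw [this, Q5.int_mul, Q5.add_def]; ext <;> simp [Q5.e4]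
    rw [this]; simp
  have n1 := norm_dvd p _ (h.sub (phi_int s)) _ e1
  have n2 := norm_dvd p _ ((h.sub (phi_int s)).add (phi_int _)) _ e2
  simp only [remOK, List.all_eq_true, List.mem_range] at hr
  have := hr a ha b hb c hc d hd f hf
  have n3 : trc ⟨a,b,c,d,f⟩ % p^2 = 0 := by
    have := trace_dvd p _ (h.sub (phi_int s)) _ 1 e1
    rwa [mul_one] at this
  have n4 : trc1 ⟨a,b,c,d,f⟩ % p^2 = 0 := trace_dvd p _ (h.sub (phi_int s)) _ Q5.e1 e1
  rw [n1, n2, n3, n4] at this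
  simp at this
  obtain ⟨⟨⟨⟨h1, h2⟩, h3⟩, h4⟩, h5⟩ := this
  subst h1 h2 h3 h4 h5
  refine ⟨s, ?_⟩
  have z : phi ⟨((0:ℕ):ℤ),((0:ℕ):ℤ),((0:ℕ):ℤ),((0:ℕ):ℤ),((0:ℕ):ℤ)⟩ = 0 := map_zero phi
  rw [z] at e1
  exact sub_eq_zero.1 ((mul_eq_zero.1 e1).resolve_left hpL)

theorem phi_surj (β : L5) (h : IsIntegral ℤ β) : ∃ s, β = phi s := by
  obtain ⟨r, hr⟩ := denom150 β h
  have nat : ∀ n : ℕ, IsIntegral ℤ (n:L5) := fun n => by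
    have := isIntegral_algebraMap (R := ℤ) (A := L5) (x := (n:ℤ))
    simpa using this
  obtain ⟨r1, h1⟩ := step 5 (by norm_num) rem5 _ (((nat 30).mul h)) r (by rw [← hr]; push_cast; ring)
  obtain ⟨r2, h2⟩ := step 5 (by norm_num) rem5 _ (((nat 6).mul h)) r1 (by rw [← h1]; push_cast; ring)
  obtain ⟨r3, h3⟩ := step 3 (by norm_num) rem3 _ (((nat 2).mul h)) r2 (by rw [← h2]; push_cast; ring)
  exact step 2 (by norm_num) rem2 _ h r3 (by rw [← h3])

open NumberField in
noncomputable def psi : Q5 ≃+* 𝓞 L5 := RingEquiv.ofBijective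
  (phi.codRestrict (integralClosure ℤ L5).toSubring (fun x => phi_int x) : Q5 →+* 𝓞 L5)
  ⟨fun x y h => phi_inj (congrArg Subtype.val h), fun y => by
    obtain ⟨s, hs⟩ := phi_surj y.1 y.2
    exact ⟨s, Subtype.ext hs.symm⟩⟩

open NumberField in
noncomputable def psiA : Q5 ≃ₐ[ℤ] 𝓞 L5 := AlgEquiv.ofRingEquiv (f := psi) (fun n => by simp)

open NumberField in
theorem norm_psi (x : Q5) : Algebra.norm ℤ (psiA x) = Q5.N5 x := by
  rw [Algebra.norm_eq_of_algEquiv, Q5.norm_eq]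

open NumberField in
theorem discr_L5 : NumberField.discr L5 = 101250000 := by
  rw [← NumberField.discr_eq_discr L5 (Q5.basis.map psiA.toLinearEquiv)]
  have : (⇑(Q5.basis.map psiA.toLinearEquiv)) = psiA ∘ Q5.basis := by ext; simp
  rw [this, ← Algebra.discr_eq_discr_of_algEquiv, Algebra.discr_def]
  have h : Algebra.traceMatrix ℤ ⇑Q5.basis = Matrix.of fun i j => Q5.equivFun 
     ((![⟨5,0,0,0,0⟩,⟨0,60,0,30,0⟩,⟨0,0,60,0,30⟩,⟨0,30,0,90,0⟩,⟨0,0,30,0,90⟩] : Fin 5 → Q5) j) i := by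
    ext i j
    rw [Algebra.traceMatrix_apply, Algebra.traceForm_apply, Q5.trace_eq, Q5.basis_apply, Q5.basis_apply]
    fin_cases i <;> fin_cases j <;> rfl
  rw [h, Q5.det_eq]
  rfl


section units
open NumberField NumberField.Units

noncomputable def expo (K : Type*) [Field K] [NumberField K] (u : (𝓞 K)ˣ) :
    torsion K × (Fin (rank K) → ℤ) := (exist_unique_eq_mul_prod K u).choose

theorem expo_spec (K : Type*) [Field K] [NumberField K] (u : (𝓞 K)ˣ) :
    u = (expo K u).1 * ∏ i, (fundSystem K i) ^ ((expo K u).2 i) :=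
  (exist_unique_eq_mul_prod K u).choose_spec.1

theorem expo_mul (K : Type*) [Field K] [NumberField K] (u v : (𝓞 K)ˣ) :
    expo K (u*v) = ((expo K u).1*(expo K v).1, (expo K u).2+(expo K v).2) := by
  refine ((exist_unique_eq_mul_prod K (u*v)).choose_spec.2 _ ?_).symm
  simp only [Pi.add_apply, zpow_add, Finset.prod_mul_distrib]
  nth_rewrite 1 [expo_spec K u, expo_spec K v]
  push_cast
  exact mul_mul_mul_comm _ _ _ _

noncomputable def lam (K : Type*) [Field K] [NumberField K] :
    Additive (𝓞 K)ˣ →+ (Fin (rank K) → ZMod 5) :=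
  AddMonoidHom.mk' (fun u i => ((expo K (Additive.toMul u)).2 i : ZMod 5)) (by
    intro x y
    ext i
    rw [toMul_add, expo_mul]; simp)

theorem lam_ker (K : Type*) [Field K] [NumberField K] (hodd : Odd (Module.finrank ℚ K))
    (u : (𝓞 K)ˣ) (h : lam K (Additive.ofMul u) = 0) : ∃ η : (𝓞 K)ˣ, u = η^5 := by
  have hx := expo_spec K u
  have h5 : ∀ i, ∃ k, (expo K u).2 i = 5 * k := by
    intro i
    have h1 : (((expo K u).2 i : ℤ) : ZMod 5) = 0 := congrFun h i
    exact (ZMod.intCast_zmod_eq_zero_iff_dvd _ 5).1 h1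
  choose k hk using h5
  have hz : (((expo K u).1 : (𝓞 K)ˣ))^5 = (expo K u).1 := by
    rcases torsion_eq_one_or_neg_one_of_odd_finrank hodd (expo K u).1 with h | h <;> rw [h]
    · simp
    · rw [Odd.neg_one_pow (by decide)]
  refine ⟨(expo K u).1 * ∏ i, (fundSystem K i)^(k i), ?_⟩
  rw [mul_pow, hz, ← Finset.prod_pow]
  nth_rewrite 1 [hx]
  congr 1
  refine Finset.prod_congr rfl fun i _ => ?_
  rw [hk, mul_comm, zpow_mul]; norm_cast

theorem lam_prod (K : Type*) [Field K] [NumberField K] (w : Fin 4 → (𝓞 K)ˣ) (f : Fin 4 → ZMod 5) :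
    lam K (Additive.ofMul (∏ i, w i ^ (f i).val)) = ∑ i, f i • lam K (Additive.ofMul (w i)) := by
  rw [ofMul_prod, map_sum]
  refine Finset.sum_congr rfl fun i _ => ?_
  rw [ofMul_pow, map_nsmul]
  ext j
  simp

theorem unit_span (K : Type*) [Field K] [NumberField K] (hodd : Odd (Module.finrank ℚ K))
    (hr : rank K ≤ 4) (w : Fin 4 → (𝓞 K)ˣ)
    (hind : ∀ f : Fin 4 → ℕ, (∀ i, f i < 5) → ∀ η : (𝓞 K)ˣ, ∏ i, w i ^ f i = η^5 → ∀ i, f i = 0) :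
    rank K = 4 ∧ ∀ u : (𝓞 K)ˣ, ∃ (f : Fin 4 → ℕ) (η : (𝓞 K)ˣ), (∀ i, f i < 5) ∧ u = (∏ i, w i ^ f i) * η^5 := by
  have : Fact (Nat.Prime 5) := ⟨by norm_num⟩
  have hli : LinearIndependent (ZMod 5) (fun i => lam K (Additive.ofMul (w i))) := by
    rw [Fintype.linearIndependent_iff]
    intro g hg
    rw [← lam_prod] at hg
    obtain ⟨η, hη⟩ := lam_ker K hodd _ hg
    intro i
    have := hind (fun i => (g i).val) (fun i => ZMod.val_lt _) η hη i
    simpa using this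
  have hc := hli.fintype_card_le_finrank
  simp at hc
  have hr4 : rank K = 4 := by omega
  refine ⟨hr4, fun u => ?_⟩
  have hs := hli.span_eq_top_of_card_eq_finrank (by simp [hr4])
  have hm : lam K (Additive.ofMul u) ∈ Submodule.span (ZMod 5) (Set.range (fun i => lam K (Additive.ofMul (w i)))) := by
    rw [hs]; trivial
  rw [Submodule.mem_span_range_iff_exists_fun] at hm
  obtain ⟨c, hc⟩ := hm
  rw [← lam_prod] at hc
  obtain ⟨η, hη⟩ := lam_ker K hodd (u * (∏ i, w i ^ (c i).val)⁻¹) (by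
    rw [ofMul_mul, map_add, ofMul_inv, map_neg, hc]; simp)
  refine ⟨fun i => (c i).val, η, fun i => ZMod.val_lt _, ?_⟩
  rw [← hη]; simp
end units

/-! ## Arithmetic modulo n -/
namespace Q5
def red (n : ℤ) (x : Q5) : Q5 := ⟨x.a % n, x.b % n, x.c % n, x.d % n, x.e % n⟩
def cong (n : ℤ) (x y : Q5) : Prop := red n x = red n y
def eqb (x y : Q5) : Bool := x.a == y.a && x.b == y.b && x.c == y.c && x.d == y.d && x.e == y.e
theorem eqb_iff (x y : Q5) : eqb x y = true ↔ x = y := by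
  simp [eqb, Q5.ext_iff, and_assoc]

instance : DecidableEq Q5 := fun x y => decidable_of_iff _ (eqb_iff x y)

theorem dvd_int_iff (n : ℤ) (x : Q5) : (n:Q5) ∣ x ↔ n ∣ x.a ∧ n ∣ x.b ∧ n ∣ x.c ∧ n ∣ x.d ∧ n ∣ x.e := by
  constructor
  · rintro ⟨y, rfl⟩
    rw [int_mul]; simp
  · rintro ⟨⟨a,ha⟩,⟨b,hb⟩,⟨c,hc⟩,⟨d,hd⟩,⟨e,he⟩⟩
    exact ⟨⟨a,b,c,d,e⟩, by rw [int_mul]; ext <;> assumption⟩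

theorem red_eq_iff (n : ℤ) (x y : Q5) : red n x = red n y ↔ (n:Q5) ∣ x - y := by
  rw [dvd_int_iff, sub_def, Q5.ext_iff]
  simp only [red, Int.emod_eq_emod_iff_emod_sub_eq_zero, Int.dvd_iff_emod_eq_zero]

abbrev qr (n : ℤ) := Q5 ⧸ Ideal.span {(n:Q5)}
abbrev qm (n : ℤ) : Q5 →+* qr n := Ideal.Quotient.mk _

theorem qm_eq_dvd (n : ℤ) (x y : Q5) : qm n x = qm n y ↔ (n:Q5) ∣ x - y := by
  rw [Ideal.Quotient.eq, Ideal.mem_span_singleton]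

theorem qm_eq (n : ℤ) (x y : Q5) : qm n x = qm n y ↔ red n x = red n y := by
  rw [qm_eq_dvd, red_eq_iff]

theorem qm_red (n : ℤ) (x : Q5) : qm n (red n x) = qm n x := by
  rw [qm_eq]; simp [red]

def mulM (n : ℤ) (x y : Q5) : Q5 := red n (x*y)
def powM (n : ℤ) (x : Q5) : ℕ → ℕ → Q5
  | 0, _ => 1
  | f+1, k => if k = 0 then 1 else
     if k % 2 = 1 then mulM n (mulM n (powM n x f (k/2)) (powM n x f (k/2))) x
     else mulM n (powM n x f (k/2)) (powM n x f (k/2))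

theorem qm_mulM (n : ℤ) (x y : Q5) : qm n (mulM n x y) = qm n x * qm n y := by
  rw [mulM, qm_red, map_mul]

theorem qm_powM (n : ℤ) (x : Q5) (f k : ℕ) (hk : k < 2^f) : qm n (powM n x f k) = (qm n x)^k := by
  induction f generalizing k with
  | zero => 
    have : k = 0 := by simpa using hk
    subst this; simp [powM]
  | succ f ih =>
    rw [powM]
    have hk2 : k/2 < 2^f := by rw [pow_succ] at hk; omega
    split_ifs with h0 h1
    · subst h0; simp
    · rw [qm_mulM, qm_mulM, ih _ hk2, ← pow_add, ← pow_succ]; congr 1; omega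
    · rw [qm_mulM, ih _ hk2, ← pow_add]; congr 1; omega

theorem qm_n (n : ℤ) : (n : qr n) = 0 := by
  have : qm n (n:Q5) = 0 := Ideal.Quotient.eq_zero_iff_mem.2 (Ideal.mem_span_singleton_self _)
  simpa using this

theorem qr_add_pow (l : ℕ) (hl : l.Prime) (x y : qr l) : (x+y)^l = x^l+y^l := by
  obtain ⟨r, hr⟩ := exists_add_pow_prime_eq hl x y
  have := qm_n l
  rw [Int.cast_natCast] at this
  rw [hr, this]; ring

theorem qr_int_pow (l : ℕ) (hl : l.Prime) (a : ℤ) : ((a:qr l))^l = a := by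
  have : Fact l.Prime := ⟨hl⟩
  have h1 : (l:ℤ) ∣ a^l - a := by
    rw [← ZMod.intCast_zmod_eq_zero_iff_dvd]; push_cast; rw [ZMod.pow_card, sub_self]
  obtain ⟨k, hk⟩ := h1
  have h2 : ((a^l - a : ℤ) : qr l) = 0 := by rw [hk, Int.cast_mul, qm_n, zero_mul]
  push_cast at h2
  exact sub_eq_zero.1 h2

theorem expand (x : Q5) : x = (x.a:Q5) + x.b*e1 + x.c*e2+x.d*e3+x.e*e4 := by
  simp only [int_mul, add_def, e1, e2, e3, e4]
  simp only [intCast_def]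
  ext <;> simp

theorem frob (l : ℕ) (hl : l.Prime) (x : Q5) : (qm l x)^l =
    (x.a:qr l) + x.b*(qm l e1)^l + x.c*(qm l e2)^l + x.d*(qm l e3)^l + x.e*(qm l e4)^l := by
  nth_rewrite 1 [expand x]
  simp only [map_add, map_mul, map_intCast, qr_add_pow l hl, mul_pow, qr_int_pow l hl]

theorem frob2 (l : ℕ) (hl : l.Prime) (x : Q5) : (qm l x)^(l^2) =
    (x.a:qr l) + x.b*(qm l e1)^(l^2) + x.c*(qm l e2)^(l^2) + x.d*(qm l e3)^(l^2) + x.e*(qm l e4)^(l^2) := by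
  rw [pow_two, pow_mul, frob l hl]
  simp only [qr_add_pow l hl, mul_pow, qr_int_pow l hl, pow_mul]

def frobOK (l : ℕ) : Bool := eqb (powM l e1 11 (l^2)) e1 && eqb (powM l e2 11 (l^2)) e2 &&
  eqb (powM l e3 11 (l^2)) e3 && eqb (powM l e4 11 (l^2)) e4

theorem frob_id (l : ℕ) (hl : l.Prime) (hlt : l^2 < 2^11) (h : frobOK l = true) (x : Q5) :
    (qm l x)^(l^2) = qm l x := by
  simp only [frobOK, Bool.and_eq_true, eqb_iff] at h
  obtain ⟨⟨⟨h1, h2⟩, h3⟩, h4⟩ := h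
  rw [frob2 l hl]
  rw [← qm_powM _ _ _ _ hlt, ← qm_powM _ _ _ _ hlt, ← qm_powM _ _ _ _ hlt, ← qm_powM _ _ _ _ hlt, h1, h2, h3, h4]
  nth_rewrite 6 [expand x]
  simp

theorem frob11 : frobOK 11 = true := by decide +kernel
theorem frob31 : frobOK 31 = true := by decide +kernel
theorem frob29 : frobOK 29 = true := by decide +kernel

/-- scalar mod 5 -/
def scal5 (x : Q5) : Bool := x.b % 5 == 0 && x.c % 5 == 0 && x.d % 5 == 0 && x.e % 5 == 0

theorem fifth_scal (x : Q5) : ∃ c : ℤ, qm 5 (x^5) = (c : qr 5) := by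
  have h := frob 5 Nat.prime_five x
  have g : ∀ y : Q5, ∀ m : ℤ, red 5 (powM 5 y 3 5) = red 5 (m:Q5) → (qm 5 y)^5 = (m : qr 5) := by
    intro y m hm
    rw [← qm_eq, qm_powM _ _ _ _ (by norm_num), map_intCast] at hm
    exact hm
  obtain ⟨m1, hm1⟩ : ∃ m1 : ℤ, (qm 5 e1)^5 = (m1 : qr 5) := ⟨_, g e1 ((powM 5 e1 3 5).a) (by decide +kernel)⟩
  obtain ⟨m2, hm2⟩ : ∃ m1 : ℤ, (qm 5 e2)^5 = (m1 : qr 5) := ⟨_, g e2 ((powM 5 e2 3 5).a) (by decide +kernel)⟩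
  obtain ⟨m3, hm3⟩ : ∃ m1 : ℤ, (qm 5 e3)^5 = (m1 : qr 5) := ⟨_, g e3 ((powM 5 e3 3 5).a) (by decide +kernel)⟩
  obtain ⟨m4, hm4⟩ : ∃ m1 : ℤ, (qm 5 e4)^5 = (m1 : qr 5) := ⟨_, g e4 ((powM 5 e4 3 5).a) (by decide +kernel)⟩
  refine ⟨x.a+x.b*m1+x.c*m2+x.d*m3+x.e*m4, ?_⟩
  rw [map_pow]
  have h' : (qm 5 x)^5 = (x.a:qr 5) + x.b*(qm 5 e1)^5 + x.c*(qm 5 e2)^5 + x.d*(qm 5 e3)^5 + x.e*(qm 5 e4)^5 := h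
  rw [h', hm1, hm2, hm3, hm4]; push_cast; ring

def mkU (x y : Q5) (h : eqb (x*y) 1 = true) : Q5ˣ := ⟨x, y, (eqb_iff _ _).1 h, by rw [mul_comm]; exact (eqb_iff _ _).1 h⟩
def u1 : Q5ˣ := mkU ⟨1,0,7,-3,-2⟩ ⟨-35,-17,-2,4,15⟩ (by decide +kernel)
def u2 : Q5ˣ := mkU ⟨1,1,1,0,0⟩ ⟨25,-9,11,-2,-6⟩ (by decide +kernel)
def uV : Q5ˣ := mkU ⟨-1,10,15,0,5⟩ ⟨749,115,-215,-275,270⟩ (by decide +kernel)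
def uW : Q5ˣ := mkU ⟨-5849,4690,5840,-2005,760⟩ ⟨4561651,2039210,90510,-646220,-1548585⟩ (by decide +kernel)

def ind1 : Bool := (List.range 5).all fun f => (List.range 5).all fun g =>
  (f == 0 && g == 0) || !(scal5 (mulM 5 (powM 5 ⟨1,0,7,-3,-2⟩ 3 f) (powM 5 ⟨1,1,1,0,0⟩ 3 g)))
theorem ind1_ok : ind1 = true := by decide +kernel
def ind2 : Bool := (List.range 5).all fun f => (List.range 5).all fun g =>
  (f == 0 && g == 0) ||
   !(eqb (powM 11 (mulM 11 (powM 11 ⟨-1,10,15,0,5⟩ 3 f) (powM 11 ⟨-5849,4690,5840,-2005,760⟩ 3 g)) 5 24) 1)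
theorem ind2_ok : ind2 = true := by decide +kernel

theorem pow120 (η : Q5ˣ) : (qm 11 η)^120 = 1 := by
  have h := frob_id 11 (by norm_num) (by norm_num) frob11 η
  have hu : IsUnit (qm 11 (η:Q5)) := (Units.isUnit η).map (qm 11)
  have h' : (qm 11 (η:Q5)) * (qm 11 η)^120 = (qm 11 η) * 1 := by
    rw [mul_one, ← pow_succ']; exact h
  exact hu.mul_left_cancel h'

theorem scal_mul (x : Q5) (m : ℤ) (hm : ¬ 5 ∣ m) (c : ℤ) (h : qm 5 x * (m : qr 5) = (c : qr 5)) : scal5 x = true := by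
  have h1 : qm 5 ((m:Q5)*x) = qm 5 (c:Q5) := by
    rw [map_mul, map_intCast, map_intCast, ← h, mul_comm]
  rw [qm_eq_dvd, dvd_int_iff, int_mul, intCast_def, sub_def] at h1
  simp only [sub_zero] at h1
  have hp : Prime (5:ℤ) := Int.prime_iff_natAbs_prime.2 (by norm_num)
  simp [scal5]
  exact ⟨⟨⟨(hp.dvd_mul.1 h1.2.1).resolve_left hm, (hp.dvd_mul.1 h1.2.2.1).resolve_left hm⟩,
    (hp.dvd_mul.1 h1.2.2.2.1).resolve_left hm⟩, (hp.dvd_mul.1 h1.2.2.2.2).resolve_left hm⟩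

theorem u_indep (f1 f2 f3 f4 : ℕ) (h1 : f1 < 5) (h2 : f2 < 5) (h3 : f3 < 5) (h4 : f4 < 5) (η : Q5ˣ)
    (h : u1^f1*u2^f2*uV^f3*uW^f4 = η^5) : f1 = 0 ∧ f2 = 0 ∧ f3 = 0 ∧ f4 = 0 := by
  have hQ : (u1:Q5)^f1*(u2:Q5)^f2*(uV:Q5)^f3*(uW:Q5)^f4 = (η:Q5)^5 := by
    have := congrArg (Units.val) h
    simpa using this
  have i1 := ind1_ok
  have i2 := ind2_ok
  simp only [ind1, ind2, List.all_eq_true, List.mem_range] at i1 i2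
  have a1 := i1 f1 h1 f2 h2
  have a2 := i2 f3 h3 f4 h4
  have hz : f1 = 0 ∧ f2 = 0 := by
    by_contra hne
    have hs : scal5 (mulM 5 (powM 5 ⟨1,0,7,-3,-2⟩ 3 f1) (powM 5 ⟨1,1,1,0,0⟩ 3 f2)) = true := by
      obtain ⟨c, hc⟩ := fifth_scal η
      refine scal_mul _ ((-1)^f3) ?_ c ?_
      · intro h
        have := Int.natAbs_dvd_natAbs.2 h
        simp [Int.natAbs_pow] at this
      · rw [← hc, ← hQ, qm_mulM, qm_powM _ _ _ _ (by omega), qm_powM _ _ _ _ (by omega)]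
        have v : qm 5 (uV:Q5) = -1 := by
          have : qm 5 (uV:Q5) = qm 5 (-1) := by rw [qm_eq]; decide +kernel
          rw [this]; simp
        have w : qm 5 (uW:Q5) = 1 := by
          have : qm 5 (uW:Q5) = qm 5 1 := by rw [qm_eq]; decide +kernel
          rw [this]; simp
        simp only [map_mul, map_pow, v, w]
        simp [u1, u2, mkU]
    rw [hs] at a1
    simp at a1
    exact hne a1
  obtain ⟨rfl, rfl⟩ := hz
  refine ⟨rfl, rfl, ?_⟩
  by_contra hne
  have hs : eqb (powM 11 (mulM 11 (powM 11 ⟨-1,10,15,0,5⟩ 3 f3) (powM 11 ⟨-5849,4690,5840,-2005,760⟩ 3 f4)) 5 24) 1 = true := by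
    have e : qm 11 (powM 11 (mulM 11 (powM 11 ⟨-1,10,15,0,5⟩ 3 f3) (powM 11 ⟨-5849,4690,5840,-2005,760⟩ 3 f4)) 5 24) = qm 11 1 := by
      rw [qm_powM _ _ _ _ (by norm_num), qm_mulM, qm_powM _ _ _ _ (by omega), qm_powM _ _ _ _ (by omega)]
      have := pow120 η
      rw [show 120 = 5*24 by norm_num, pow_mul, ← map_pow, ← hQ] at this
      simpa [uV, uW, mkU] using this
    rw [qm_eq] at e
    rw [eqb_iff]
    have r1 : red 11 (1:Q5) = 1 := by decide +kernel
    rw [r1] at e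
    rw [← e]
    simp [powM, mulM, red]
  rw [hs] at a2
  simp at a2
  exact hne a2
end Q5

open NumberField NumberField.Units in
theorem units_L5 : rank L5 = 4 ∧ ∀ u : Q5ˣ, ∃ f1 f2 f3 f4 : ℕ, ∃ η : Q5ˣ,
    (f1 < 5 ∧ f2 < 5 ∧ f3 < 5 ∧ f4 < 5) ∧ u = Q5.u1^f1*Q5.u2^f2*Q5.uV^f3*Q5.uW^f4 * η^5 := by
  let m : Q5ˣ ≃* (𝓞 L5)ˣ := Units.mapEquiv psi.toMulEquiv
  have hr : rank L5 ≤ 4 := by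
    have h1 := InfinitePlace.card_eq_nrRealPlaces_add_nrComplexPlaces L5
    have h2 := InfinitePlace.card_add_two_mul_card_eq_rank L5
    rw [finrank_L5] at h2
    unfold rank; omega
  obtain ⟨h4, hs⟩ := unit_span L5 (by rw [finrank_L5]; decide) hr ![m Q5.u1, m Q5.u2, m Q5.uV, m Q5.uW] (by
    intro f hf η hη
    obtain ⟨η', rfl⟩ := m.surjective η
    simp only [Fin.prod_univ_four] at hη
    simp only [← map_pow, ← map_mul, Matrix.cons_val] at hη
    obtain ⟨a0, a1, a2, a3⟩ := Q5.u_indep _ _ _ _ (hf 0) (hf 1) (hf 2) (hf 3) η' (m.injective hη)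
    intro i; fin_cases i <;> assumption)
  refine ⟨h4, fun u => ?_⟩
  obtain ⟨f, η, hf, hu⟩ := hs (m u)
  obtain ⟨η', rfl⟩ := m.surjective η
  refine ⟨f 0, f 1, f 2, f 3, η', ⟨hf 0, hf 1, hf 2, hf 3⟩, m.injective ?_⟩
  rw [hu]
  simp [Fin.prod_univ_four]


/-! ## The ring Q5 is a PID -/
namespace Q5
def tab : List (ℕ × ℕ × Q5) := [(7,4,⟨-5,-3,0,1,2⟩),
  (11,10,⟨-5,0,2,2,-3⟩),
  (13,6,⟨13,-3,-10,4,3⟩),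
  (17,8,⟨-1,0,-1,0,0⟩),
  (23,18,⟨-1,-1,1,0,0⟩),
  (29,26,⟨-5,-2,1,3,-2⟩),
  (31,29,⟨-1,3,-2,0,0⟩),
  (37,13,⟨-1,0,-1,0,1⟩),
  (43,10,⟨-5,-4,0,-4,-4⟩),
  (47,9,⟨-1,-1,0,0,1⟩),
  (53,27,⟨-11,4,-3,0,2⟩),
  (67,62,⟨-47,11,8,-2,-2⟩),
  (71,24,⟨-1,-2,1,2,3⟩),
  (73,35,⟨-1,-1,2,1,-2⟩),
  (79,1,⟨-1,-1,0,0,0⟩),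
  (79,50,⟨-5,-1,-2,-2,-1⟩),
  (79,63,⟨-1,1,2,0,0⟩),
  (79,64,⟨-1,-4,1,0,2⟩),
  (79,69,⟨-1,1,-1,0,1⟩),
  (83,56,⟨-7,2,1,-2,0⟩),
  (89,43,⟨17,-5,-3,2,0⟩),
  (97,76,⟨-5,0,-2,-2,-1⟩),
  (103,18,⟨-5,-2,-1,1,2⟩),
  (107,51,⟨-5,0,-1,0,0⟩),
  (109,68,⟨-1,-3,-4,0,-1⟩),
  (113,37,⟨-1,0,0,0,-1⟩),
  (127,22,⟨-1,2,-1,0,0⟩),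
  (131,101,⟨-17,3,-5,4,1⟩),
  (137,41,⟨-7,2,1,-1,0⟩),
  (149,51,⟨-1,-2,-1,2,0⟩),
  (151,135,⟨-5,0,1,0,-1⟩),
  (157,88,⟨-1,4,3,-2,-1⟩),
  (163,32,⟨-11,-6,6,7,-8⟩),
  (167,9,⟨-1,1,2,-1,0⟩),
  (173,154,⟨-1,-2,0,3,-2⟩),
  (191,75,⟨-1,0,-1,1,0⟩),
  (193,135,⟨13,2,-3,-3,2⟩),
  (197,84,⟨-5,1,2,-1,0⟩),
  (211,153,⟨-5,-1,0,0,-1⟩),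
  (223,3,⟨-1,1,0,0,0⟩),
  (227,34,⟨-1,1,2,0,1⟩),
  (229,178,⟨-1,1,0,1,0⟩),
  (233,152,⟨7,-2,1,0,-1⟩),
  (239,50,⟨-5,2,2,-1,0⟩),
  (239,95,⟨7,0,0,2,1⟩),
  (239,97,⟨-13,-4,-1,0,1⟩),
  (239,107,⟨-5,-1,-1,0,1⟩),
  (239,139,⟨25,0,-6,-2,6⟩),
  (251,94,⟨-5,3,4,-2,0⟩),
  (257,148,⟨-5,5,-4,0,1⟩),
  (263,205,⟨433,-73,-251,64,94⟩),
  (269,217,⟨-1,-3,1,2,-1⟩),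
  (271,116,⟨-7,-1,2,3,-2⟩),
  (277,263,⟨-1,2,-2,0,2⟩),
  (283,151,⟨-1,-1,3,2,-3⟩),
  (293,257,⟨-1,-4,-4,-1,-2⟩),
  (307,74,⟨-1,0,0,1,0⟩),
  (311,128,⟨-95,-22,22,46,-38⟩),
  (313,147,⟨13,6,-5,-9,8⟩),
  (317,190,⟨-1,-4,2,3,4⟩),
  (331,324,⟨-1,0,2,1,2⟩),
  (337,99,⟨-1,-1,-2,-1,0⟩),
  (347,7,⟨-5,1,0,0,0⟩),
  (349,233,⟨-5,2,-4,1,2⟩),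
  (353,48,⟨-5,-2,0,2,0⟩),
  (367,153,⟨-11,1,3,-1,-2⟩),
  (373,300,⟨-11,4,4,-4,0⟩),
  (383,33,⟨-11,2,-1,1,0⟩)]
def hPo (t : ℕ) : ℕ := t^5+10*t^3+100*t^2
def hNe (t : ℕ) : ℕ := 10*t^4+100*t+80
def evt (x : Q5) (t : ℤ) : ℤ := 12*x.a+x.b*(12*t-24)+x.c*(-56+12*t+12*t^2-2*t^3)
  +x.d*(8-64*t+8*t^3-t^4)+x.e*(-8+36*t+6*t^2-2*t^3)
def chkT (p t : ℕ) : Bool := !(hPo t % p == hNe t % p) ||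
  tab.any fun r => r.1 == p && r.2.1 == t && (N5 r.2.2).natAbs == p && evt r.2.2 t % p == 0
def comp (p : ℕ) : Bool := [2,3,5,7,11,13,17,19].any fun d => Nat.blt d p && p % d == 0
def chkP : Bool := (List.range 387).all fun p => Nat.blt p 7 || comp p || (List.range p).all fun t => chkT p t
set_option maxRecDepth 100000 in
theorem chkP_ok : chkP = true := by decide +kernel

structure PI (P : Ideal Q5) (n : ℕ) : Prop where
  prime : P.IsPrime
  two : 2 ≤ n
  lt : n < 387
  dv : ∀ g ∈ P, n ∣ (N5 g).natAbs
  mem : (n:Q5) ∈ P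
  fr : ∀ x, x^n - x ∈ P
  sur : n.Prime → ∀ x, ∃ t < n, x - (t:Q5) ∈ P

theorem N5_int (c : ℤ) : N5 (c:Q5) = c^5 := by
  rw [← norm_eq]
  have := Algebra.norm_algebraMap_of_basis basis c
  simpa using this

theorem PI.int_mem {P n} (h : PI P n) (c : ℤ) (hc : (c:Q5) ∈ P) : (n:ℤ) ∣ c^5 := by
  have := h.dv _ hc
  rw [N5_int] at this
  exact Int.natCast_dvd.2 this

theorem PI.exists_p {P n} (h : PI P n) : ∃ p k : ℕ, p.Prime ∧ (p:Q5) ∈ P ∧ 1 ≤ k ∧ n = p^k := by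
  have hp := h.prime
  have key : ∀ m : ℕ, 2 ≤ m → (m:Q5) ∈ P → ∃ p : ℕ, p.Prime ∧ (p:Q5) ∈ P := by
    intro m
    induction m using Nat.strong_induction_on with
    | _ m ih =>
      intro hm hmP
      by_cases hpr : m.Prime
      · exact ⟨m, hpr, hmP⟩
      · obtain ⟨a, b, ha, hb, hab⟩ := (Nat.not_prime_iff_exists_mul_eq hm).1 hpr
        have ha2 : 2 ≤ a := by
          rcases a with _ | _ | a
          · omega
          · omega
          · omega
        have hb2 : 2 ≤ b := by
          rcases b with _ | _ | b
          · omega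
          · omega
          · omega
        rw [← hab, Nat.cast_mul] at hmP
        rcases hp.mem_or_mem hmP with h | h
        · exact ih a ha ha2 h
        · exact ih b hb hb2 h
  obtain ⟨p, hpp, hpP⟩ := key n h.two h.mem
  have h5 := h.int_mem (p:ℤ) (by simpa using hpP)
  have h5' : n ∣ p^5 := by exact_mod_cast h5
  obtain ⟨k, hk, hk'⟩ := (Nat.dvd_prime_pow hpp).1 h5'
  refine ⟨p, k, hpp, hpP, ?_, hk'⟩
  rcases k with _ | k
  · have := h.two; simp at hk'; omega
  · omega

def yq : Q5 := ⟨2,1,0,0,0⟩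
theorem yq_rel : yq^5+10*yq^3+100*yq^2 = 10*yq^4+100*yq+80 := by
  have : eqb (yq^5+10*yq^3+100*yq^2) (10*yq^4+100*yq+80) = true := by decide +kernel
  exact (eqb_iff _ _).1 this

theorem yq_ev (x : Q5) : 12*x = 12*(x.a:Q5)+x.b*(12*yq-24)+x.c*(-56+12*yq+12*yq^2-2*yq^3)
  +x.d*(8-64*yq+8*yq^3-yq^4)+x.e*(-8+36*yq+6*yq^2-2*yq^3) := by
  have h1 : eqb (12*e1) (12*yq-24) = true := by decide +kernel
  have h2 : eqb (12*e2) (-56+12*yq+12*yq^2-2*yq^3) = true := by decide +kernel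
  have h3 : eqb (12*e3) (8-64*yq+8*yq^3-yq^4) = true := by decide +kernel
  have h4 : eqb (12*e4) (-8+36*yq+6*yq^2-2*yq^3) = true := by decide +kernel
  rw [eqb_iff] at h1 h2 h3 h4
  rw [← h1, ← h2, ← h3, ← h4]
  nth_rewrite 1 [expand x]
  ring

theorem deg1 {P : Ideal Q5} {p : ℕ} (h : PI P p) (hp : p.Prime) (h7 : 7 ≤ p) : ∃ g ∈ P, (N5 g).natAbs = p := by
  have hP := h.prime
  obtain ⟨t, ht, hy⟩ := h.sur hp yq
  have hc := chkP_ok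
  rw [chkP, List.all_eq_true] at hc
  have hc := hc p (List.mem_range.2 h.lt)
  have hncomp : comp p = false := by
    rw [comp, List.any_eq_false]
    intro d hd hh
    simp only [Bool.and_eq_true, Nat.blt_eq, beq_iff_eq] at hh
    have := (Nat.dvd_prime hp).1 (Nat.dvd_of_mod_eq_zero hh.2)
    simp at hd
    omega
  have hblt : Nat.blt p 7 = false := by
    rw [Bool.eq_false_iff]; intro hh; rw [Nat.blt_eq] at hh; omega
  rw [hncomp, hblt, Bool.or_false, Bool.false_or, List.all_eq_true] at hc
  have hc := hc t (List.mem_range.2 ht)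
  have e : (Ideal.Quotient.mk P yq) = (t : Q5 ⧸ P) := by
    rw [← map_natCast (Ideal.Quotient.mk P), Ideal.Quotient.eq]; exact hy
  have hrel := congrArg (Ideal.Quotient.mk P) yq_rel
  simp only [map_add, map_mul, map_pow, map_ofNat, e] at hrel
  have h1 : (((hPo t : ℤ) - (hNe t : ℤ) : ℤ) : Q5) ∈ P := by
    rw [← Ideal.Quotient.eq_zero_iff_mem]
    push_cast
    rw [map_sub, sub_eq_zero, map_natCast, map_natCast]
    unfold hPo hNe
    push_cast
    exact hrel
  have h2 := h.int_mem _ h1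
  have hpi : Prime (p:ℤ) := Nat.prime_iff_prime_int.1 hp
  have h3 := hpi.dvd_of_dvd_pow h2
  have h4 : hPo t % p = hNe t % p := by
    have h5 : (hPo t : ℤ) % p = (hNe t : ℤ) % p := Int.emod_eq_emod_iff_emod_sub_eq_zero.2 (Int.emod_eq_zero_of_dvd h3)
    exact_mod_cast h5
  rw [chkT, beq_iff_eq.2 h4, Bool.not_true, Bool.false_or, List.any_eq_true] at hc
  obtain ⟨⟨p', t', g⟩, -, hg⟩ := hc
  simp only [Bool.and_eq_true, beq_iff_eq] at hg
  obtain ⟨⟨⟨-, -⟩, hN⟩, hev⟩ := hg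
  refine ⟨g, ?_, hN⟩
  have h12 : (12:Q5) * g ∈ P := by
    have hx := congrArg (Ideal.Quotient.mk P) (yq_ev g)
    simp only [map_add, map_mul, map_pow, map_sub, map_neg, map_ofNat, e, map_intCast] at hx
    rw [← Ideal.Quotient.eq_zero_iff_mem, map_mul, map_ofNat, hx]
    obtain ⟨k, hk⟩ := Int.dvd_of_emod_eq_zero hev
    have hz : (((evt g t : ℤ)) : Q5 ⧸ P) = 0 := by
      rw [hk]
      have : ((p:ℕ) : Q5 ⧸ P) = 0 := by
        rw [← map_natCast (Ideal.Quotient.mk P), Ideal.Quotient.eq_zero_iff_mem]; exact h.mem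
      push_cast; rw [this]; ring
    rw [← hz]; unfold evt; push_cast; ring
  rcases hP.mem_or_mem h12 with h' | h'
  · exfalso
    have := h.int_mem 12 (by simpa using h')
    have h6 := hpi.dvd_of_dvd_pow this
    have h7' : p ∣ 12 := by exact_mod_cast h6
    have h8 : p ∣ 2^2*3 := h7'
    rcases hp.dvd_mul.1 h8 with h9 | h9
    · have := Nat.le_of_dvd (by norm_num) (hp.dvd_of_dvd_pow h9); omega
    · have := Nat.le_of_dvd (by norm_num) h9; omega
  · exact h'

theorem unit_of_eqb {x y : Q5} (h : eqb (x*y) 1 = true) : IsUnit x :=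
  IsUnit.of_mul_eq_one y ((eqb_iff _ _).1 h)

theorem two_case {P : Ideal Q5} {n : ℕ} (h : PI P n) (h2 : (2:Q5) ∈ P) : ∃ g ∈ P, (N5 g).natAbs = n := by
  have hP := h.prime
  have e : (2:Q5) = ⟨4,1,1,1,0⟩*⟨1,1,0,1,1⟩*⟨1,1,0,1,1⟩*⟨-955,351,400,-298,-22⟩ :=
    (eqb_iff _ _).1 (by decide +kernel)
  have hu : (⟨-955,351,400,-298,-22⟩:Q5) ∉ P := by
    intro hm; have := h.dv _ hm
    rw [show (N5 (⟨-955,351,400,-298,-22⟩:Q5)).natAbs = 1 by decide +kernel] at this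
    have := Nat.le_of_dvd (by norm_num) this; have := h.two; omega
  rw [e] at h2
  have hq : (⟨1,1,0,1,1⟩:Q5) ∈ P → ∃ g ∈ P, (N5 g).natAbs = n := by
    intro hq
    have h4 := h.dv _ hq
    rw [show (N5 (⟨1,1,0,1,1⟩:Q5)).natAbs = 4 by decide +kernel] at h4
    have h4' := Nat.le_of_dvd (by norm_num) h4
    have := h.two
    have h34 : n = 2 ∨ n = 4 := by
      interval_cases n <;> omega
    rcases h34 with rfl | rfl
    · exfalso
      have h5 : (⟨1,1,0,1,1⟩:Q5) + (e1^2-e1) + (e3^2-e3) = 1 + 2*⟨15,0,1,0,1⟩ := (eqb_iff _ _).1 (by decide +kernel)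
      have h6 : (⟨1,1,0,1,1⟩:Q5) + (e1^2-e1) + (e3^2-e3) ∈ P :=
        P.add_mem (P.add_mem hq (h.fr e1)) (h.fr e3)
      rw [h5] at h6
      have h7 : (2:Q5)*⟨15,0,1,0,1⟩ ∈ P := P.mul_mem_right _ (by simpa using h.mem)
      have h8 : (1:Q5) ∈ P := (P.add_mem_iff_left h7).1 h6
      exact hP.ne_top ((Ideal.eq_top_iff_one _).2 h8)
    · exact ⟨_, hq, by decide +kernel⟩
  rcases hP.mem_or_mem h2 with h3 | h3
  · rcases hP.mem_or_mem h3 with h3 | h3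
    · rcases hP.mem_or_mem h3 with h3 | h3
      · have h4 := h.dv _ h3
        have h5 : (N5 (⟨4,1,1,1,0⟩:Q5)).natAbs = 2 := by decide +kernel
        rw [h5] at h4
        have := Nat.le_of_dvd (by norm_num) h4
        have := h.two
        exact ⟨_, h3, by omega⟩
      · exact hq h3
    · exact hq h3
  · exact absurd h3 hu

/-- if a prime-norm element lies in `P`, done -/
theorem prime_norm {P : Ideal Q5} {n p : ℕ} (h : PI P n) (hp : p.Prime) (g : Q5) (hg : g ∈ P) (hN : (N5 g).natAbs = p) :
    n = p := by
  have h4 := h.dv _ hg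
  rw [hN] at h4
  rcases (Nat.dvd_prime hp).1 h4 with h5 | h5
  · have := h.two; omega
  · exact h5

theorem ram_case {P : Ideal Q5} {n p : ℕ} (h : PI P n) (hp : p.Prime) (hpP : (p:Q5) ∈ P) (g v : Q5)
    (hN : (N5 g).natAbs = p) (hv : (N5 v).natAbs = 1) (e : (p:Q5) = g^5*v) : ∃ g ∈ P, (N5 g).natAbs = n := by
  have hP := h.prime
  rw [e] at hpP
  rcases hP.mem_or_mem hpP with h3 | h3
  · have h3 := hP.mem_of_pow_mem _ h3
    have := prime_norm h hp g h3 hN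
    exact ⟨g, h3, by omega⟩
  · have := h.dv _ h3
    rw [hv] at this
    have := Nat.le_of_dvd (by norm_num) this; have := h.two; omega

def chkC (p n : ℕ) (g A : Q5) : Bool := eqb (mulM p (powM p yq 10 n - yq) A) (red p g)

theorem cert {P : Ideal Q5} {p n : ℕ} (h : PI P n) (hpP : (p:Q5) ∈ P) (hlt : n < 2^10) (g A : Q5)
    (hc : chkC p n g A = true) : g ∈ P := by
  rw [chkC, eqb_iff] at hc
  have h1 : qm p ((yq^n - yq)*A) = qm p g := by
    rw [map_mul, map_sub, map_pow, ← qm_powM _ _ _ _ hlt, ← map_sub, ← qm_mulM, hc, qm_red]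
  rw [qm_eq_dvd] at h1
  obtain ⟨k, hk⟩ := h1
  have : g = (yq^n - yq)*A - (p:Q5)*k := by
    have : ((p:ℤ):Q5) = (p:Q5) := by simp
    rw [this] at hk
    rw [← hk]; ring
  rw [this]
  exact P.sub_mem (P.mul_mem_right _ (h.fr yq)) (P.mul_mem_right _ hpP)

theorem cert_false {P : Ideal Q5} {p n : ℕ} (h : PI P n) (hpP : (p:Q5) ∈ P) (hp : p.Prime) (hne : n ≠ p) (g A : Q5)
    (hN : (N5 g).natAbs = p) (hc : chkC p n g A = true) : False :=
  hne (prime_norm h hp g (cert h hpP (by have := h.lt; omega) g A hc) hN)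

theorem eleven {P : Ideal Q5} (h : PI P 121) (hpP : ((11:ℕ):Q5) ∈ P) : ∃ g ∈ P, (N5 g).natAbs = 121 := by
  have hP := h.prime
  have e : ((11:ℕ):Q5) = ⟨-5,0,2,2,-3⟩*⟨5,-1,2,0,-2⟩*⟨-7,0,2,1,-2⟩*⟨65,3,18,14,8⟩ := (eqb_iff _ _).1 (by decide +kernel)
  rw [e] at hpP
  rcases hP.mem_or_mem hpP with h3 | h3
  · rcases hP.mem_or_mem h3 with h3 | h3
    · rcases hP.mem_or_mem h3 with h3 | h3
      · have := prime_norm h (p := 11) (by norm_num) _ h3 (by decide +kernel)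
        omega
      · exact ⟨_, h3, by decide +kernel⟩
    · exact ⟨_, h3, by decide +kernel⟩
  · have := h.dv _ h3
    rw [show (N5 (⟨65,3,18,14,8⟩:Q5)).natAbs = 1 by decide +kernel] at this
    omega

theorem gen_of {P : Ideal Q5} {n : ℕ} (h : PI P n) : ∃ g ∈ P, (N5 g).natAbs = n := by
  obtain ⟨p, k, hp, hpP, hk, hn⟩ := h.exists_p
  have hlt := h.lt
  by_cases p2 : p = 2
  · subst p2; exact two_case h (by simpa using hpP)
  by_cases p3 : p = 3
  · subst p3
    exact ram_case h hp hpP ⟨3,1,1,2,1⟩ ⟨-5423609851,-2424910905,-107987985,768048990,1842073345⟩ (by decide +kernel)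
      (by decide +kernel) ((eqb_iff _ _).1 (by decide +kernel))
  by_cases p5 : p = 5
  · subst p5
    exact ram_case h hp hpP ⟨7,0,1,0,1⟩ ⟨900800491499,-331104316368,-377211028971,281407796726,20327372947⟩ (by decide +kernel)
      (by decide +kernel) ((eqb_iff _ _).1 (by decide +kernel))
  have h7 : 7 ≤ p := by
    by_contra hc
    have := hp.two_le
    interval_cases p
    · omega
    · omega
    · exact absurd hp (by norm_num)
    · omega
    · exact absurd hp (by norm_num)
  by_cases hk1 : k = 1
  · subst hk1; rw [pow_one] at hn; subst hn; exact deg1 h hp h7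
  have hk2 : 2 ≤ k := by omega
  have hp20 : p < 20 := by
    by_contra hc
    have h1 : p^2 ≤ p^k := Nat.pow_le_pow_right (by omega) hk2
    have : 20*20 ≤ p^2 := by nlinarith
    omega
  have hk3 : k ≤ 3 := by
    by_contra hc
    have h1 : p^4 ≤ p^k := Nat.pow_le_pow_right (by omega) (by omega)
    have : 7^4 ≤ p^4 := Nat.pow_le_pow_left h7 4
    omega
  by_cases p11 : p = 11
  · subst p11
    have : k = 2 := by
      by_contra hc
      have : k = 3 := by omega
      subst this; omega
    subst this
    norm_num at hn; subst hn
    exact eleven h hpP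
  exfalso
  by_cases p19 : p = 19
  · subst p19
    have : k = 2 := by
      by_contra hc
      have : k = 3 := by omega
      subst this; omega
    subst this
    norm_num at hn; subst hn
    have h1 := cert h hpP (by norm_num) 1 ⟨7,18,1,2,14⟩ (by decide +kernel)
    exact h.prime.ne_top ((Ideal.eq_top_iff_one _).2 h1)
  have hcases : (p = 7 ∧ k = 2) ∨ (p = 7 ∧ k = 3) ∨ (p = 13 ∧ k = 2) ∨ (p = 17 ∧ k = 2) := by
    have hpc : p = 7 ∨ p = 13 ∨ p = 17 := by
      interval_cases p <;> first | omega | (exact absurd hp (by norm_num))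
    have hkc : k = 2 ∨ k = 3 := by omega
    rcases hkc with rfl | rfl
    · omega
    · rcases hpc with rfl | rfl | rfl <;> omega
  rcases hcases with ⟨rfl, rfl⟩ | ⟨rfl, rfl⟩ | ⟨rfl, rfl⟩ | ⟨rfl, rfl⟩ <;> norm_num at hn <;> subst hn
  · exact cert_false h hpP hp (by norm_num) ⟨-5,-3,0,1,2⟩ ⟨4,2,3,0,5⟩ (by decide +kernel) (by decide +kernel)
  · exact cert_false h hpP hp (by norm_num) ⟨-5,-3,0,1,2⟩ ⟨3,4,3,3,2⟩ (by decide +kernel) (by decide +kernel)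
  · exact cert_false h hpP hp (by norm_num) ⟨13,-3,-10,4,3⟩ ⟨12,10,12,12,4⟩ (by decide +kernel) (by decide +kernel)
  · exact cert_false h hpP hp (by norm_num) ⟨-1,0,-1,0,0⟩ ⟨16,2,11,16,15⟩ (by decide +kernel) (by decide +kernel)
end Q5


section pid
open NumberField NumberField.Units

theorem nrC : InfinitePlace.nrComplexPlaces L5 = 0 := by
  have h1 := units_L5.1
  have h2 := InfinitePlace.card_eq_nrRealPlaces_add_nrComplexPlaces L5
  have h3 := InfinitePlace.card_add_two_mul_card_eq_rank L5
  rw [finrank_L5] at h3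
  unfold rank at h1
  omega

theorem bnd {n : ℕ} (h : (n:ℝ) ≤ (4 / Real.pi) ^ InfinitePlace.nrComplexPlaces L5 *
    ((Module.finrank ℚ L5).factorial / (Module.finrank ℚ L5) ^ (Module.finrank ℚ L5) * √|discr L5|)) : n < 387 := by
  rw [nrC, finrank_L5, discr_L5] at h
  have h1 : √|((101250000:ℤ):ℝ)| < 10063 := by
    rw [Real.sqrt_lt' (by norm_num)]; norm_num
  norm_num [Nat.factorial] at h h1
  have : (n:ℝ) < 387 := by linarith
  exact_mod_cast this

theorem PI_of (I : Ideal (𝓞 L5)) (hI : I.IsPrime) (h0 : I ≠ ⊥) (hn : Ideal.absNorm I < 387) :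
    Q5.PI (I.comap psiA) (Ideal.absNorm I) := by
  have hne : Ideal.absNorm I ≠ 0 := by
    rw [Ne, Ideal.absNorm_eq_zero_iff]; exact h0
  have hfin : Finite (𝓞 L5 ⧸ I) := (Ideal.absNorm_ne_zero_iff I).1 hne
  have hmax : I.IsMaximal := hI.isMaximal h0
  letI : Field (𝓞 L5 ⧸ I) := Ideal.Quotient.field I
  letI : Fintype (𝓞 L5 ⧸ I) := Fintype.ofFinite _
  have hcard : Fintype.card (𝓞 L5 ⧸ I) = Ideal.absNorm I := by
    rw [Ideal.absNorm_apply, Submodule.cardQuot_apply, Nat.card_eq_fintype_card]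
  refine ⟨inferInstance, ?_, hn, ?_, ?_, ?_, ?_⟩
  · have : Ideal.absNorm I ≠ 1 := by
      rw [Ne, Ideal.absNorm_eq_one_iff]; exact hI.ne_top
    omega
  · intro g hg
    rw [← norm_psi, ← Ideal.absNorm_span_singleton]
    refine Ideal.absNorm_dvd_absNorm_of_le ?_
    rw [Ideal.span_singleton_le_iff_mem]
    exact hg
  · rw [Ideal.mem_comap, map_natCast]; exact Ideal.absNorm_mem I
  · intro x
    rw [Ideal.mem_comap, map_sub, map_pow, ← Ideal.Quotient.eq, map_pow, ← hcard]
    exact FiniteField.pow_card _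
  · intro hp x
    have hch : ((Ideal.absNorm I : ℕ) : 𝓞 L5 ⧸ I) = 0 := by
      rw [← map_natCast (Ideal.Quotient.mk I), Ideal.Quotient.eq_zero_iff_mem]; exact Ideal.absNorm_mem I
    haveI : Fact (Ideal.absNorm I).Prime := ⟨hp⟩
    haveI : CharP (𝓞 L5 ⧸ I) (Ideal.absNorm I) := (CharP.charP_iff_prime_eq_zero hp).2 hch
    have hb := ZMod.castHom_bijective (n := Ideal.absNorm I) (𝓞 L5 ⧸ I) hcard
    obtain ⟨t, ht⟩ := hb.2 (Ideal.Quotient.mk I (psiA x))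
    refine ⟨t.val, ZMod.val_lt t, ?_⟩
    rw [Ideal.mem_comap, map_sub, map_natCast, ← Ideal.Quotient.eq, ← ht, map_natCast]
    conv_lhs => rw [← ZMod.natCast_zmod_val t]
    rw [map_natCast]

theorem pid_O : IsPrincipalIdealRing (𝓞 L5) := by
  refine RingOfIntegers.isPrincipalIdealRing_of_isPrincipal_of_norm_le_of_isPrime ?_
  intro I hI hle
  have hn := bnd hle
  have h0 : (I : Ideal (𝓞 L5)) ≠ ⊥ := nonZeroDivisors.coe_ne_zero I
  obtain ⟨g, hg, hN⟩ := Q5.gen_of (PI_of _ hI h0 hn)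
  rw [Ideal.mem_comap] at hg
  have hle : Ideal.span {psiA g} ≤ (I : Ideal (𝓞 L5)) := by
    rw [Ideal.span_singleton_le_iff_mem]; exact hg
  obtain ⟨J, hJ⟩ := Ideal.dvd_iff_le.2 hle
  have h1 := congrArg Ideal.absNorm hJ
  rw [map_mul, Ideal.absNorm_span_singleton, norm_psi, hN] at h1
  have hne : Ideal.absNorm (I : Ideal (𝓞 L5)) ≠ 0 := by
    rw [Ne, Ideal.absNorm_eq_zero_iff]; exact h0
  have h2 : Ideal.absNorm J = 1 := by
    have := Nat.eq_of_mul_eq_mul_left (Nat.pos_of_ne_zero hne) (h1.symm.trans (mul_one _).symm)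
    exact this
  rw [Ideal.absNorm_eq_one_iff] at h2
  rw [h2, Ideal.mul_top] at hJ
  rw [← hJ]
  exact ⟨⟨_, rfl⟩⟩

instance : IsDomain Q5 := psi.toMulEquiv.isDomain (𝓞 L5)
instance : IsPrincipalIdealRing Q5 :=
  haveI := pid_O
  IsPrincipalIdealRing.of_surjective psi.symm.toRingHom psi.symm.surjective
end pid


/-! ## Elimination computation -/
namespace Q5
def p2 : Q5 := ⟨4,1,1,1,0⟩
def q2 : Q5 := ⟨1,1,0,1,1⟩
def p3 : Q5 := ⟨3,1,1,2,1⟩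
def p5 : Q5 := ⟨7,0,1,0,1⟩
def zq : Q5 := ⟨-2,-1,1,1,-1⟩
def z' : Q5 := ⟨14170,-5209,-5934,4427,320⟩
def y' : Q5 := ⟨60515,-22242,-25340,18904,1365⟩
def v1 : Q5 := ⟨1,0,7,-3,-2⟩
def v2 : Q5 := ⟨1,1,1,0,0⟩
def v3 : Q5 := ⟨-1,10,15,0,5⟩
def v4 : Q5 := ⟨-5849,4690,5840,-2005,760⟩

/-- the part prime to 5 -/
def cand (n : ℤ) (f1 f2 f3 f4 : ℕ) (cs : Bool) : Q5 :=
  mulM n (mulM n (powM n v1 3 f1) (powM n v2 3 f2))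
   (mulM n (mulM n (powM n v3 3 f3) (powM n v4 3 f4)) (mulM n (bif cs then p2*p2 else q2) (p3*p3)))

/-- mod 5 test -/
def t5 (f1 f2 : ℕ) (cs : Bool) : Bool :=
  (List.range 5).any fun a => (!(a == 0)) && (List.range 5).any fun b => (List.range 5).any fun c =>
    eqb (red 5 (((a:ℤ):Q5) * red 5 z' - ((b:ℤ):Q5) * red 5 y')) (red 5 (((c:ℤ):Q5) * cand 5 f1 f2 0 0 cs))

def pt (l : ℤ) (b : ℕ) : Q5 := if (b:ℤ) = l then 1 else red l (zq - ((5*b:ℤ):Q5))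
def tl1 (l : ℕ) (N : ℕ) (CN x : Q5) : Bool :=
  (List.range l).any fun m => (!(m == 0)) &&
     eqb (red l (((m^N % l : ℕ):ℤ) * powM l x 10 N)) (mulM l CN (powM l x 10 (5*N)))
def tl (l : ℕ) (N : ℕ) (C : Q5) : Bool :=
  (List.range (l+1)).any fun b => tl1 l N (powM l C 10 N) (pt l b)
def full (l : ℤ) (f1 f2 f3 f4 : ℕ) (cs : Bool) : Q5 := mulM l (cand l f1 f2 f3 f4 cs) (p5*p5)
def gd (l N : ℕ) (C : Q5) : Bool := eqb (powM l C 10 (5*N)) 1 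

def ok (f1 f2 f3 f4 : ℕ) (cs : Bool) : Bool :=
  (gd 11 24 (full 11 f1 f2 f3 f4 cs) && !(tl 11 24 (full 11 f1 f2 f3 f4 cs))) || 
  (gd 31 192 (full 31 f1 f2 f3 f4 cs) && !(tl 31 192 (full 31 f1 f2 f3 f4 cs))) || 
  (gd 29 168 (full 29 f1 f2 f3 f4 cs) && !(tl 29 168 (full 29 f1 f2 f3 f4 cs)))
def elim (cs : Bool) : Bool := (List.range 5).all fun f1 => (List.range 5).all fun f2 => !(t5 f1 f2 cs) ||
   ((List.range 5).all fun f3 => (List.range 5).all fun f4 => ok f1 f2 f3 f4 cs)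
theorem el_true : elim true = true := by decide +kernel
theorem el_false : elim false = true := by decide +kernel
end Q5


namespace Q5
theorem qm_pow_one (l : ℕ) (hl : l.Prime) (m : ℤ) (hm : ¬ (l:ℤ) ∣ m) (k : ℕ) (hk : (l-1) ∣ k) :
    ((m : qr l))^k = 1 := by
  have h1 : IsCoprime m (l:ℤ) := ((Nat.prime_iff_prime_int.1 hl).coprime_iff_not_dvd.2 hm).symm
  have h2 := Int.ModEq.pow_card_sub_one_eq_one hl h1
  obtain ⟨j, rfl⟩ := hk
  have h3 : (m : qr l)^(l-1) = 1 := by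
    obtain ⟨k, hk⟩ := h2.symm.dvd
    have : (((m^(l-1) - 1 : ℤ)) : qr l) = 0 := by
      rw [hk, Int.cast_mul, qm_n, zero_mul]
    push_cast at this
    exact sub_eq_zero.1 this
  rw [pow_mul, h3, one_pow]

theorem idem {R : Type*} [CommRing R] (B : R) (q : ℕ) (hq : 2 ≤ q) (h : B^q = B) : B^(q-1) * B^(q-1) = B^(q-1) := by
  obtain ⟨k, rfl⟩ : ∃ k, q = k + 2 := ⟨q-2, by omega⟩
  have : k + 2 - 1 = k + 1 := by omega
  rw [this]
  calc B^(k+1)*B^(k+1) = B^(k+2)*B^k := by ring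
    _ = B^(k+1) := by rw [h]; ring

theorem elim_l (l N : ℕ) (hl : l.Prime) (hN : l^2 = 5*N+1) (hlt : l^2 < 2^10) (hf : frobOK l = true)
    (x C0 C β P : Q5) (m : ℕ) (hx : x = C0*β^5) (hC : qm l C0 = qm l C) (hg : gd l N C = true)
    (hm : 1 ≤ m) (hml : m < l) (hxm : qm l x = (m : qr l) * qm l P) : tl1 l N (powM l C 10 N) P = true := by
  have hB := frob_id l hl (by omega) hf β
  have hq2 : 2 ≤ l^2 := by nlinarith [hl.two_le]
  have hi := idem _ _ hq2 hB
  have h5 : l^2 - 1 = 5*N := by omega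
  rw [h5] at hi
  rw [gd, eqb_iff] at hg
  have hc : (qm l C)^(5*N) = 1 := by
    rw [← qm_powM _ _ 10 _ (by omega), hg, map_one]
  have hX : qm l x = qm l C * (qm l β)^5 := by rw [hx, map_mul, map_pow, hC]
  have e1 : (qm l x)^N = (qm l C)^N * (qm l β)^(5*N) := by rw [hX, mul_pow, ← pow_mul]
  have e2 : (qm l x)^(5*N) = (qm l β)^(5*N) := by
    rw [hX, mul_pow, hc, one_mul, ← pow_mul, mul_comm 5 (5*N), pow_mul]
    generalize (qm l β)^(5*N) = E at hi
    calc E^5 = (E*E)*(E*E)*E := by ring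
      _ = E := by rw [hi, hi, hi]
  have hd : (l-1) ∣ 5*N := by
    refine ⟨l+1, ?_⟩
    obtain ⟨k, rfl⟩ : ∃ k, l = k + 1 := ⟨l-1, by have := hl.two_le; omega⟩
    have : k+1-1 = k := by omega
    rw [this]; nlinarith
  have hm5 : ((m:qr l))^(5*N) = 1 := by
    have := qm_pow_one l hl (m:ℤ) (by
      intro h; have := Nat.le_of_dvd (by omega) (Int.natCast_dvd_natCast.1 h); omega) _ hd
    simpa using this
  have key : (m : qr l)^N * (qm l P)^N = (qm l C)^N * (qm l P)^(5*N) := by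
    rw [← mul_pow, ← hxm, e1, ← e2, hxm, mul_pow, hm5, one_mul]
  rw [tl1, List.any_eq_true]
  refine ⟨m, List.mem_range.2 hml, ?_⟩
  rw [Bool.and_eq_true]
  refine ⟨by simp; omega, ?_⟩
  rw [eqb_iff, mulM, ← qm_eq, map_mul, map_mul, qm_powM _ _ _ _ (by omega), qm_powM _ _ _ _ (by omega),
    qm_powM _ _ _ _ (by omega), ← key, map_intCast]
  congr 1
  have : ((m^N % l : ℕ) : ℤ) = m^N - l * (m^N / l : ℤ) := by
    push_cast; rw [Int.emod_def]
  rw [this]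
  push_cast
  have h0 := qm_n l
  rw [Int.cast_natCast] at h0
  rw [h0]; ring

theorem proj_pt (l : ℕ) (hl : l.Prime) (h5 : ¬ l ∣ 5) (a b : ℤ) (hab : IsCoprime a b) :
    ∃ m k : ℕ, 1 ≤ m ∧ m < l ∧ k < l + 1 ∧
      qm l ((a:Q5)*zq - 5*(b:Q5)) = (m : qr l) * qm l (pt l k) := by
  have hp := Nat.prime_iff_prime_int.1 hl
  have hl0 : (0:ℤ) < l := by exact_mod_cast hl.pos
  have h0 := qm_n l
  have red_int : ∀ c : ℤ, ¬ (l:ℤ) ∣ c → ∃ m : ℕ, 1 ≤ m ∧ m < l ∧ (c : qr l) = (m : qr l) := by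
    intro c hc
    have h1 := Int.emod_nonneg c hl0.ne'
    have h2 := Int.emod_lt_of_pos c hl0
    obtain ⟨m, hm⟩ := Int.eq_ofNat_of_zero_le h1
    refine ⟨m, ?_, by omega, ?_⟩
    · rcases m with _ | m
      · exact absurd (Int.dvd_of_emod_eq_zero (by simpa using hm)) hc
      · omega
    · have : c = m + l * (c / l) := by
        rw [← hm, Int.emod_add_mul_ediv]
      rw [this]
      push_cast
      rw [Int.cast_natCast] at h0
      rw [h0]; ring
  by_cases ha : (l:ℤ) ∣ a
  · have hb : ¬ (l:ℤ) ∣ -5*b := by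
      intro h
      rcases hp.dvd_mul.1 h with h | h
      · apply h5
        rw [dvd_neg] at h
        exact_mod_cast h
      · exact hp.not_unit (hab.isUnit_of_dvd' ha h)
    obtain ⟨m, h1, h2, h3⟩ := red_int _ hb
    refine ⟨m, l, h1, h2, by omega, ?_⟩
    obtain ⟨k, rfl⟩ := ha
    rw [← h3]
    simp only [pt]
    simp only [if_true, map_one, map_sub, map_mul, map_intCast, map_ofNat]
    push_cast at h0 ⊢
    rw [h0]; ring
  · obtain ⟨u, v, huv⟩ := hp.coprime_iff_not_dvd.2 ha
    obtain ⟨m, h1, h2, h3⟩ := red_int _ ha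
    have hk1 := Int.emod_nonneg (v*b) hl0.ne'
    have hk2 := Int.emod_lt_of_pos (v*b) hl0
    obtain ⟨k, hk⟩ := Int.eq_ofNat_of_zero_le hk1
    refine ⟨m, k, h1, h2, by omega, ?_⟩
    rw [← h3]
    have hne : ¬ ((k:ℤ) = (l:ℤ)) := by omega
    rw [pt, if_neg hne, qm_red]
    have hkb : (a : qr l) * (k : qr l) = b := by
      have e : (a * k : ℤ) = b - l * (a * (v*b/l) + u * b) := by
        have : (k:ℤ) = v*b - l*(v*b/l) := by
          have h := Int.emod_add_mul_ediv (v*b) l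
          rw [hk] at h
          have h' : (k:ℤ) + l * (v*b/l) = v*b := h
          linarith
        rw [this]
        linear_combination b * huv
      have := congrArg (Int.cast : ℤ → qr l) e
      push_cast at this h0 ⊢
      rw [this, h0]; ring
    simp only [map_sub, map_mul, map_intCast, map_ofNat]
    push_cast
    rw [← hkb]; ring
end Q5


namespace Q5
def casep (cs : Bool) : Q5 := bif cs then p2*p2 else q2

theorem qm_cand (n : ℤ) (f1 f2 f3 f4 : ℕ) (h1 : f1 < 5) (h2 : f2 < 5) (h3 : f3 < 5) (h4 : f4 < 5) (cs : Bool) :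
    qm n (cand n f1 f2 f3 f4 cs) =
      (qm n v1)^f1*(qm n v2)^f2*((qm n v3)^f3*(qm n v4)^f4*(qm n (casep cs) * qm n (p3*p3))) := by
  rw [cand]
  simp only [qm_mulM]
  rw [qm_powM _ _ _ _ (by omega), qm_powM _ _ _ _ (by omega), qm_powM _ _ _ _ (by omega), qm_powM _ _ _ _ (by omega)]
  rfl

theorem z'_eq : zq = p5*p5*z' := (eqb_iff _ _).1 (by decide +kernel)
theorem y'_eq : (5:Q5) = p5*p5*y' := (eqb_iff _ _).1 (by decide +kernel)
theorem p5_ne : p5*p5 ≠ 0 := by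
  intro h
  have := y'_eq
  rw [h, zero_mul] at this
  have h2 := congrArg Q5.a this
  revert h2; decide +kernel

theorem emod_nat (c : ℤ) : ∃ m : ℕ, m < 5 ∧ c % 5 = m ∧ (c : qr 5) = ((m:ℤ) : qr 5) := by
  obtain ⟨m, hm⟩ := Int.eq_ofNat_of_zero_le (Int.emod_nonneg c (by norm_num : (5:ℤ) ≠ 0))
  refine ⟨m, by omega, hm, ?_⟩
  have : c = m + 5 * (c/5) := by omega
  rw [this]
  have h0 := qm_n 5
  push_cast at h0 ⊢
  rw [h0]; ring

theorem elim5 (a b : ℤ) (ha : ¬ 5 ∣ a) (f1 f2 f3 f4 : ℕ) (h1 : f1 < 5) (h2 : f2 < 5) (cs : Bool) (β : Q5)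
    (h : (a:Q5)*zq - 5*(b:Q5) = v1^f1*v2^f2*v3^f3*v4^f4*casep cs*(p3*p3)*(p5*p5)*β^5) : t5 f1 f2 cs = true := by
  have hx : (a:Q5)*z' - (b:Q5)*y' = v1^f1*v2^f2*v3^f3*v4^f4*casep cs*(p3*p3)*β^5 := by
    apply mul_left_cancel₀ p5_ne
    rw [z'_eq, y'_eq] at h
    linear_combination h
  obtain ⟨c, hc⟩ := fifth_scal β
  have v : qm 5 v3 = -1 := by
    have : qm 5 v3 = qm 5 (-1) := by rw [qm_eq]; decide +kernel
    rw [this]; simp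
  have w : qm 5 v4 = 1 := by
    have : qm 5 v4 = qm 5 1 := by rw [qm_eq]; decide +kernel
    rw [this]; simp
  obtain ⟨a', ha1, ha2, ha3⟩ := emod_nat a
  obtain ⟨b', hb1, hb2, hb3⟩ := emod_nat b
  obtain ⟨c', hc1, hc2, hc3⟩ := emod_nat ((-1)^f3*c)
  have hq := congrArg (qm 5) hx
  have hq' : (qm 5 v1)^f1*(qm 5 v2)^f2*(qm 5 v3)^f3*(qm 5 v4)^f4*qm 5 (casep cs)*qm 5 (p3*p3) * qm 5 (β^5)
      = (a : qr 5) * qm 5 z' - (b : qr 5) * qm 5 y' := by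
    have e : ∀ c : ℤ, qm 5 (c:Q5) = (c : qr 5) := fun c => map_intCast _ c
    rw [← e a, ← e b]
    simp only [← map_pow, ← map_mul, ← map_sub]
    exact hq.symm
  rw [v, w, hc, ha3, hb3] at hq'
  rw [t5, List.any_eq_true]
  refine ⟨a', List.mem_range.2 ha1, ?_⟩
  rw [Bool.and_eq_true]
  constructor
  · have : a' ≠ 0 := by
      rintro rfl
      exact ha (Int.dvd_of_emod_eq_zero (by simpa using ha2))
    simpa using this
  rw [List.any_eq_true]
  refine ⟨b', List.mem_range.2 hb1, ?_⟩
  rw [List.any_eq_true]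
  refine ⟨c', List.mem_range.2 hc1, ?_⟩
  rw [eqb_iff, ← qm_eq, map_sub, map_mul, map_mul, map_mul, qm_red, qm_red, map_intCast, map_intCast, map_intCast, ← hq', ← hc3,
    qm_cand _ _ _ _ _ h1 h2 (by norm_num) (by norm_num)]
  push_cast
  ring

theorem elim_ll (l N : ℕ) (hl : l.Prime) (hN : l^2 = 5*N+1) (hlt : l^2 < 2^10) (hf : frobOK l = true) (h5 : ¬ l ∣ 5)
    (a b : ℤ) (hab : IsCoprime a b) (f1 f2 f3 f4 : ℕ) (h1 : f1 < 5) (h2 : f2 < 5) (h3 : f3 < 5) (h4 : f4 < 5) (cs : Bool) (β : Q5)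
    (h : (a:Q5)*zq - 5*(b:Q5) = v1^f1*v2^f2*v3^f3*v4^f4*casep cs*(p3*p3)*(p5*p5)*β^5) :
    ¬ ((gd l N (full l f1 f2 f3 f4 cs) && !(tl l N (full l f1 f2 f3 f4 cs))) = true) := by
  intro hh
  rw [Bool.and_eq_true] at hh
  obtain ⟨hg, ht⟩ := hh
  obtain ⟨m, k, hm, hml, hk, hmk⟩ := proj_pt l hl h5 a b hab
  have := elim_l l N hl hN hlt hf _ _ (full l f1 f2 f3 f4 cs) β _ m h (by
    rw [full, qm_mulM, qm_cand _ _ _ _ _ h1 h2 h3 h4]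
    simp only [map_mul, map_pow]; ring) hg hm hml hmk
  have h6 : tl l N (full l f1 f2 f3 f4 cs) = true := by
    rw [tl, List.any_eq_true]
    exact ⟨k, List.mem_range.2 hk, this⟩
  rw [h6] at ht
  exact absurd ht (by decide)

theorem elim_final (a b : ℤ) (hab : IsCoprime a b) (ha : ¬ 5 ∣ a) (f1 f2 f3 f4 : ℕ) (h1 : f1 < 5) (h2 : f2 < 5) (h3 : f3 < 5) (h4 : f4 < 5)
    (cs : Bool) (β : Q5)
    (h : (a:Q5)*zq - 5*(b:Q5) = v1^f1*v2^f2*v3^f3*v4^f4*casep cs*(p3*p3)*(p5*p5)*β^5) : False := by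
  have ht := elim5 a b ha f1 f2 f3 f4 h1 h2 cs β h
  have he : elim cs = true := by
    cases cs
    · exact el_false
    · exact el_true
  rw [elim, List.all_eq_true] at he
  have he := he f1 (List.mem_range.2 h1)
  rw [List.all_eq_true] at he
  have he := he f2 (List.mem_range.2 h2)
  rw [ht, Bool.not_true, Bool.false_or, List.all_eq_true] at he
  have he := he f3 (List.mem_range.2 h3)
  rw [List.all_eq_true] at he
  have he := he f4 (List.mem_range.2 h4)
  rw [ok, Bool.or_eq_true, Bool.or_eq_true] at he
  rcases he with (he | he) | he
  · exact elim_ll 11 24 (by norm_num) (by norm_num) (by norm_num) frob11 (by norm_num) a b hab f1 f2 f3 f4 h1 h2 h3 h4 cs β h he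
  · exact elim_ll 31 192 (by norm_num) (by norm_num) (by norm_num) frob31 (by norm_num) a b hab f1 f2 f3 f4 h1 h2 h3 h4 cs β h he
  · exact elim_ll 29 168 (by norm_num) (by norm_num) (by norm_num) frob29 (by norm_num) a b hab f1 f2 f3 f4 h1 h2 h3 h4 cs β h he
end Q5


namespace Q5
theorem N5_mul (x y : Q5) : N5 (x*y) = N5 x * N5 y := by
  rw [← norm_eq, ← norm_eq, ← norm_eq, map_mul]
theorem N5_pow (x : Q5) (k : ℕ) : N5 (x^k) = N5 x ^ k := by
  rw [← norm_eq, ← norm_eq, map_pow]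

theorem unit_of_N5 {x : Q5} (h : (N5 x).natAbs = 1) : IsUnit x := by
  have h1 : Ideal.absNorm (Ideal.span {psiA x}) = 1 := by
    rw [Ideal.absNorm_span_singleton, norm_psi, h]
  rw [Ideal.absNorm_eq_one_iff, Ideal.span_singleton_eq_top] at h1
  have := h1.map psiA.symm
  simpa using this

theorem N5_unit {x : Q5} (h : IsUnit x) : (N5 x).natAbs = 1 := by
  obtain ⟨y, hy⟩ := h.exists_right_inv
  have h1 := congrArg N5 hy
  rw [N5_mul, show N5 1 = 1 by decide +kernel] at h1
  exact Int.isUnit_iff_natAbs_eq.1 (IsUnit.of_mul_eq_one _ h1)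

theorem prime_N {p : Q5} (hp : Prime p) : (N5 p).natAbs ≠ 1 := fun h => hp.not_unit (unit_of_N5 h)

theorem assoc_prime {p g : Q5} (hp : Prime p) (hd : p ∣ g) (hg : (N5 g).natAbs.Prime) : ∃ u : Q5ˣ, p = u * g := by
  obtain ⟨r, rfl⟩ := hd
  rw [N5_mul, Int.natAbs_mul] at hg
  have hr : (N5 r).natAbs = 1 := by
    rcases Nat.prime_mul_iff.1 hg with h | h
    · exact h.2
    · exact absurd h.2 (prime_N hp)
  obtain ⟨v, rfl⟩ := unit_of_N5 hr
  exact ⟨v⁻¹, by rw [mul_comm p, Units.inv_mul_cancel_left]⟩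

theorem q_not_two {P : Ideal Q5} (h : PI P 2) (hq : q2 ∈ P) : False := by
  have hP := h.prime
  have h5 : q2 + (e1^2-e1) + (e3^2-e3) = 1 + 2*⟨15,0,1,0,1⟩ := (eqb_iff _ _).1 (by decide +kernel)
  have h6 : q2 + (e1^2-e1) + (e3^2-e3) ∈ P := P.add_mem (P.add_mem hq (h.fr e1)) (h.fr e3)
  rw [h5] at h6
  have h7 : (2:Q5)*⟨15,0,1,0,1⟩ ∈ P := P.mul_mem_right _ (by simpa using h.mem)
  have h8 : (1:Q5) ∈ P := (P.add_mem_iff_left h7).1 h6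
  exact hP.ne_top ((Ideal.eq_top_iff_one _).2 h8)

theorem assoc_q {p : Q5} (hp : Prime p) (hd : p ∣ q2) : ∃ u : Q5ˣ, p = u * q2 := by
  obtain ⟨r, hr⟩ := hd
  have h1 := congrArg (fun x => (N5 x).natAbs) hr
  simp only [N5_mul, Int.natAbs_mul] at h1
  rw [show (N5 q2).natAbs = 4 by decide +kernel] at h1
  have hp1 := prime_N hp
  have hd4 : (N5 p).natAbs ∣ 4 := ⟨_, h1⟩
  have hle := Nat.le_of_dvd (by norm_num) hd4
  have hc : (N5 p).natAbs = 2 ∨ (N5 p).natAbs = 4 := by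
    interval_cases h : (N5 p).natAbs <;> omega
  rcases hc with hc | hc
  · exfalso
    have hp' : Prime (psiA p) := (MulEquiv.prime_iff psiA).2 hp
    have hn : Ideal.absNorm (Ideal.span {psiA p}) = 2 := by
      rw [Ideal.absNorm_span_singleton, norm_psi, hc]
    have := PI_of (Ideal.span {psiA p}) ((Ideal.span_singleton_prime hp'.ne_zero).2 hp')
      (by rw [Ne, Ideal.span_singleton_eq_bot]; exact hp'.ne_zero) (by rw [hn]; norm_num)
    rw [hn] at this
    refine q_not_two this ?_
    rw [Ideal.mem_comap, hr, map_mul]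
    exact Ideal.mul_mem_right _ _ (Ideal.mem_span_singleton_self _)
  · have : (N5 r).natAbs = 1 := by rw [hc] at h1; omega
    obtain ⟨v, rfl⟩ := unit_of_N5 this
    exact ⟨v⁻¹, by rw [hr, mul_comm p, Units.inv_mul_cancel_left]⟩

theorem not_dvd_unit {p v : Q5} (hp : Prime p) (hv : (N5 v).natAbs = 1) (h : p ∣ v) : False :=
  hp.not_unit (isUnit_of_dvd_unit h (unit_of_N5 hv))

theorem prime30 {p : Q5} (hp : Prime p) (h : p ∣ 30) :
    ∃ u : Q5ˣ, p = u * p2 ∨ p = u * q2 ∨ p = u * p3 ∨ p = u * p5 := by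
  have e : (30:Q5) = (p2*q2*q2*⟨-955,351,400,-298,-22⟩)*(p3^5*⟨-5423609851,-2424910905,-107987985,768048990,1842073345⟩)
     *(p5^5*⟨900800491499,-331104316368,-377211028971,281407796726,20327372947⟩) := (eqb_iff _ _).1 (by decide +kernel)
  rw [e] at h
  have c2 : p ∣ p2 → ∃ u : Q5ˣ, p = u * p2 := fun h => assoc_prime hp h (by
    rw [show (N5 p2).natAbs = 2 by decide +kernel]; norm_num)
  have c3 : p ∣ p3 → ∃ u : Q5ˣ, p = u * p3 := fun h => assoc_prime hp h (by
    rw [show (N5 p3).natAbs = 3 by decide +kernel]; norm_num)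
  have c5 : p ∣ p5 → ∃ u : Q5ˣ, p = u * p5 := fun h => assoc_prime hp h (by
    rw [show (N5 p5).natAbs = 5 by decide +kernel]; norm_num)
  rcases hp.dvd_or_dvd h with h | h
  · rcases hp.dvd_or_dvd h with h | h
    · rcases hp.dvd_or_dvd h with h | h
      · rcases hp.dvd_or_dvd h with h | h
        · rcases hp.dvd_or_dvd h with h | h
          · obtain ⟨u, hu⟩ := c2 h; exact ⟨u, Or.inl hu⟩
          · obtain ⟨u, hu⟩ := assoc_q hp h; exact ⟨u, Or.inr (Or.inl hu)⟩
        · obtain ⟨u, hu⟩ := assoc_q hp h; exact ⟨u, Or.inr (Or.inl hu)⟩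
      · exact (not_dvd_unit hp (by decide +kernel) h).elim
    · rcases hp.dvd_or_dvd h with h | h
      · obtain ⟨u, hu⟩ := c3 (hp.dvd_of_dvd_pow h); exact ⟨u, Or.inr (Or.inr (Or.inl hu))⟩
      · exact (not_dvd_unit hp (by decide +kernel) h).elim
  · rcases hp.dvd_or_dvd h with h | h
    · obtain ⟨u, hu⟩ := c5 (hp.dvd_of_dvd_pow h); exact ⟨u, Or.inr (Or.inr (Or.inr hu))⟩
    · exact (not_dvd_unit hp (by decide +kernel) h).elim

theorem decomp (s : Q5) : s ≠ 0 → (∀ p, Prime p → p ∣ s → p ∣ 30) →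
    ∃ (u : Q5ˣ) (i j k l : ℕ), s = u*p2^i*q2^j*p3^k*p5^l := by
  induction s using UniqueFactorizationMonoid.induction_on_prime with
  | h₁ => intro h; exact absurd rfl h
  | h₂ s hs => intro _ _; obtain ⟨u, rfl⟩ := hs; exact ⟨u, 0, 0, 0, 0, by ring⟩
  | h₃ s p hs hp ih =>
    intro _ h
    obtain ⟨u, i, j, k, l, e⟩ := ih hs (fun p' hp' hd => h p' hp' (hd.mul_left _))
    obtain ⟨v, hv⟩ := prime30 hp (h p hp (dvd_mul_right _ _))
    rcases hv with hv | hv | hv | hv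
    · exact ⟨v*u, i+1, j, k, l, by rw [e, hv]; push_cast; ring⟩
    · exact ⟨v*u, i, j+1, k, l, by rw [e, hv]; push_cast; ring⟩
    · exact ⟨v*u, i, j, k+1, l, by rw [e, hv]; push_cast; ring⟩
    · exact ⟨v*u, i, j, k, l+1, by rw [e, hv]; push_cast; ring⟩

theorem fifth_part (W : Q5) : ∀ x y c : Q5, W ≠ 0 → c ≠ 0 → x*y = c*W^5 → (∀ p, Prime p → p ∣ c → p ∣ 30) →
    (∀ p, Prime p → p ∣ x → p ∣ y → p ∣ 30) → ∃ s β, x = s*β^5 ∧ (∀ p, Prime p → p ∣ s → p ∣ 30) := by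
  induction W using UniqueFactorizationMonoid.induction_on_prime with
  | h₁ => intro x y c h; exact absurd rfl h
  | h₂ W hW =>
    intro x y c _ _ h hc _
    refine ⟨x, 1, by ring, fun p hp hd => hc p hp ?_⟩
    have h1 : p ∣ c*W^5 := h ▸ hd.mul_right y
    rcases hp.dvd_or_dvd h1 with h | h
    · exact h
    · exact absurd (isUnit_of_dvd_unit (hp.dvd_of_dvd_pow h) hW) hp.not_unit
  | h₃ W p hW hp ih =>
    intro x y c _ hc0 h hc hxy
    by_cases h30 : p ∣ 30
    · refine ih x y (c*p^5) hW (mul_ne_zero hc0 (pow_ne_zero _ hp.ne_zero)) (by rw [h]; ring) ?_ hxy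
      intro p' hp' hd
      rcases hp'.dvd_or_dvd hd with h | h
      · exact hc p' hp' h
      · exact (hp'.dvd_of_dvd_pow h).trans h30
    · have hd : p^5 ∣ x*y := ⟨c*W^5, by rw [h]; ring⟩
      by_cases hy : p ∣ y
      · have hx : ¬ p ∣ x := fun hx => h30 (hxy p hp hx hy)
        obtain ⟨y', rfl⟩ := hp.pow_dvd_of_dvd_mul_left _ hx hd
        refine ih x y' c hW hc0 ?_ hc (fun p' hp' h1 h2 => hxy p' hp' h1 (h2.mul_left _))
        apply mul_left_cancel₀ (pow_ne_zero 5 hp.ne_zero)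
        linear_combination h
      · obtain ⟨x', rfl⟩ := hp.pow_dvd_of_dvd_mul_right _ hy hd
        obtain ⟨s, β, e, hs⟩ := ih x' y c hW hc0 (by
          apply mul_left_cancel₀ (pow_ne_zero 5 hp.ne_zero)
          linear_combination h) hc (fun p' hp' h1 h2 => hxy p' hp' (h1.mul_left _) h2)
        exact ⟨s, p*β, by rw [e]; ring, hs⟩

theorem val5 (W M i k l : ℕ) (hW : W ≠ 0) (hM : M ≠ 0) (h : 2^2*3^2*5^2*W^5 = 2^i*3^k*5^l*M^5) :
    i % 5 = 2 ∧ k % 5 = 2 ∧ l % 5 = 2 := by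
  have hf := congrArg Nat.factorization h
  have q2 : Nat.Prime 2 := by norm_num
  have q3 : Nat.Prime 3 := by norm_num
  have q5 : Nat.Prime 5 := by norm_num
  rw [Nat.factorization_mul (by positivity) (by positivity), Nat.factorization_mul (by positivity) (by positivity),
    Nat.factorization_mul (by positivity) (by positivity), Nat.factorization_mul (by positivity) (by positivity),
    Nat.factorization_mul (by positivity) (by positivity), Nat.factorization_mul (by positivity) (by positivity)] at hf
  simp only [Nat.factorization_pow, q2.factorization, q3.factorization, q5.factorization] at hf
  have a2 := DFunLike.congr_fun hf 2
  have a3 := DFunLike.congr_fun hf 3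
  have a5 := DFunLike.congr_fun hf 5
  simp at a2 a3 a5
  omega
end Q5


namespace Q5
theorem xx_eq (a b : ℤ) : (a:Q5)*zq - 5*(b:Q5) = ⟨-2*a-5*b,-a,a,a,-a⟩ := by
  have : (5:Q5)*(b:Q5) = ((5*b:ℤ):Q5) := by push_cast; ring
  rw [this, int_mul, intCast_def, sub_def]
  ext <;> simp [zq] <;> ring

theorem N5_xx (a b : ℤ) : N5 ((a:Q5)*zq - 5*(b:Q5)) =
    -25*(2*a^5+25*a^4*b-100*a^3*b^2-250*a^2*b^3+250*a*b^4+125*b^5) := by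
  rw [xx_eq]
  simp only [N5, d5, d4, d3, d2, e0, e1, e2, e3, e4, mul_def, mul5]
  ring

theorem zq_rel : zq^5+10*zq^4-50*zq^3-100*zq^2+125*zq+50 = 0 := (eqb_iff _ _).1 (by decide +kernel)
theorem zq_der : (5*zq^4+40*zq^3-150*zq^2-200*zq+125)*⟨0,6,18,3,9⟩ = 30^3 := (eqb_iff _ _).1 (by decide +kernel)

def yy' (a b z : Q5) : Q5 := ((a*z)^4+(a*z)^3*(5*b)+(a*z)^2*(5*b)^2+(a*z)*(5*b)^3+(5*b)^4)
  +10*a*((a*z)^3+(a*z)^2*(5*b)+(a*z)*(5*b)^2+(5*b)^3)-50*a^2*((a*z)^2+(a*z)*(5*b)+(5*b)^2)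
  -100*a^3*(a*z+5*b)+125*a^4

theorem xy_eq (a b : ℤ) : ((a:Q5)*zq-5*b)*yy' a b zq =
   ((-25*(2*a^5+25*a^4*b-100*a^3*b^2-250*a^2*b^3+250*a*b^4+125*b^5):ℤ):Q5) := by
  push_cast
  unfold yy'
  linear_combination (a:Q5)^5*zq_rel

theorem common (a b : ℤ) (hab : IsCoprime a b) (p : Q5) (hp : Prime p) (hx : p ∣ (a:Q5)*zq-5*b)
    (hy : p ∣ yy' a b zq) : p ∣ 30 := by
  have h1 : p ∣ (a:Q5)^4*(5*zq^4+40*zq^3-150*zq^2-200*zq+125) := by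
    have h2 : ∃ k, (a:Q5)^4*(5*zq^4+40*zq^3-150*zq^2-200*zq+125) = yy' a b zq + ((a:Q5)*zq-5*b)*k := by
      set s : Q5 := (a:Q5)*zq
      set t : Q5 := 5*(b:Q5)
      refine ⟨(4*s^3+3*s^2*t+2*s*t^2+t^3)+10*a*(3*s^2+2*s*t+t^2)-50*a^2*(2*s+t)-100*a^3, ?_⟩
      unfold yy'
      simp only [s, t]
      ring
    obtain ⟨k, hk⟩ := h2
    rw [hk]
    exact dvd_add hy (hx.mul_right _)
  rcases hp.dvd_or_dvd h1 with h | h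
  · have ha := hp.dvd_of_dvd_pow h
    have h5b : p ∣ 5*(b:Q5) := by
      have := dvd_sub (ha.mul_right zq) hx
      simpa using this
    rcases hp.dvd_or_dvd h5b with h | h
    · exact h.trans ⟨6, by norm_num⟩
    · obtain ⟨u, v, huv⟩ := hab
      have : (1:Q5) = (u:Q5)*a + v*b := by
        have := congrArg (Int.cast : ℤ → Q5) huv
        push_cast at this; exact this.symm
      exact absurd (isUnit_of_dvd_one (this ▸ dvd_add (ha.mul_left _) (h.mul_left _))) hp.not_isUnit
  · have h2 : p ∣ (30:Q5)^3 := zq_der ▸ h.mul_right _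
    exact hp.dvd_of_dvd_pow h2

theorem u_expand (u : Q5ˣ) : ∃ f1 f2 f3 f4 : ℕ, ∃ η : Q5,
    (f1 < 5 ∧ f2 < 5 ∧ f3 < 5 ∧ f4 < 5) ∧ (u:Q5) = v1^f1*v2^f2*v3^f3*v4^f4 * η^5 := by
  obtain ⟨f1, f2, f3, f4, η, hf, h⟩ := units_L5.2 u
  refine ⟨f1, f2, f3, f4, η, hf, ?_⟩
  rw [h]
  push_cast
  rfl

theorem nq (a b : ℤ) (ha : a % 2 = 1) (hb : b % 2 = 0) (h : q2 ∣ (a:Q5)*zq-5*b) : False := by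
  obtain ⟨c, rfl⟩ := Int.dvd_of_emod_eq_zero hb
  have h2 : q2 ∣ 2 := ⟨p2*q2*⟨-955,351,400,-298,-22⟩, (eqb_iff _ _).1 (by decide +kernel)⟩
  have h3 : q2 ∣ (a:Q5)*zq := by
    have h4 : q2 ∣ 5*((2*c:ℤ):Q5) := by
      have : 5*((2*c:ℤ):Q5) = 2*(5*c) := by push_cast; ring
      rw [this]; exact h2.mul_right _
    have := dvd_add h h4
    simpa using this
  obtain ⟨r, hr⟩ := h3
  have h5 := congrArg N5 hr
  rw [N5_mul, N5_mul, N5_int, show N5 zq = -50 by decide +kernel, show N5 q2 = 4 by decide +kernel] at h5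
  have ho : Odd (a^5) := (Int.odd_iff.2 ha).pow
  have := Int.odd_iff.1 ho
  omega

theorem np (a b : ℤ) (hb : b % 2 = 1) (h : p2 ∣ (a:Q5)*zq-5*b) : False := by
  have h2 : p2 ∣ zq := ⟨⟨-29,11,11,-9,0⟩, (eqb_iff _ _).1 (by decide +kernel)⟩
  have h3 : p2 ∣ ((5*b:ℤ):Q5) := by
    have := dvd_sub (h2.mul_left (a:Q5)) h
    simpa using this
  obtain ⟨r, hr⟩ := h3
  have h5 := congrArg N5 hr
  rw [N5_mul, N5_int, show N5 p2 = -2 by decide +kernel] at h5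
  have ho : Odd ((5*b)^5) := (Int.odd_iff.2 (by omega : (5*b) % 2 = 1)).pow
  have := Int.odd_iff.1 ho
  omega

theorem coreA : CoreA := by
  intro a b w hab ha5 ha2 hw3 hw5 hw0 hF
  set x : Q5 := (a:Q5)*zq-5*b with hx
  have hNx : N5 x = -900*w^5 := by rw [hx, N5_xx, hF]; ring
  have hxy : x * yy' a b zq = (-900:Q5)*(w:Q5)^5 := by
    rw [hx, xy_eq, hF]; push_cast; ring
  have hinj : ∀ c : ℤ, (c:Q5) = 0 → c = 0 := by
    intro c hc
    have := congrArg Q5.a hc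
    rw [intCast_def] at this
    exact this
  have hw0' : (w:Q5) ≠ 0 := fun h => hw0 (hinj w h)
  have hc0 : (-900:Q5) ≠ 0 := by
    intro h
    have := hinj (-900) (by push_cast; exact h)
    omega
  obtain ⟨s, β, e, hs⟩ := fifth_part (w:Q5) x (yy' a b zq) (-900) hw0' hc0 hxy (by
    intro p hp hd
    have : p ∣ (30:Q5)^2 := by
      have e : (30:Q5)^2 = -(-900) := by norm_num
      rw [e]; exact (dvd_neg).2 hd
    exact hp.dvd_of_dvd_pow this) (fun p hp h1 h2 => common a b hab p hp h1 h2)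
  have hx0 : x ≠ 0 := by
    intro h
    rw [h, zero_mul] at hxy
    exact mul_ne_zero hc0 (pow_ne_zero 5 hw0') hxy.symm
  have hs0 : s ≠ 0 := by
    rintro rfl
    exact hx0 (by rw [e, zero_mul])
  obtain ⟨u, i, j, k, l, e2⟩ := decomp s hs0 hs
  obtain ⟨f1, f2, f3, f4, η, ⟨g1, g2, g3, g4⟩, hu⟩ := u_expand u
  have hv : (i+2*j) % 5 = 2 ∧ k % 5 = 2 ∧ l % 5 = 2 := by
    have h1 := congrArg (fun x => (N5 x).natAbs) e
    simp only [e2, hNx, N5_mul, N5_pow, Int.natAbs_mul, Int.natAbs_pow] at h1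
    rw [N5_unit u.isUnit, show (N5 p2).natAbs = 2 by decide +kernel, show (N5 q2).natAbs = 4 by decide +kernel,
      show (N5 p3).natAbs = 3 by decide +kernel, show (N5 p5).natAbs = 5 by decide +kernel] at h1
    have hM : (N5 β).natAbs ≠ 0 := by
      intro hM
      rw [hM] at h1
      simp at h1
      exact hw0 h1
    refine val5 w.natAbs (N5 β).natAbs _ _ _ (by simpa using hw0) hM ?_
    rw [pow_add, pow_mul]
    calc 2^2*3^2*5^2*w.natAbs^5 = 900 * w.natAbs^5 := by norm_num
      _ = _ := by
        rw [show (900:ℕ) = Int.natAbs (-900) by rfl, h1]; norm_num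
  obtain ⟨hij, hk, hl⟩ := hv
  obtain ⟨k', rfl⟩ : ∃ k', k = 5*k'+2 := ⟨k/5, by omega⟩
  obtain ⟨l', rfl⟩ : ∃ l', l = 5*l'+2 := ⟨l/5, by omega⟩
  rw [e2, hu] at e
  rcases Int.emod_two_eq_zero_or_one b with hb | hb
  · have hj : j = 0 := by
      rcases j with _ | j
      · rfl
      · exfalso
        refine nq a b ha2 hb ?_
        rw [← hx, e]
        exact ⟨v1^f1*v2^f2*v3^f3*v4^f4*η^5*p2^i*q2^j*p3^(5*k'+2)*p5^(5*l'+2)*β^5, by ring⟩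
    subst hj
    obtain ⟨i', rfl⟩ : ∃ i', i = 5*i'+2 := ⟨i/5, by omega⟩
    refine elim_final a b hab ha5 f1 f2 f3 f4 g1 g2 g3 g4 true (η*p2^i'*p3^k'*p5^l'*β) ?_
    rw [← hx, e]
    simp only [casep, cond_true]
    ring
  · have hi : i = 0 := by
      rcases i with _ | i
      · rfl
      · exfalso
        refine np a b hb ?_
        rw [← hx, e]
        exact ⟨v1^f1*v2^f2*v3^f3*v4^f4*η^5*p2^i*q2^j*p3^(5*k'+2)*p5^(5*l'+2)*β^5, by ring⟩
    subst hi
    obtain ⟨j', rfl⟩ : ∃ j', j = 5*j'+1 := ⟨j/5, by omega⟩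
    refine elim_final a b hab ha5 f1 f2 f3 f4 g1 g2 g3 g4 false (η*q2^j'*p3^k'*p5^l'*β) ?_
    rw [← hx, e]
    simp only [casep, cond_false]
    ring
end Q5

theorem no_rational_points_case7 (X Y : ℚ) : Y ^ 2 ≠ 3 ^ 3 * 5 * X ^ 5 - 2 ^ 4 * 5 :=
  main_of_core Q5.coreA X Y
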